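/- arXiv:0708.2684 — 3 statements merged into one kernel-verified Lean document; each statement's English description precedes it below -/
import Mathlib

section
/- Let n ≥ 2, let z₁, …, zₙ be distinct points of ℂ and σ₁, …, σₙ positive real numbers, and let w ∈ ℂ. Consider the set S = { z ∈ ℂ \ {z₁, …, zₙ} : w = z − Σⱼ σⱼ/(conj(z) − conj(zⱼ)) }. If S is finite, then S has at most 5n − 5 elements. -/
open Complex

namespace PML
open Set Filter Topology MeasureTheory ComplexConjugate

/-- The deflection sum. -/
noncomputable def rr {n : ℕ} (z : Fin n → ℂ) (σ : Fin n → ℝ) (x : ℂ) : ℂ :=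
  ∑ j, (σ j : ℂ) / (x - z j)

/-- Derivative of the deflection sum. -/
noncomputable def dr {n : ℕ} (z : Fin n → ℂ) (σ : Fin n → ℝ) (x : ℂ) : ℂ :=
  -∑ j, (σ j : ℂ) / (x - z j) ^ 2

/-- The lens map. -/
noncomputable def LL {n : ℕ} (z : Fin n → ℂ) (σ : Fin n → ℝ) (x : ℂ) : ℂ :=
  x - conj (rr z σ x)

/-- The images of a source. -/
def Sol {n : ℕ} (z : Fin n → ℂ) (σ : Fin n → ℝ) (w : ℂ) : Set ℂ :=
  {x | (∀ j, x ≠ z j) ∧ LL z σ x = w}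

lemma hasStrictDerivAt_rr {n : ℕ} (z : Fin n → ℂ) (σ : Fin n → ℝ) {x : ℂ} (hx : ∀ j, x ≠ z j) :
    HasStrictDerivAt (rr z σ) (dr z σ x) x := by
  unfold rr dr
  rw [← Finset.sum_neg_distrib]
  apply HasStrictDerivAt.fun_sum
  intro j _
  have h0 : HasStrictDerivAt (fun y : ℂ => y - z j) 1 x := (hasStrictDerivAt_id x).sub_const (z j)
  have h := (hasStrictDerivAt_const x (σ j : ℂ)).div h0 (sub_ne_zero.2 (hx j))
  have e : -((σ j : ℂ) / (x - z j) ^ 2) =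
      (0 * (x - z j) - (σ j : ℂ) * 1) / (x - z j) ^ 2 := by ring
  rw [e]
  exact h

lemma isOpen_nonpole {n : ℕ} (z : Fin n → ℂ) : IsOpen {x : ℂ | ∀ j, x ≠ z j} := by
  simp only [ofPred_forall]
  exact isOpen_iInter_of_finite fun j => isOpen_ne

lemma eventually_nonpole {n : ℕ} (z : Fin n → ℂ) {x : ℂ} (hx : ∀ j, x ≠ z j) :
    ∀ᶠ y in 𝓝 x, ∀ j, y ≠ z j := (isOpen_nonpole z).mem_nhds hx


open Polynomial in
lemma ratcov (A N : ℂ[X]) (hA0 : A ≠ 0)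
    (hlim : Tendsto (fun u => N.eval u / A.eval u) (cocompact ℂ) (𝓝 0))
    (hcop : ∀ u, ¬ (A.eval u = 0 ∧ N.eval u = 0)) :
    IsCoveringMapOn (fun u : {u : ℂ // N.eval u ≠ 0} => A.eval u.1 / N.eval u.1)
      {v | ∀ u, A.eval u = v * N.eval u → deriv (fun u => A.eval u / N.eval u) u ≠ 0} := by
  have hN : ∀ u v, A.eval u = v * N.eval u → N.eval u ≠ 0 := by
    intro u v h h0
    exact hcop u ⟨by rw [h, h0, mul_zero], h0⟩
  have hcont : Continuous (fun u : {u : ℂ // N.eval u ≠ 0} => A.eval u.1 / N.eval u.1) := by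
    apply Continuous.div
    · exact A.continuous.comp continuous_subtype_val
    · exact N.continuous.comp continuous_subtype_val
    · exact fun u => u.2
  have hnz : ∀ v, A - C v * N ≠ 0 := by
    intro v h
    have h1 : ∀ u, A.eval u = v * N.eval u := by
      intro u
      have := congrArg (eval u) (sub_eq_zero.1 h)
      simpa using this
    have hv : v ≠ 0 := by
      rintro rfl
      exact hA0 (by simpa using h)
    have h2 : (fun u => N.eval u / A.eval u) = fun _ => v⁻¹ := by
      funext u
      have := hN u v (h1 u)
      rw [h1 u]
      field_simp
    rw [h2] at hlim
    have := tendsto_nhds_unique hlim tendsto_const_nhds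
    exact hv (inv_eq_zero.1 this.symm)
  have hclosed : IsClosedMap (fun u : {u : ℂ // N.eval u ≠ 0} => A.eval u.1 / N.eval u.1) := by
    have hproper : IsProperMap (fun u : {u : ℂ // N.eval u ≠ 0} => A.eval u.1 / N.eval u.1) := by
      rw [isProperMap_iff_isCompact_preimage]
      refine ⟨hcont, fun K hK => ?_⟩
      rw [Subtype.isCompact_iff]
      have himg : (Subtype.val '' ((fun u : {u : ℂ // N.eval u ≠ 0} => A.eval u.1 / N.eval u.1) ⁻¹' K))
          = Prod.fst '' {q : ℂ × ℂ | q.2 ∈ K ∧ A.eval q.1 = q.2 * N.eval q.1} := by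
        ext u
        constructor
        · rintro ⟨u, hu, rfl⟩
          exact ⟨(u.1, _), ⟨hu, by field_simp [u.2]⟩, rfl⟩
        · rintro ⟨⟨u, v⟩, ⟨hv, h⟩, rfl⟩
          have h0 := hN u v h
          refine ⟨⟨u, h0⟩, ?_, rfl⟩
          simp only [mem_preimage]
          rwa [h, mul_div_cancel_right₀ _ h0]
      rw [himg]
      apply IsCompact.image _ continuous_fst
      obtain ⟨R, hR⟩ := hK.isBounded.exists_norm_le
      rw [Metric.isCompact_iff_isClosed_bounded]
      constructor
      · apply IsClosed.inter
        · exact hK.isClosed.preimage continuous_snd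
        · exact isClosed_eq (A.continuous.comp continuous_fst)
            (continuous_snd.mul (N.continuous.comp continuous_fst))
      · have hev : ∀ᶠ u in cocompact ℂ, ‖N.eval u / A.eval u‖ < (|R| + 1)⁻¹ := by
          have h1 : (0:ℝ) < (|R| + 1)⁻¹ := by positivity
          filter_upwards [hlim (Metric.ball_mem_nhds _ h1)] with u hu
          simpa using hu
        have hrev : {u | ¬ ‖N.eval u / A.eval u‖ < (|R| + 1)⁻¹} ∪ {u | A.eval u = 0} ⊆
          {u | ¬ ‖N.eval u / A.eval u‖ < (|R| + 1)⁻¹} ∪ (A.rootSet ℂ) := by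
          apply union_subset_union_right
          intro u hu
          rw [mem_rootSet]
          exact ⟨hA0, by simpa using hu⟩
        have hb1 : Bornology.IsBounded {u | ¬ ‖N.eval u / A.eval u‖ < (|R| + 1)⁻¹} := by
          rw [← Metric.cobounded_eq_cocompact] at hev
          rw [← Bornology.isCobounded_compl_iff]
          exact Filter.mem_of_superset hev (fun u hu => by simpa using hu)
        have hb2 := ((hb1.union (rootSet_finite A ℂ).isBounded).subset hrev)
        refine (hb2.prod hK.isBounded).subset ?_
        rintro ⟨u, v⟩ ⟨hv, h⟩
        refine ⟨?_, hv⟩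
        by_cases hA : A.eval u = 0
        · exact Or.inr hA
        · left
          simp only [mem_ofPred_eq, not_lt]
          simp only at h hv
          have hN0 := hN u v h
          have hv0 : v ≠ 0 := by
            rintro rfl
            simp at h
            exact hA h
          rw [h, div_mul_cancel_right₀ hN0, norm_inv]
          apply inv_anti₀ (norm_pos_iff.2 hv0)
          exact (hR v hv).trans ((le_abs_self R).trans (by linarith))
    exact hproper.isClosedMap
  refine hclosed.isCoveringMapOn_of_isLocalHomeomorphOn (fun v hv => ?_) ?_
  · have := (rootSet_finite (A - C v * N) ℂ).preimage
      (f := (Subtype.val : {u : ℂ // N.eval u ≠ 0} → ℂ)) Subtype.val_injective.injOn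
    apply this.subset
    intro u hu
    simp only [mem_preimage, mem_singleton_iff] at hu
    rw [mem_preimage, mem_rootSet]
    refine ⟨hnz v, ?_⟩
    rw [div_eq_iff u.2] at hu
    simp [hu]
  · have h1 : IsLocalHomeomorphOn (fun u => A.eval u / N.eval u)
        {u | N.eval u ≠ 0 ∧ deriv (fun u => A.eval u / N.eval u) u ≠ 0} := by
      intro u hu
      have h2 := (A.hasStrictDerivAt u).div (N.hasStrictDerivAt u) hu.1
      have h3 := hu.2
      change deriv ((fun u => A.eval u) / fun u => N.eval u) u ≠ 0 at h3
      rw [h2.hasDerivAt.deriv] at h3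
      exact ⟨_, (h2.hasStrictFDerivAt_equiv h3).mem_toOpenPartialHomeomorph_source, by simp; rfl⟩
    have h2 : IsOpenEmbedding (Subtype.val : {u : ℂ // N.eval u ≠ 0} → ℂ) :=
      (isOpen_ne_fun N.continuous continuous_const).isOpenEmbedding_subtypeVal
    refine h1.comp (h2.isLocalHomeomorph.isLocalHomeomorphOn) (fun u hu => ?_)
    refine ⟨u.2, hu u.1 ?_⟩
    field_simp [u.2]


open Polynomial in
lemma liftStep (A N : ℂ[X]) (hA0 : A ≠ 0)
    (hlim : Tendsto (fun u => N.eval u / A.eval u) (cocompact ℂ) (𝓝 0))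
    (hcop : ∀ u, ¬ (A.eval u = 0 ∧ N.eval u = 0)) (p : ℂ) (ε : ℝ) (hε : 0 < ε)
    (c : ℂ → ℂ) (hc : ContinuousOn c (Metric.ball p ε))
    (hcrit : ∀ x ∈ Metric.ball p ε, ∀ u, A.eval u = c x * N.eval u →
      deriv (fun u => A.eval u / N.eval u) u ≠ 0)
    (y0 : ℂ) (hy0 : A.eval y0 = c p * N.eval y0) :
    ∃ y : ℂ → ℂ, ContinuousOn y (Metric.ball p ε) ∧ y p = y0 ∧
      ∀ x ∈ Metric.ball p ε, A.eval (y x) = c x * N.eval (y x) := by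
  have hN : ∀ u v, A.eval u = v * N.eval u → N.eval u ≠ 0 := by
    intro u v h h0
    exact hcop u ⟨by rw [h, h0, mul_zero], h0⟩
  have cov := ratcov A N hA0 hlim hcop
  have hpD : p ∈ Metric.ball p ε := Metric.mem_ball_self hε
  have : ContractibleSpace (Metric.ball p ε) :=
    (convex_ball p ε).contractibleSpace ⟨p, hpD⟩
  have : LocallyPathConnectedSpace (Metric.ball p ε) :=
    (Metric.isOpen_ball).locallyPathConnectedSpace
  let f : C(Metric.ball p ε, ℂ) := ⟨fun x => c x.1, continuousOn_iff_continuous_domRestrict.1 hc⟩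
  obtain ⟨F, ⟨hF0, hF⟩, -⟩ := cov.existsUnique_continuousMap_lifts f (a₀ := ⟨p, hpD⟩)
    (e₀ := ⟨y0, hN _ _ hy0⟩)
    (by
      change A.eval y0 / N.eval y0 = c p
      rw [div_eq_iff (hN _ _ hy0), hy0])
    (fun x => hcrit x.1 x.2)
  classical
  refine ⟨fun x => if h : x ∈ Metric.ball p ε then (F ⟨x, h⟩).1 else 0, ?_, ?_, ?_⟩
  · rw [continuousOn_iff_continuous_domRestrict]
    have : (Metric.ball p ε).domRestrict
        (fun x => if h : x ∈ Metric.ball p ε then (F ⟨x, h⟩).1 else 0) = fun x => (F x).1 := by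
      funext x
      rw [Set.domRestrict_apply, dif_pos x.2]
    rw [this]
    exact continuous_subtype_val.comp F.continuous
  · simp only [dif_pos hpD, hF0]
  · intro x hx
    simp only [dif_pos hx]
    have := congrFun hF ⟨x, hx⟩
    change A.eval (F ⟨x, hx⟩).1 / N.eval (F ⟨x, hx⟩).1 = c x at this
    rwa [div_eq_iff (F ⟨x, hx⟩).2] at this

/-- Regularity of a continuous solution `y` of `F (y x) = c x`. -/
lemma lift_diff (F : ℂ → ℂ) (F' : ℂ) (y c : ℂ → ℂ) (x : ℂ)
    (hF : HasStrictDerivAt F F' (y x)) (hF' : F' ≠ 0) (hy : ContinuousAt y x)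
    (h : ∀ᶠ t in 𝓝 x, F (y t) = c t) :
    (DifferentiableAt ℂ c x → DifferentiableAt ℂ y x) ∧
    (DifferentiableAt ℂ (fun t => conj (c t)) x → DifferentiableAt ℂ (fun t => conj (y t)) x) := by
  set g := hF.localInverse F F' (y x) hF' with hg
  have hgd : DifferentiableAt ℂ g (F (y x)) :=
    (hF.to_localInverse hF').hasDerivAt.differentiableAt
  have hcx : F (y x) = c x := h.self_of_nhds
  have heq : y =ᶠ[𝓝 x] fun t => g (c t) := by
    have h1 := hy.eventually ((hF.hasStrictFDerivAt_equiv hF').eventually_left_inverse)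
    filter_upwards [h1, h] with t h1 h2
    rw [← h2]
    exact h1.symm
  constructor
  · intro hc
    refine DifferentiableAt.congr_of_eventuallyEq ?_ heq
    rw [hcx] at hgd
    exact hgd.comp x hc
  · intro hc
    have heq' : (fun t => conj (y t)) =ᶠ[𝓝 x] fun t => (conj ∘ g ∘ conj) (conj (c t)) := by
      filter_upwards [heq] with t ht
      simp [ht]
    refine DifferentiableAt.congr_of_eventuallyEq ?_ heq'
    rw [hcx] at hgd
    have h2 : DifferentiableAt ℂ (conj ∘ g ∘ conj) (conj (c x)) := by
      have := hgd.hasDerivAt.conj_conj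
      exact this.differentiableAt
    exact DifferentiableAt.comp (g := conj ∘ g ∘ conj) (f := fun t => conj (c t)) x h2 hc

open Polynomial in
lemma noCrit_false (A N : ℂ[X]) (hA0 : A ≠ 0)
    (hlim : Tendsto (fun u => N.eval u / A.eval u) (cocompact ℂ) (𝓝 0))
    (hcop : ∀ u, ¬ (A.eval u = 0 ∧ N.eval u = 0)) (p : ℂ) (ε : ℝ) (hε : 0 < ε)
    (hp : A.eval p = conj p * N.eval p)
    (B : Set ℂ) (R : ℝ) (hB : ∀ u ∈ B, ‖u‖ ≤ R) (hball : Metric.ball p ε ⊆ B)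
    (hinv : ∀ u v, A.eval u = conj v * N.eval u → v ∈ B → u ∈ B)
    (hcrit : ∀ u ∈ B, deriv (fun u => A.eval u / N.eval u) u ≠ 0)
    (hattr : ‖deriv (fun u => A.eval u / N.eval u) p‖ < 1) : False := by
  have hN : ∀ u v, A.eval u = v * N.eval u → N.eval u ≠ 0 := by
    intro u v h h0
    exact hcop u ⟨by rw [h, h0, mul_zero], h0⟩
  set F : ℂ → ℂ := fun u => A.eval u / N.eval u with hFdef
  have hstrict : ∀ u, N.eval u ≠ 0 → HasStrictDerivAt F (deriv F u) u := by
    intro u hu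
    have h2 := (A.hasStrictDerivAt u).div (N.hasStrictDerivAt u) hu
    have h3 : HasStrictDerivAt F _ u := h2
    rw [h3.hasDerivAt.deriv]
    exact h3
  have hpD : p ∈ Metric.ball p ε := Metric.mem_ball_self hε
  have hpB := hball hpD
  have hNp := hN p _ hp
  have hFp : F p = conj p := by simp only [hFdef]; rw [div_eq_iff hNp, hp]
  set G : ℂ → ℂ := fun u => conj (F u) with hG
  have hGp : G p = p := by simp [hG, hFp]
  have hFcont : ContinuousAt F p := (hstrict p hNp).hasDerivAt.continuousAt
  have hGcont : ContinuousAt G p := Complex.continuous_conj.continuousAt.comp hFcont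
  obtain ⟨μ, hμ1, hμ2⟩ := exists_between hattr
  have hμ0 : 0 ≤ μ := (norm_nonneg _).trans hμ1.le
  have hcontr : ∀ᶠ y in 𝓝 p, dist (G y) p ≤ μ * dist y p := by
    have h1 := (hstrict p hNp).hasDerivAt.isLittleO
    have h2 := h1.def (sub_pos.2 hμ1)
    filter_upwards [h2] with y hy
    have e1 : dist (G y) p = ‖F y - F p‖ := by
      rw [dist_eq_norm, hFp]
      rw [← Complex.norm_conj]
      simp [hG]
    rw [e1, dist_eq_norm]
    have := norm_sub_norm_le (F y - F p) ((y - p) • deriv F p)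
    rw [norm_smul] at this
    have hy' : ‖F y - F p - (y - p) • deriv F p‖ ≤ (μ - ‖deriv F p‖) * ‖y - p‖ := hy
    nlinarith
  have hGkp : ∀ k, G^[k] p = p := fun k => Function.iterate_fixed hGp k
  have hGk : ∀ k, ContinuousAt (G^[k]) p := by
    intro k
    induction k with
    | zero => exact continuousAt_id
    | succ k ih =>
      rw [Function.iterate_succ]
      exact ContinuousAt.comp (by rwa [hGp]) hGcont
  have hcontrk : ∀ k, ∀ᶠ y in 𝓝 p, dist (G^[k] y) p ≤ μ ^ k * dist y p := by
    intro k
    induction k with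
    | zero => simp
    | succ k ih =>
      have h1 : ∀ᶠ y in 𝓝 p, dist (G (G^[k] y)) p ≤ μ * dist (G^[k] y) p := by
        have h0 := hGk k
        rw [ContinuousAt, hGkp] at h0
        exact h0.eventually hcontr
      filter_upwards [ih, h1] with y h2 h3
      rw [Function.iterate_succ_apply', pow_succ]
      calc _ ≤ μ * dist (G^[k] y) p := h3
        _ ≤ μ * (μ ^ k * dist y p) := by gcongr
        _ = _ := by ring
  have hinj : ∀ᶠ q in 𝓝 (p, p), F q.1 = F q.2 → q.1 = q.2 := by
    have h1 := (hstrict p hNp).hasStrictFDerivAt_equiv (hcrit p hpB)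
    have h2 := h1.eventually_left_inverse
    have h3 := (continuous_fst.tendsto (p, p)).eventually h2
    have h4 := (continuous_snd.tendsto (p, p)).eventually h2
    filter_upwards [h3, h4] with q h3 h4 h5
    rw [← h3, ← h4, h5]
  have main : ∀ k, ∃ h : ℂ → ℂ, ContinuousOn h (Metric.ball p ε) ∧
      (DifferentiableOn ℂ h (Metric.ball p ε) ∨
        DifferentiableOn ℂ (fun x => conj (h x)) (Metric.ball p ε)) ∧
      h p = p ∧ MapsTo h (Metric.ball p ε) B ∧ ∀ᶠ y in 𝓝 p, h (G^[k] y) = y := by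
    intro k
    induction k with
    | zero =>
      exact ⟨id, continuousOn_id, Or.inl differentiableOn_id, rfl, fun x hx => hball hx,
        by simp⟩
    | succ k ih =>
      obtain ⟨h, hcont, hdiff, hp0, hmaps, hev⟩ := ih
      obtain ⟨y, hy, hy0, hyeq⟩ := liftStep A N hA0 hlim hcop p ε hε (fun x => conj (h x))
        (Complex.continuous_conj.comp_continuousOn hcont)
        (fun x hx u hu => hcrit u (hinv u _ hu (hmaps hx))) p (by simp only [hp0]; exact hp)
      have hyB : MapsTo y (Metric.ball p ε) B := fun x hx => hinv _ _ (hyeq x hx) (hmaps hx)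
      have hyF : ∀ x ∈ Metric.ball p ε, F (y x) = conj (h x) := by
        intro x hx
        simp only [hFdef]
        rw [div_eq_iff (hN _ _ (hyeq x hx)), hyeq x hx]
      have hD : ∀ x ∈ Metric.ball p ε, _ := fun x hx =>
        lift_diff F (deriv F (y x)) y (fun x => conj (h x)) x (hstrict _ (hN _ _ (hyeq x hx)))
          (hcrit _ (hyB hx)) (hy.continuousAt (Metric.isOpen_ball.mem_nhds hx))
          (by filter_upwards [Metric.isOpen_ball.mem_nhds hx] with t ht using hyF t ht)
      refine ⟨y, hy, ?_, hy0, hyB, ?_⟩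
      · rcases hdiff with hd | hd
        · right
          intro x hx
          refine ((hD x hx).2 ?_).differentiableWithinAt
          simpa using hd.differentiableAt (Metric.isOpen_ball.mem_nhds hx)
        · left
          intro x hx
          exact ((hD x hx).1 (hd.differentiableAt (Metric.isOpen_ball.mem_nhds hx))).differentiableWithinAt
      · have hyc : ContinuousAt y p := hy.continuousAt (Metric.isOpen_ball.mem_nhds hpD)
        have hc2 := hGk (k+1)
        rw [ContinuousAt, hGkp] at hc2
        have h1 : Tendsto (fun t => (y (G^[k+1] t), t)) (𝓝 p) (𝓝 (p, p)) := by
          rw [nhds_prod_eq]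
          refine Tendsto.prodMk ?_ tendsto_id
          have := hyc.tendsto
          rw [hy0] at this
          exact this.comp hc2
        have hGt : Tendsto G (𝓝 p) (𝓝 p) := by simpa [ContinuousAt, hGp] using hGcont
        filter_upwards [h1.eventually hinj, hc2 (Metric.isOpen_ball.mem_nhds hpD),
          hGt.eventually hev] with t h3 h4 h5
        apply h3
        rw [hyF _ h4, Function.iterate_succ_apply, h5]
        simp [hG]
  -- conclusion
  have hR0 : 0 ≤ R := (norm_nonneg _).trans (hB p hpB)
  obtain ⟨k, hk⟩ := exists_pow_lt_of_lt_one (show 0 < (2 * R / ε + 1)⁻¹ by positivity) hμ2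
  obtain ⟨h, hcont, hdiff, hp0, hmaps, hev⟩ := main k
  have hbd : ∀ x ∈ Metric.ball p ε, dist (h x) p ≤ 2 * R := by
    intro x hx
    rw [dist_eq_norm]
    have := norm_sub_le (h x) p
    linarith [hB _ (hmaps hx), hB p hpB]
  have hS : ∀ x ∈ Metric.ball p ε, dist (h x) p ≤ 2 * R / ε * dist x p := by
    intro x hx
    rcases hdiff with hd | hd
    · have := Complex.dist_le_div_mul_dist_of_mapsTo_ball (R₂ := 2 * R) hd
        (fun x hx => by rw [hp0]; exact hbd x hx) hx
      rwa [hp0] at this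
    · have := Complex.dist_le_div_mul_dist_of_mapsTo_ball (R₂ := 2 * R) hd
        (fun x hx => by
          simp only [hp0]
          rw [Metric.mem_closedBall, Complex.dist_conj_conj]
          exact hbd x hx) hx
      simp only [hp0] at this
      rwa [Complex.dist_conj_conj] at this
  have hGkt := hGk k
  rw [ContinuousAt, hGkp] at hGkt
  have hall := ((hev.and (hcontrk k)).and (hGkt (Metric.isOpen_ball.mem_nhds hpD)))
  obtain ⟨y, ⟨⟨h1, h2⟩, h3⟩, hne⟩ := ((hall.filter_mono nhdsWithin_le_nhds).and
    (self_mem_nhdsWithin : {p}ᶜ ∈ 𝓝[≠] p)).exists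
  have hd : 0 < dist y p := dist_pos.2 hne
  have h4 := hS _ h3
  rw [h1] at h4
  have h5 : 2 * R / ε * dist (G^[k] y) p ≤ 2 * R / ε * (μ ^ k * dist y p) := by gcongr
  have h6 : 0 ≤ 2 * R / ε := by positivity
  have h7 : 2 * R / ε * μ ^ k < 1 := by
    have : (2 * R / ε + 1) * μ ^ k < 1 := by
      have h8 : 0 < 2 * R / ε + 1 := by positivity
      calc _ < (2 * R / ε + 1) * (2 * R / ε + 1)⁻¹ := by gcongr
        _ = 1 := mul_inv_cancel₀ h8.ne'
    have : 0 ≤ μ ^ k := by positivity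
    nlinarith
  nlinarith


open scoped Classical in
/-- The dynamics on the sphere; `none` is the point at infinity. -/
noncomputable def ghat {n : ℕ} (z : Fin n → ℂ) (σ : Fin n → ℝ) (w : ℂ) : Option ℂ → Option ℂ
  | none => some w
  | some x => if ∃ j, x = z j then none else some (w + conj (rr z σ x))

/-- `x` is attracted to `ζ`. -/
def Attr {n : ℕ} (z : Fin n → ℂ) (σ : Fin n → ℝ) (w : ℂ) (x : Option ℂ) (ζ : ℂ) : Prop :=
  ∀ δ > 0, ∀ᶠ k in atTop, ∃ y ∈ Metric.ball ζ δ, (ghat z σ w)^[k] x = some y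

lemma attr_unique {n : ℕ} {z : Fin n → ℂ} {σ : Fin n → ℝ} {w : ℂ} {x : Option ℂ} {ζ ξ : ℂ}
    (h1 : Attr z σ w x ζ) (h2 : Attr z σ w x ξ) : ζ = ξ := by
  by_contra hne
  have hd : 0 < dist ζ ξ / 2 := by have := dist_pos.2 hne; positivity
  obtain ⟨k, ⟨y, hy, e⟩, ⟨y', hy', e'⟩⟩ := ((h1 _ hd).and (h2 _ hd)).exists
  rw [e] at e'
  obtain rfl := Option.some.inj e'
  have := dist_triangle_left ζ ξ y
  rw [Metric.mem_ball] at hy hy'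
  linarith

lemma attr_step {n : ℕ} {z : Fin n → ℂ} {σ : Fin n → ℝ} {w : ℂ} {x : Option ℂ} {ζ : ℂ} :
    Attr z σ w (ghat z σ w x) ζ ↔ Attr z σ w x ζ := by
  unfold Attr
  refine forall₂_congr fun δ hδ => ?_
  conv_rhs => rw [← Filter.map_add_atTop_eq_nat 1, Filter.eventually_map]
  simp only [Function.iterate_succ_apply]

lemma ghat_fixed {n : ℕ} {z : Fin n → ℂ} {σ : Fin n → ℝ} {w : ℂ} {x : ℂ} (hx : ∀ j, x ≠ z j) :
    ghat z σ w (some x) = some (w + conj (rr z σ x)) := by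
  have : ¬ ∃ j, x = z j := by push Not; exact hx
  simp [ghat, this]

lemma sol_fixed {n : ℕ} {z : Fin n → ℂ} {σ : Fin n → ℝ} {w : ℂ} {x : ℂ} (hx : x ∈ Sol z σ w) :
    w + conj (rr z σ x) = x := by
  have := hx.2
  unfold LL at this
  rw [← this]; ring

lemma attr_near {n : ℕ} {z : Fin n → ℂ} {σ : Fin n → ℝ} {w : ℂ} {ζ : ℂ} (hζ : ζ ∈ Sol z σ w)
    (hd : ‖dr z σ ζ‖ < 1) : ∃ δ > 0, ∀ y ∈ Metric.ball ζ δ, Attr z σ w (some y) ζ := by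
  obtain ⟨μ, hμ1, hμ2⟩ := exists_between hd
  have hμ0 : 0 ≤ μ := (norm_nonneg _).trans hμ1.le
  have hcontr : ∀ᶠ y in 𝓝 ζ, dist (w + conj (rr z σ y)) ζ ≤ μ * dist y ζ := by
    have h1 := (hasStrictDerivAt_rr z σ hζ.1).hasDerivAt.isLittleO
    have h2 := h1.def (sub_pos.2 hμ1)
    filter_upwards [h2] with y hy
    have e1 : dist (w + conj (rr z σ y)) ζ = ‖rr z σ y - rr z σ ζ‖ := by
      conv_lhs => rw [← sol_fixed hζ]
      rw [dist_add_left, Complex.dist_conj_conj, dist_eq_norm]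
    rw [e1, dist_eq_norm]
    have := norm_sub_norm_le (rr z σ y - rr z σ ζ) ((y - ζ) • dr z σ ζ)
    rw [norm_smul] at this
    have hy' : ‖rr z σ y - rr z σ ζ - (y - ζ) • dr z σ ζ‖ ≤ (μ - ‖dr z σ ζ‖) * ‖y - ζ‖ := hy
    nlinarith
  obtain ⟨δ, hδ, hball⟩ := Metric.eventually_nhds_iff_ball.1 (hcontr.and (eventually_nonpole z hζ.1))
  refine ⟨δ, hδ, fun y hy => ?_⟩
  have key : ∀ k, ∃ v, (ghat z σ w)^[k] (some y) = some v ∧ dist v ζ ≤ μ ^ k * dist y ζ := by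
    intro k
    induction k with
    | zero => exact ⟨y, rfl, by simp⟩
    | succ k ih =>
      obtain ⟨v, hv, hvd⟩ := ih
      have hvb : v ∈ Metric.ball ζ δ := by
        rw [Metric.mem_ball] at hy ⊢
        refine lt_of_le_of_lt (hvd.trans ?_) hy
        exact mul_le_of_le_one_left dist_nonneg (pow_le_one₀ hμ0 hμ2.le)
      obtain ⟨h1, h2⟩ := hball v hvb
      refine ⟨_, by rw [Function.iterate_succ_apply', hv, ghat_fixed h2], ?_⟩
      calc _ ≤ μ * dist v ζ := h1
        _ ≤ μ * (μ ^ k * dist y ζ) := by gcongr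
        _ = _ := by ring
  intro η hη
  have hlim : Tendsto (fun k : ℕ => μ ^ k * dist y ζ) atTop (𝓝 0) := by
    simpa using (tendsto_pow_atTop_nhds_zero_of_lt_one hμ0 hμ2).mul_const (dist y ζ)
  filter_upwards [hlim.eventually (gt_mem_nhds hη)] with k hk
  obtain ⟨v, hv, hvd⟩ := key k
  exact ⟨v, lt_of_le_of_lt hvd hk, hv⟩

lemma attr_self {n : ℕ} {z : Fin n → ℂ} {σ : Fin n → ℝ} {w : ℂ} {ζ : ℂ} (hζ : ζ ∈ Sol z σ w) :
    Attr z σ w (some ζ) ζ := by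
  intro δ hδ
  refine Eventually.of_forall fun k => ⟨ζ, Metric.mem_ball_self hδ, ?_⟩
  apply Function.iterate_fixed
  rw [ghat_fixed hζ.1, sol_fixed hζ]


open Polynomial in
lemma fatou_crit {n : ℕ} (z : Fin n → ℂ) (hz : Function.Injective z) (hn : 0 < n)
    (σ : Fin n → ℝ) (hσ : ∀ j, 0 < σ j) (w ζ ξ : ℂ) (hζ : ζ ∈ Sol z σ w) (hξ : ξ ∈ Sol z σ w)
    (hζd : ‖dr z σ ζ‖ < 1) (hξd : ‖dr z σ ξ‖ < 1) (hne : ζ ≠ ξ) :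
    ∃ c, (∀ j, c ≠ z j) ∧ dr z σ c = 0 ∧ Attr z σ w (some c) ζ := by
  classical
  by_contra hcon
  push Not at hcon
  have hzξ : ∀ j, z j - ξ ≠ 0 := fun j => sub_ne_zero.2 (hξ.1 j).symm
  set a : Fin n → ℂ := fun j => (z j - ξ)⁻¹ with ha
  have ha0 : ∀ j, a j ≠ 0 := fun j => inv_ne_zero (hzξ j)
  have hza : ∀ j, z j = ξ + (a j)⁻¹ := fun j => by simp [ha]
  have hainj : Function.Injective a := by
    intro i j h
    apply hz
    rw [hza i, hza j, h]
  set τ : Fin n → ℂ := fun j => (σ j : ℂ) * a j ^ 2 with hτ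
  have hτ0 : ∀ j, τ j ≠ 0 := fun j =>
    mul_ne_zero (by exact_mod_cast (hσ j).ne') (pow_ne_zero _ (ha0 j))
  set s : ℂ → ℂ := fun u => ∑ j, τ j / (a j - u) with hs
  set ds : ℂ → ℂ := fun u => ∑ j, τ j / (a j - u) ^ 2 with hds
  set Aj : Fin n → ℂ[X] := fun j => ∏ i ∈ Finset.univ.erase j, (C (a i) - X) with hAj
  set A : ℂ[X] := ∏ j, (C (a j) - X) with hA
  set N : ℂ[X] := ∑ j, C (τ j) * Aj j with hN
  have hAf : ∀ j, A = (C (a j) - X) * Aj j := fun j =>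
    (Finset.mul_prod_erase Finset.univ (fun i => C (a i) - X) (Finset.mem_univ j)).symm
  have hAe : ∀ u, A.eval u = ∏ j, (a j - u) := fun u => by simp [hA, eval_prod]
  have hAje : ∀ j u, (Aj j).eval u = ∏ i ∈ Finset.univ.erase j, (a i - u) := fun j u => by
    simp [hAj, eval_prod]
  have hNe : ∀ u, N.eval u = ∑ j, τ j * (Aj j).eval u := fun u => by simp [hN, eval_finsetSum]
  have hAne : ∀ u, (∀ j, u ≠ a j) → A.eval u ≠ 0 := by
    intro u hu
    rw [hAe]
    exact Finset.prod_ne_zero_iff.2 fun j _ => sub_ne_zero.2 (hu j).symm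
  have hNs : ∀ u, (∀ j, u ≠ a j) → N.eval u = A.eval u * s u := by
    intro u hu
    rw [hNe, hs, Finset.mul_sum]
    refine Finset.sum_congr rfl fun j _ => ?_
    rw [hAf j]
    have := sub_ne_zero.2 (hu j).symm
    simp only [eval_mul, eval_sub, eval_C, eval_X]
    field_simp
  have hAja : ∀ j, (Aj j).eval (a j) ≠ 0 := by
    intro j
    rw [hAje]
    refine Finset.prod_ne_zero_iff.2 fun i hi => sub_ne_zero.2 fun h => ?_
    exact (Finset.mem_erase.1 hi).1 (hainj h)
  have hNa : ∀ j, N.eval (a j) ≠ 0 := by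
    intro j
    rw [hNe, Finset.sum_eq_single j]
    · exact mul_ne_zero (hτ0 j) (hAja j)
    · intro i _ hij
      rw [hAje, Finset.prod_eq_zero (i := j)]
      · simp
      · exact Finset.mem_erase.2 ⟨hij.symm, Finset.mem_univ _⟩
      · simp
    · simp
  have hA0 : A ≠ 0 := by
    refine Finset.prod_ne_zero_iff.2 fun j _ => ?_
    intro h
    have := congrArg (fun q => q.coeff 1) h
    simp at this
  have hAzero : ∀ u, A.eval u = 0 → ∃ j, u = a j := by
    intro u hu
    by_contra h
    push Not at h
    exact hAne u h hu
  have hcop : ∀ u, ¬ (A.eval u = 0 ∧ N.eval u = 0) := by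
    rintro u ⟨h1, h2⟩
    obtain ⟨j, rfl⟩ := hAzero u h1
    exact hNa j h2
  have hopen : ∀ u, (∀ j, u ≠ a j) → ∀ᶠ v in 𝓝 u, ∀ j, v ≠ a j := fun u hu =>
    eventually_nonpole a hu
  have hlim : Tendsto (fun u => N.eval u / A.eval u) (cocompact ℂ) (𝓝 0) := by
    have h1 : Tendsto s (cocompact ℂ) (𝓝 0) := by
      have : (0:ℂ) = ∑ j : Fin n, 0 := by simp
      rw [this]
      refine tendsto_finsetSum _ fun j _ => ?_
      rw [← Metric.cobounded_eq_cocompact]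
      have h2 : Tendsto (fun u => a j - u) (Bornology.cobounded ℂ) (Bornology.cobounded ℂ) := by
        exact tendsto_const_sub_cobounded (a j)
      have h3 := (tendsto_inv₀_cobounded.comp h2).const_mul (τ j)
      simpa [div_eq_mul_inv] using h3
    refine h1.congr' ?_
    have h2 : ∀ᶠ u in cocompact ℂ, ∀ j, u ≠ a j := by
      rw [eventually_all]
      intro j
      exact (isCompact_singleton.compl_mem_cocompact : ({a j} : Set ℂ)ᶜ ∈ cocompact ℂ)
    filter_upwards [h2] with u hu
    rw [hNs u hu]
    exact (mul_div_cancel_left₀ _ (hAne u hu)).symm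
  have hsd : ∀ u, (∀ j, u ≠ a j) → HasDerivAt s (ds u) u := by
    intro u hu
    apply HasDerivAt.fun_sum
    intro j _
    have h0 : HasDerivAt (fun y : ℂ => a j - y) (-1) u := (hasDerivAt_id u).const_sub (a j)
    have h := (hasDerivAt_const u (τ j)).div h0 (sub_ne_zero.2 (hu j).symm)
    have e : τ j / (a j - u) ^ 2 = (0 * (a j - u) - τ j * -1) / (a j - u) ^ 2 := by ring
    rw [e]
    exact h
  have hFd : ∀ u, (∀ j, u ≠ a j) → s u ≠ 0 →
      deriv (fun u => A.eval u / N.eval u) u = - ds u / (s u) ^ 2 := by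
    intro u hu hsu
    have h1 := (hsd u hu).inv hsu
    have h2 : (fun u => A.eval u / N.eval u) =ᶠ[𝓝 u] s⁻¹ := by
      filter_upwards [hopen u hu] with v hv
      rw [hNs v hv, Pi.inv_apply, div_mul_cancel_left₀ (hAne v hv)]
    rw [h2.deriv_eq, h1.deriv]
  have hFa : ∀ j, deriv (fun u => A.eval u / N.eval u) (a j) ≠ 0 := by
    intro j
    have h1 := ((C (a j) - X).hasDerivAt (a j)).mul (((Aj j).hasDerivAt (a j)).div
      (N.hasDerivAt (a j)) (hNa j))
    have h2 : (fun u => A.eval u / N.eval u) = (fun u => (C (a j) - X).eval u) *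
        ((fun u => (Aj j).eval u) / (fun u => N.eval u)) := by
      funext u
      simp only [Pi.mul_apply, Pi.div_apply]
      conv_lhs => rw [hAf j]
      rw [eval_mul, mul_div_assoc]
    rw [h2, h1.deriv]
    simp [hAja, hNa]
  -- the coordinate change
  set Mi : ℂ → Option ℂ := fun u => if u = 0 then none else some (ξ + u⁻¹) with hMi
  have hxnp : ∀ u, u ≠ 0 → (∀ j, u ≠ a j) → ∀ j, ξ + u⁻¹ ≠ z j := by
    intro u hu hu2 j h
    rw [hza j] at h
    exact hu2 j (inv_injective (add_left_cancel h))
  have hcw : conj w + rr z σ ξ = conj ξ := by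
    have := congrArg conj (sol_fixed hξ)
    simpa using this
  have hsu : ∀ u, u ≠ 0 → (∀ j, u ≠ a j) → s u = rr z σ (ξ + u⁻¹) - rr z σ ξ := by
    intro u hu hu2
    simp only [hs, rr, ← Finset.sum_sub_distrib]
    refine Finset.sum_congr rfl fun j _ => ?_
    have h1 := sub_ne_zero.2 (hu2 j).symm
    have h2 := ha0 j
    have h4 : ξ + u⁻¹ - z j = (a j - u) / (u * a j) := by
      rw [hza j]; field_simp; ring
    have h5 : ξ - z j = - (a j)⁻¹ := by rw [hza j]; ring
    rw [h4, h5]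
    simp only [hτ]
    field_simp
    ring
  have hdsu : ∀ u, u ≠ 0 → (∀ j, u ≠ a j) → ds u = - (u⁻¹) ^ 2 * dr z σ (ξ + u⁻¹) := by
    intro u hu hu2
    simp only [hds, dr, neg_mul_neg, Finset.mul_sum]
    refine Finset.sum_congr rfl fun j _ => ?_
    have h1 := sub_ne_zero.2 (hu2 j).symm
    have h2 := ha0 j
    have h4 : ξ + u⁻¹ - z j = (a j - u) / (u * a j) := by
      rw [hza j]; field_simp; ring
    rw [h4]
    simp only [hτ]
    field_simp
  have hs0 : s 0 = - rr z σ ξ := by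
    simp only [hs, rr, ← Finset.sum_neg_distrib]
    refine Finset.sum_congr rfl fun j _ => ?_
    have h2 := ha0 j
    have h5 : ξ - z j = - (a j)⁻¹ := by rw [hza j]; ring
    rw [h5]
    simp only [hτ]
    field_simp
    ring
  have hconj : ∀ u v, A.eval u = conj v * N.eval u → ghat z σ w (Mi u) = Mi v := by
    intro u v h
    by_cases hu : ∃ j, u = a j
    · obtain ⟨j, rfl⟩ := hu
      have hv : v = 0 := by
        have h0 : A.eval (a j) = 0 := by rw [hAf j]; simp
        rw [h0] at h
        have := (mul_eq_zero.1 h.symm).resolve_right (hNa j)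
        simpa using this
      have h2 : Mi (a j) = some (z j) := by
        simp only [hMi, if_neg (ha0 j), ← hza j]
      rw [h2]
      simp [hv, hMi, ghat]
    · push Not at hu
      have h1 : conj v * s u = 1 := by
        rw [hNs u hu] at h
        apply mul_left_cancel₀ (hAne u hu)
        linear_combination -h
      have hv : v ≠ 0 := by
        rintro rfl
        simp at h1
      have hvi : v⁻¹ = conj (s u) := by
        have := congrArg conj h1
        simp only [map_mul, Complex.conj_conj, map_one] at this
        exact inv_eq_of_mul_eq_one_right this
      have hMv : Mi v = some (ξ + conj (s u)) := by
        simp only [hMi, if_neg hv, hvi]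
      rw [hMv]
      by_cases hu0 : u = 0
      · subst hu0
        have : Mi 0 = none := by simp [hMi]
        rw [this, hs0]
        simp only [ghat]
        congr 1
        rw [map_neg]
        linear_combination sol_fixed hξ
      · have : Mi u = some (ξ + u⁻¹) := by simp [hMi, hu0]
        rw [this, ghat_fixed (hxnp u hu0 hu), hsu u hu0 hu]
        congr 1
        rw [map_sub]
        linear_combination sol_fixed hξ
  set B : Set ℂ := {u | Attr z σ w (Mi u) ζ} with hB
  obtain ⟨δ, hδ, hδb⟩ := attr_near hξ hξd
  obtain ⟨η, hη, hηb⟩ := attr_near hζ hζd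
  have hd0 : ζ - ξ ≠ 0 := sub_ne_zero.2 hne
  set p : ℂ := (ζ - ξ)⁻¹ with hp
  have hp0 : p ≠ 0 := inv_ne_zero hd0
  have hpζ : ξ + p⁻¹ = ζ := by simp [hp]
  have hpa : ∀ j, p ≠ a j := by
    intro j h
    apply hζ.1 j
    rw [← hpζ, h, ← hza]
  have hsp : s p = conj (ζ - ξ) := by
    rw [hsu p hp0 hpa, hpζ, map_sub]
    have h1 := congrArg conj (sol_fixed hζ)
    simp only [map_add, Complex.conj_conj] at h1
    linear_combination h1 - hcw
  have hsp0 : s p ≠ 0 := by rw [hsp]; exact (_root_.map_ne_zero _).2 hd0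
  -- a small ball around p
  have hcontMi : ContinuousAt (fun u : ℂ => ξ + u⁻¹) p := by
    exact continuousAt_const.add (continuousAt_inv₀ hp0)
  have hevp : ∀ᶠ u in 𝓝 p, u ∈ B := by
    have h1 : ∀ᶠ u in 𝓝 p, ξ + u⁻¹ ∈ Metric.ball ζ η := by
      apply hcontMi.eventually_mem
      rw [hpζ]
      exact Metric.ball_mem_nhds _ hη
    filter_upwards [h1, isOpen_ne.mem_nhds hp0] with u h1 h2
    have : Mi u = some (ξ + u⁻¹) := by
      simp only [hMi, if_neg h2]
    simp only [hB, mem_ofPred_eq, this]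
    exact hηb _ h1
  obtain ⟨ε, hε, hεb⟩ := Metric.eventually_nhds_iff_ball.1 hevp
  refine noCrit_false A N hA0 hlim hcop p ε hε ?_ B δ⁻¹ ?_ hεb ?_ ?_ ?_
  · rw [hNs p hpa, hsp]
    have : conj p = (conj (ζ - ξ))⁻¹ := by rw [hp, map_inv₀]
    rw [this]
    have h3 : conj (ζ - ξ) ≠ 0 := by rw [← hsp]; exact hsp0
    field_simp
  · intro u hu
    by_contra hlt
    push Not at hlt
    have hu0 : u ≠ 0 := by
      rintro rfl
      simp at hlt
      linarith
    have hMu : Mi u = some (ξ + u⁻¹) := by simp only [hMi, if_neg hu0]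
    have h1 : Attr z σ w (Mi u) ξ := by
      rw [hMu]
      apply hδb
      rw [Metric.mem_ball, dist_eq_norm, add_sub_cancel_left, norm_inv]
      exact inv_lt_of_inv_lt₀ hδ hlt
    exact hne (attr_unique hu h1)
  · intro u v h hv
    change Attr z σ w (Mi u) ζ
    rw [← attr_step, hconj u v h]
    exact hv
  · intro u hu
    by_cases hua : ∃ j, u = a j
    · obtain ⟨j, rfl⟩ := hua
      exact hFa j
    push Not at hua
    by_cases hu0 : u = 0
    · subst hu0
      have hds0 : ds 0 ≠ 0 := by
        have : ds 0 = ((∑ j, σ j : ℝ) : ℂ) := by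
          simp only [hds, hτ]
          push_cast
          refine Finset.sum_congr rfl fun j _ => ?_
          have h2 := ha0 j
          field_simp
          ring
        rw [this]
        have h3 : 0 < ∑ j, σ j := Finset.sum_pos (fun j _ => hσ j) ⟨⟨0, hn⟩, Finset.mem_univ _⟩
        exact_mod_cast h3.ne'
      have hs00 : s 0 ≠ 0 := by
        intro h0
        have h1 : Mi 0 = none := by simp [hMi]
        have h2 : Attr z σ w (some w) ζ := by
          have : Attr z σ w (Mi 0) ζ := hu
          rw [h1, ← attr_step] at this
          exact this
        have h3 : w = ξ := by
          have := sol_fixed hξ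
          have h4 : rr z σ ξ = 0 := by rw [hs0] at h0; simpa using h0
          rwa [h4, map_zero, add_zero] at this
        have e : (some w : Option ℂ) = some ξ := congrArg some h3
        have h5 : Attr z σ w (some ξ) ζ := Eq.subst (motive := fun o => Attr z σ w o ζ) e h2
        exact hne (attr_unique h5 (attr_self hξ))
      rw [hFd 0 hua hs00]
      exact div_ne_zero (neg_ne_zero.2 hds0) (pow_ne_zero _ hs00)
    · have hMu : Mi u = some (ξ + u⁻¹) := by simp only [hMi, if_neg hu0]
      have huA : Attr z σ w (some (ξ + u⁻¹)) ζ := by rw [← hMu]; exact hu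
      have hsu0 : s u ≠ 0 := by
        intro h0
        rw [hsu u hu0 hua, sub_eq_zero] at h0
        rw [← attr_step, ghat_fixed (hxnp u hu0 hua), h0, sol_fixed hξ] at huA
        exact hne (attr_unique huA (attr_self hξ))
      rw [hFd u hua hsu0]
      refine div_ne_zero (neg_ne_zero.2 ?_) (pow_ne_zero _ hsu0)
      rw [hdsu u hu0 hua]
      refine mul_ne_zero (neg_ne_zero.2 (pow_ne_zero _ (inv_ne_zero hu0))) ?_
      intro h0
      exact hcon _ (hxnp u hu0 hua) h0 huA
  · rw [hFd p hpa hsp0, hdsu p hp0 hpa, hpζ, hsp]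
    have h1 : ‖ζ - ξ‖ ≠ 0 := norm_ne_zero_iff.2 hd0
    simp only [hp, inv_inv, norm_div, norm_neg, norm_mul, norm_pow, Complex.norm_conj]
    rw [mul_div_cancel_left₀ _ (pow_ne_zero _ h1)]
    exact hζd

open Polynomial in
lemma attracting_card {n : ℕ} (hn : 2 ≤ n) (z : Fin n → ℂ) (hz : Function.Injective z)
    (σ : Fin n → ℝ) (hσ : ∀ j, 0 < σ j) (w : ℂ) (T : Finset ℂ)
    (hT : ∀ x ∈ T, x ∈ Sol z σ w ∧ ‖dr z σ x‖ < 1) : T.card ≤ 2 * n - 2 := by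
  classical
  by_cases h1 : T.card ≤ 1
  · omega
  push Not at h1
  have hc : ∀ x ∈ T, ∃ c, (∀ j, c ≠ z j) ∧ dr z σ c = 0 ∧ Attr z σ w (some c) x := by
    intro x hx
    obtain ⟨y, hy, hyx⟩ := Finset.exists_mem_ne h1 x
    exact fatou_crit z hz (by omega) σ hσ w x y (hT x hx).1 (hT y hy).1 (hT x hx).2 (hT y hy).2
      hyx.symm
  choose! c hc1 hc2 hc3 using hc
  set P : ℂ[X] := ∑ j, C (σ j : ℂ) * ∏ i ∈ Finset.univ.erase j, (X - C (z i)) ^ 2 with hP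
  have hmon : ∀ j, (∏ i ∈ Finset.univ.erase j, (X - C (z i)) ^ 2 : ℂ[X]).Monic := fun j =>
    monic_prod_of_monic _ _ fun i _ => (monic_X_sub_C _).pow 2
  have hdeg : ∀ j, (∏ i ∈ Finset.univ.erase j, (X - C (z i)) ^ 2 : ℂ[X]).natDegree = 2 * n - 2 := by
    intro j
    rw [natDegree_prod_of_monic _ _ fun i _ => (monic_X_sub_C _).pow 2]
    simp [Finset.card_erase_of_mem]
    omega
  have hcoeff : P.coeff (2 * n - 2) = ((∑ j, σ j : ℝ) : ℂ) := by
    rw [hP, finsetSum_coeff]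
    push_cast
    refine Finset.sum_congr rfl fun j _ => ?_
    rw [coeff_C_mul]
    have := (hmon j).coeff_natDegree
    rw [hdeg j] at this
    rw [this, mul_one]
  have hP0 : P ≠ 0 := by
    intro h
    rw [h, coeff_zero] at hcoeff
    have h3 : 0 < ∑ j, σ j :=
      Finset.sum_pos (fun j _ => hσ j) ⟨⟨0, by omega⟩, Finset.mem_univ _⟩
    exact h3.ne (by exact_mod_cast hcoeff)
  have hPdeg : P.natDegree ≤ 2 * n - 2 := by
    refine natDegree_sum_le_of_forall_le _ _ fun j _ => ?_
    refine (natDegree_C_mul_le _ _).trans (hdeg j).le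
  have hroot : ∀ x, (∀ j, x ≠ z j) → dr z σ x = 0 → P.eval x = 0 := by
    intro x hx h0
    have : P.eval x = - (∏ i, (x - z i) ^ 2) * dr z σ x := by
      simp only [hP, dr, eval_finsetSum, eval_mul, eval_C, eval_prod, eval_pow, eval_sub, eval_X,
        neg_mul_neg, Finset.mul_sum]
      refine Finset.sum_congr rfl fun j _ => ?_
      rw [← Finset.mul_prod_erase Finset.univ (fun i => (x - z i) ^ 2) (Finset.mem_univ j)]
      have := sub_ne_zero.2 (hx j)
      field_simp
    rw [this, h0, mul_zero]
  calc T.card ≤ P.roots.toFinset.card := by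
        apply Finset.card_le_card_of_injOn c
        · intro x hx
          have hx' : x ∈ T := hx
          simp only [Finset.mem_coe, Multiset.mem_toFinset]
          rw [mem_roots hP0]
          exact hroot _ (hc1 x hx') (hc2 x hx')
        · intro x hx y hy hxy
          have h3 := hc3 x hx
          rw [hxy] at h3
          exact attr_unique h3 (hc3 y hy)
    _ ≤ P.roots.card := Multiset.toFinset_card_le _
    _ ≤ P.natDegree := card_roots' P
    _ ≤ _ := hPdeg


/-- The real derivative of the lens map. -/
noncomputable def DL (a : ℂ) : ℂ →L[ℝ] ℂ :=
  ContinuousLinearMap.id ℝ ℂ -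
    (Complex.conjCLE : ℂ →L[ℝ] ℂ).comp (ContinuousLinearMap.mul ℝ ℂ a)

lemma DL_apply (a e : ℂ) : DL a e = e - conj (a * e) := by
  simp [DL]

lemma DL_det (a : ℂ) : (DL a).det = 1 - ‖a‖ ^ 2 := by
  rw [ContinuousLinearMap.det, ← LinearMap.det_toMatrix Complex.basisOneI, Matrix.det_fin_two]
  simp [LinearMap.toMatrix_apply, DL_apply]
  rw [← Complex.normSq_eq_norm_sq, Complex.normSq_apply]
  ring

lemma hasStrictFDerivAt_LL {n : ℕ} (z : Fin n → ℂ) (σ : Fin n → ℝ) {x : ℂ} (hx : ∀ j, x ≠ z j) :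
    HasStrictFDerivAt (LL z σ) (DL (dr z σ x)) x := by
  have h1 : HasStrictFDerivAt (rr z σ) (ContinuousLinearMap.mul ℝ ℂ (dr z σ x)) x := by
    have := (hasStrictDerivAt_rr z σ hx).hasStrictFDerivAt.restrictScalars ℝ
    have e : (ContinuousLinearMap.mul ℝ ℂ (dr z σ x)) = ContinuousLinearMap.restrictScalars ℝ
        (ContinuousLinearMap.toSpanSingleton ℂ (dr z σ x)) := by
      ext y; simp [mul_comm]
    rw [e]
    exact this
  have h2 := (hasStrictFDerivAt_id (𝕜 := ℝ) x).sub
    ((Complex.conjCLE : ℂ →L[ℝ] ℂ).hasStrictFDerivAt.comp x h1)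
  exact h2

lemma contDiffAt_rr {n : ℕ} (z : Fin n → ℂ) (σ : Fin n → ℝ) {x : ℂ} (hx : ∀ j, x ≠ z j) :
    ContDiffAt ℂ 1 (rr z σ) x := by
  unfold rr
  apply ContDiffAt.sum
  intro j _
  exact contDiffAt_const.div (contDiffAt_id.sub contDiffAt_const) (sub_ne_zero.2 (hx j))

lemma contDiffAt_dr {n : ℕ} (z : Fin n → ℂ) (σ : Fin n → ℝ) {x : ℂ} (hx : ∀ j, x ≠ z j) :
    ContDiffAt ℂ 1 (dr z σ) x := by
  unfold dr
  apply ContDiffAt.neg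
  apply ContDiffAt.sum
  intro j _
  exact contDiffAt_const.div ((contDiffAt_id.sub contDiffAt_const).pow 2)
    (pow_ne_zero _ (sub_ne_zero.2 (hx j)))

lemma contDiffAt_LL {n : ℕ} (z : Fin n → ℂ) (σ : Fin n → ℝ) {x : ℂ} (hx : ∀ j, x ≠ z j) :
    ContDiffAt ℝ 1 (LL z σ) x := by
  have h := (contDiffAt_rr z σ hx).restrict_scalars ℝ
  exact contDiffAt_id.sub ((Complex.conjCLE : ℂ →L[ℝ] ℂ).contDiff.contDiffAt.comp x h)

lemma tendsto_term_inf (c a : ℂ) : Tendsto (fun x : ℂ => c / (x - a)) (cocompact ℂ) (𝓝 0) := by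
  have h1 : Tendsto (fun x : ℂ => x - a) (cocompact ℂ) (cocompact ℂ) :=
    (Homeomorph.subRight a).isClosedEmbedding.tendsto_cocompact
  have h2 := (tendsto_inv₀_cobounded (α := ℂ))
  rw [Metric.cobounded_eq_cocompact] at h2
  have h3 := (h2.comp h1).const_mul c
  simpa [div_eq_mul_inv, Function.comp_def] using h3

lemma tendsto_rr_inf {n : ℕ} (z : Fin n → ℂ) (σ : Fin n → ℝ) :
    Tendsto (rr z σ) (cocompact ℂ) (𝓝 0) := by
  have := tendsto_finsetSum (Finset.univ : Finset (Fin n))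
    (fun j _ => tendsto_term_inf (σ j) (z j))
  simp only [Finset.sum_const_zero] at this
  exact this

lemma tendsto_dr_inf {n : ℕ} (z : Fin n → ℂ) (σ : Fin n → ℝ) :
    Tendsto (dr z σ) (cocompact ℂ) (𝓝 0) := by
  have := (tendsto_finsetSum (Finset.univ : Finset (Fin n))
    (fun j _ => (tendsto_term_inf (σ j) (z j)).mul (tendsto_term_inf 1 (z j)))).neg
  simp only [mul_zero, Finset.sum_const_zero, neg_zero] at this
  refine this.congr fun x => ?_
  simp only [dr]
  congr 1
  refine Finset.sum_congr rfl fun j _ => ?_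
  rw [div_mul_div_comm, mul_one, sq]

lemma tendsto_LL_inf {n : ℕ} (z : Fin n → ℂ) (σ : Fin n → ℝ) :
    Tendsto (fun x => ‖LL z σ x‖) (cocompact ℂ) atTop := by
  have h1 := (tendsto_rr_inf z σ).norm.neg
  have h2 : Tendsto (fun x : ℂ => ‖x‖ + -‖rr z σ x‖) (cocompact ℂ) atTop :=
    (tendsto_norm_cocompact_atTop).atTop_add h1
  refine tendsto_atTop_mono (fun x => ?_) h2
  unfold LL
  have := norm_sub_norm_le x (conj (rr z σ x))
  rw [RCLike.norm_conj] at this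
  linarith

lemma tendsto_LL_pole {n : ℕ} (z : Fin n → ℂ) (hz : Function.Injective z)
    (σ : Fin n → ℝ) (hσ : ∀ j, 0 < σ j) (j : Fin n) :
    Tendsto (fun x => ‖LL z σ x‖) (𝓝[≠] (z j)) atTop := by
  have h1 : Tendsto (fun x : ℂ => x - z j) (𝓝[≠] (z j)) (𝓝[≠] 0) := by
    apply tendsto_nhdsWithin_of_tendsto_nhds_of_eventually_within
    · have : ContinuousAt (fun x : ℂ => x - z j) (z j) := by fun_prop
      have h := this.tendsto
      simp only [sub_self] at h
      exact h.mono_left nhdsWithin_le_nhds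
    · filter_upwards [self_mem_nhdsWithin] with x hx
      exact sub_ne_zero.2 hx
  have h2 : Tendsto (fun x : ℂ => ‖(σ j : ℂ) / (x - z j)‖) (𝓝[≠] (z j)) atTop := by
    have h := (tendsto_norm_atTop_iff_cobounded.2
      ((tendsto_inv₀_nhdsNE_zero (α := ℂ)).comp h1)).const_mul_atTop (hσ j)
    refine h.congr fun x => ?_
    simp [div_eq_mul_inv, abs_of_pos (hσ j)]
  have h3 : ContinuousAt (fun x : ℂ => x - conj (∑ i ∈ Finset.univ.erase j, (σ i : ℂ) / (x - z i)))
      (z j) := by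
    refine continuousAt_id.sub (Complex.continuous_conj.continuousAt.comp ?_)
    refine tendsto_finsetSum _ fun i hi => ?_
    have hne : z j - z i ≠ 0 := sub_ne_zero.2 fun h => (Finset.ne_of_mem_erase hi) (hz h).symm
    exact ContinuousAt.div continuousAt_const (by fun_prop) hne
  have h4 := (h3.norm.tendsto.mono_left (nhdsWithin_le_nhds (s := {z j}ᶜ))).neg
  refine tendsto_atTop_mono (fun x => ?_) (h2.atTop_add h4)
  have e : LL z σ x = (x - conj (∑ i ∈ Finset.univ.erase j, (σ i : ℂ) / (x - z i)))
      - conj ((σ j : ℂ) / (x - z j)) := by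
    unfold LL rr
    rw [← Finset.add_sum_erase _ _ (Finset.mem_univ j), map_add]
    ring
  rw [e, norm_sub_rev (_ - _) (conj ((σ j : ℂ) / (x - z j)))]
  have := norm_sub_norm_le (conj ((σ j : ℂ) / (x - z j)))
    (x - conj (∑ i ∈ Finset.univ.erase j, (σ i : ℂ) / (x - z i)))
  rw [RCLike.norm_conj] at this
  linarith

/-- Preimages of closed balls under the lens map. -/
def KK {n : ℕ} (z : Fin n → ℂ) (σ : Fin n → ℝ) (R : ℝ) : Set ℂ :=
  {x | (∀ j, x ≠ z j) ∧ ‖LL z σ x‖ ≤ R}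

lemma isCompact_KK {n : ℕ} (z : Fin n → ℂ) (hz : Function.Injective z)
    (σ : Fin n → ℝ) (hσ : ∀ j, 0 < σ j) (R : ℝ) : IsCompact (KK z σ R) := by
  apply Metric.isCompact_of_isClosed_isBounded
  · rw [← isOpen_compl_iff, isOpen_iff_mem_nhds]
    intro x hx
    by_cases hp : ∀ j, x ≠ z j
    · have h1 : R < ‖LL z σ x‖ := by
        by_contra h
        exact hx ⟨hp, not_lt.1 h⟩
      have h2 : ContinuousAt (fun y => ‖LL z σ y‖) x := (contDiffAt_LL z σ hp).continuousAt.norm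
      filter_upwards [h2.eventually_const_lt h1] with y hy hk
      exact absurd hk.2 (not_le.2 hy)
    · push Not at hp
      obtain ⟨j, rfl⟩ := hp
      have := (tendsto_LL_pole z hz σ hσ j).eventually_gt_atTop R
      rw [eventually_nhdsWithin_iff] at this
      filter_upwards [this] with y hy hk
      exact absurd hk.2 (not_le.2 (hy (hk.1 j)))
  · have h := (tendsto_LL_inf z σ).eventually_gt_atTop R
    rw [← Metric.cobounded_eq_cocompact] at h
    rw [← Bornology.isCobounded_compl_iff]
    filter_upwards [h] with y hy hk
    exact absurd hk.2 (not_le.2 hy)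

lemma sol_subset_KK {n : ℕ} (z : Fin n → ℂ) (σ : Fin n → ℝ) (w : ℂ) :
    Sol z σ w ⊆ KK z σ ‖w‖ := fun x hx => ⟨hx.1, by rw [hx.2]⟩

lemma continuous_of_supp {n : ℕ} (z : Fin n → ℂ) (hz : Function.Injective z)
    (σ : Fin n → ℝ) (hσ : ∀ j, 0 < σ j) (R : ℝ) {E : Type*} [NormedAddCommGroup E]
    (G : ℂ → E) (h0 : ∀ x, x ∉ KK z σ R → G x = 0)
    (hc : ∀ x, (∀ j, x ≠ z j) → ContinuousAt G x) : Continuous G ∧ HasCompactSupport G := by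
  have hK := isCompact_KK z hz σ hσ R
  refine ⟨?_, HasCompactSupport.intro hK h0⟩
  rw [continuous_iff_continuousAt]
  intro x
  by_cases hx : x ∈ KK z σ R
  · exact hc x hx.1
  · have : G =ᶠ[𝓝 x] fun _ => 0 := by
      filter_upwards [hK.isClosed.isOpen_compl.mem_nhds hx] with y hy using h0 y hy
    exact continuousAt_const.congr this.symm

lemma contDiff_of_supp {n : ℕ} (z : Fin n → ℂ) (hz : Function.Injective z)
    (σ : Fin n → ℝ) (hσ : ∀ j, 0 < σ j) (R : ℝ) {E : Type*} [NormedAddCommGroup E]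
    [NormedSpace ℝ E]
    (G : ℂ → E) (h0 : ∀ x, x ∉ KK z σ R → G x = 0)
    (hc : ∀ x, (∀ j, x ≠ z j) → ContDiffAt ℝ 1 G x) : ContDiff ℝ 1 G ∧ HasCompactSupport G := by
  have hK := isCompact_KK z hz σ hσ R
  refine ⟨?_, HasCompactSupport.intro hK h0⟩
  rw [contDiff_iff_contDiffAt]
  intro x
  by_cases hx : x ∈ KK z σ R
  · exact hc x hx.1
  · have : G =ᶠ[𝓝 x] fun _ => 0 := by
      filter_upwards [hK.isClosed.isOpen_compl.mem_nhds hx] with y hy using h0 y hy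
    exact contDiffAt_const.congr_of_eventuallyEq this

lemma integral_fderiv_zero (Y : ℂ → ℂ) (hY : ContDiff ℝ 1 Y) (hs : HasCompactSupport Y) (v : ℂ) :
    Integrable (fun x => fderiv ℝ Y x v) ∧ ∫ x, fderiv ℝ Y x v = 0 := by
  have hd : Integrable (fun x => fderiv ℝ Y x v) := by
    apply Continuous.integrable_of_hasCompactSupport
    · exact (hY.continuous_fderiv (by norm_num)).clm_apply continuous_const
    · exact hs.fderiv_apply (𝕜 := ℝ) v
  refine ⟨hd, ?_⟩
  have h := integral_bilinear_fderiv_right_eq_neg_left_of_integrable (μ := (volume : Measure ℂ))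
    (f := fun _ : ℂ => (1 : ℝ)) (g := Y) (v := v) (B := ContinuousLinearMap.lsmul ℝ ℝ)
    (by simp) (by simpa using hd)
    (by simpa using hY.continuous.integrable_of_hasCompactSupport hs)
    (fun x _ => by fun_prop) (fun x _ => (hY.differentiable (by norm_num)) x)
  simpa using h


lemma ind_eventuallyEq {n : ℕ} (z : Fin n → ℂ) {E : Type*} [Zero E] (f : ℂ → E) {x : ℂ}
    (hx : ∀ j, x ≠ z j) : {x : ℂ | ∀ j, x ≠ z j}.indicator f =ᶠ[𝓝 x] f := by
  filter_upwards [eventually_nonpole z hx] with y hy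
  exact indicator_of_mem (s := {x : ℂ | ∀ j, x ≠ z j}) hy f

lemma div_identity (a c u : ℂ) (k : ℝ) (A : ℂ →L[ℝ] ℝ) :
    (((A (DL a 1) : ℝ) : ℂ) * (u + conj (a * u)) + (k : ℂ) * conj (c * 1 * u)).re +
    (((A (DL a I) : ℝ) : ℂ) * (u + conj (a * u)) + (k : ℂ) * conj (c * I * u)).im
    = A u * (1 - ‖a‖ ^ 2) := by
  set v := u + conj (a * u) with hv
  have h1 : DL a v = ((1 - ‖a‖ ^ 2 : ℝ)) • u := by
    rw [DL_apply, hv]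
    have : (‖a‖ : ℂ) ^ 2 = conj a * a := (Complex.conj_mul' a).symm
    simp only [map_mul, map_add, Complex.conj_conj, Complex.real_smul]
    push_cast
    rw [this]
    ring
  have h2 : v = v.re • (1 : ℂ) + v.im • I := by
    simp [Complex.real_smul, Complex.re_add_im]
  have h3 : A (DL a v) = v.re * A (DL a 1) + v.im * A (DL a I) := by
    conv_lhs => rw [h2]
    simp only [map_add, map_smul, smul_eq_mul]
  rw [h1, map_smul, smul_eq_mul] at h3
  rw [mul_comm (A u), h3]
  simp
  ring

lemma lem_Z {n : ℕ} (z : Fin n → ℂ) (hz : Function.Injective z)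
    (σ : Fin n → ℝ) (hσ : ∀ j, 0 < σ j) (R : ℝ) (F : ℂ → ℝ) (hF : ContDiff ℝ 1 F)
    (hF0 : ∀ y, R < ‖y‖ → F y = 0) (u : ℂ) :
    ∫ x, {x : ℂ | ∀ j, x ≠ z j}.indicator
      (fun x => fderiv ℝ F (LL z σ x) u * (1 - ‖dr z σ x‖ ^ 2)) x = 0 := by
  set Y0 : ℂ → ℂ := fun x => (F (LL z σ x) : ℂ) * (u + conj (dr z σ x * u)) with hY0
  set Y : ℂ → ℂ := {x : ℂ | ∀ j, x ≠ z j}.indicator Y0 with hY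
  have hYs : ContDiff ℝ 1 Y ∧ HasCompactSupport Y := by
    apply contDiff_of_supp z hz σ hσ R
    · intro x hx
      by_cases hp : ∀ j, x ≠ z j
      · rw [hY, indicator_of_mem (s := {x : ℂ | ∀ j, x ≠ z j}) hp]
        have : R < ‖LL z σ x‖ := by
          by_contra h
          exact hx ⟨hp, not_lt.1 h⟩
        simp [hY0, hF0 _ this]
      · exact indicator_of_notMem (s := {x : ℂ | ∀ j, x ≠ z j}) hp _
    · intro x hx
      refine ContDiffAt.congr_of_eventuallyEq ?_ (ind_eventuallyEq z Y0 hx)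
      have h1 : ContDiffAt ℝ 1 (fun x => F (LL z σ x)) x :=
        hF.contDiffAt.comp x (contDiffAt_LL z σ hx)
      have h2 : ContDiffAt ℝ 1 (fun x => ((F (LL z σ x) : ℝ) : ℂ)) x :=
        Complex.ofRealCLM.contDiff.contDiffAt.comp x h1
      have h3 : ContDiffAt ℝ 1 (fun x => dr z σ x * u) x :=
        ((contDiffAt_dr z σ hx).restrict_scalars ℝ).mul contDiffAt_const
      have h4 : ContDiffAt ℝ 1 (fun x => conj (dr z σ x * u)) x :=
        (Complex.conjCLE : ℂ →L[ℝ] ℂ).contDiff.contDiffAt.comp x h3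
      exact h2.mul (contDiffAt_const.add h4)
  have hI1 := integral_fderiv_zero Y hYs.1 hYs.2 1
  have hI2 := integral_fderiv_zero Y hYs.1 hYs.2 I
  have key : ∀ᵐ x : ℂ, {x : ℂ | ∀ j, x ≠ z j}.indicator
      (fun x => fderiv ℝ F (LL z σ x) u * (1 - ‖dr z σ x‖ ^ 2)) x =
      (fderiv ℝ Y x 1).re + (fderiv ℝ Y x I).im := by
    have hae : ∀ᵐ x : ℂ, ∀ j, x ≠ z j := by
      rw [ae_all_iff]
      intro j
      simp [ae_iff]
    filter_upwards [hae] with x hx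
    rw [indicator_of_mem (s := {x : ℂ | ∀ j, x ≠ z j}) hx]
    rw [(ind_eventuallyEq z Y0 hx).fderiv_eq]
    have h1 : HasFDerivAt (fun x => F (LL z σ x)) ((fderiv ℝ F (LL z σ x)).comp (DL (dr z σ x))) x :=
      ((hF.differentiable (by norm_num)) _).hasFDerivAt.comp x (hasStrictFDerivAt_LL z σ hx).hasFDerivAt
    have h2 := Complex.ofRealCLM.hasFDerivAt.comp x h1
    have h3 : HasFDerivAt (dr z σ) _ x :=
      (((contDiffAt_dr z σ hx).differentiableAt (by norm_num)).hasDerivAt.hasFDerivAt.restrictScalars ℝ)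
    have h4 := (Complex.conjCLE : ℂ →L[ℝ] ℂ).hasFDerivAt.comp x (h3.mul_const u)
    have h5 : HasFDerivAt Y0 _ x := h2.mul (h4.const_add u)
    rw [h5.fderiv, ← div_identity (dr z σ x) (deriv (dr z σ) x) u (F (LL z σ x))
      (fderiv ℝ F (LL z σ x))]
    simp
    ring
  rw [integral_congr_ae key, integral_add]
  · have e1 := integral_re hI1.1
    have e2 := integral_im hI2.1
    simp only [RCLike.re_to_complex, RCLike.im_to_complex] at e1 e2
    rw [e1, e2, hI1.2, hI2.2]
    simp
  · exact hI1.1.re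
  · exact hI2.1.im

/-- The degree integral. -/
noncomputable def II {n : ℕ} (z : Fin n → ℂ) (σ : Fin n → ℝ) (ρ : ℂ → ℝ) (w : ℂ) : ℝ :=
  ∫ x, {x : ℂ | ∀ j, x ≠ z j}.indicator
      (fun x => ρ (LL z σ x - w) * (1 - ‖dr z σ x‖ ^ 2)) x

lemma cont_aux {n : ℕ} (z : Fin n → ℂ) (hz : Function.Injective z)
    (σ : Fin n → ℝ) (hσ : ∀ j, 0 < σ j) (R : ℝ) (F : ℂ → ℝ) (hF : Continuous F)
    (hF0 : ∀ y, R < ‖y‖ → F y = 0) :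
    Integrable ({x : ℂ | ∀ j, x ≠ z j}.indicator
      (fun x => F (LL z σ x) * (1 - ‖dr z σ x‖ ^ 2))) := by
  have := continuous_of_supp z hz σ hσ R ({x : ℂ | ∀ j, x ≠ z j}.indicator
      (fun x => F (LL z σ x) * (1 - ‖dr z σ x‖ ^ 2))) ?_ ?_
  · exact this.1.integrable_of_hasCompactSupport this.2
  · intro x hx
    by_cases hp : ∀ j, x ≠ z j
    · rw [indicator_of_mem (s := {x : ℂ | ∀ j, x ≠ z j}) hp]
      have : R < ‖LL z σ x‖ := by
        by_contra h
        exact hx ⟨hp, not_lt.1 h⟩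
      simp [hF0 _ this]
    · exact indicator_of_notMem (s := {x : ℂ | ∀ j, x ≠ z j}) hp _
  · intro x hx
    refine ContinuousAt.congr ?_ (ind_eventuallyEq z _ hx).symm
    have h1 := (contDiffAt_LL z σ hx).continuousAt
    have h2 := (contDiffAt_dr z σ hx).continuousAt
    have h3 : ContinuousAt (fun x => F (LL z σ x)) x := ContinuousAt.comp hF.continuousAt h1
    exact h3.mul (continuousAt_const.sub (h2.norm.pow 2))

lemma II_const {n : ℕ} (z : Fin n → ℂ) (hz : Function.Injective z)
    (σ : Fin n → ℝ) (hσ : ∀ j, 0 < σ j) (ρ : ℂ → ℝ) (hρ : ContDiff ℝ 1 ρ) (r : ℝ)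
    (hρ0 : ∀ y, r < ‖y‖ → ρ y = 0) (w0 w1 : ℂ) :
    II z σ ρ w0 = II z σ ρ w1 := by
  set u := w1 - w0 with hu
  have hd0 : ∀ y, r < ‖y‖ → fderiv ℝ ρ y = 0 := by
    intro y hy
    have h : ρ =ᶠ[𝓝 y] fun _ => 0 := by
      filter_upwards [(isOpen_lt continuous_const continuous_norm).mem_nhds hy] with x hx
      exact hρ0 x hx
    rw [h.fderiv_eq]
    simp
  have hdc : Continuous (fun y => fderiv ℝ ρ y u) :=
    (hρ.continuous_fderiv (by norm_num)).clm_apply continuous_const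
  obtain ⟨C, hC⟩ : ∃ C, ∀ y, ‖fderiv ℝ ρ y u‖ ≤ C := by
    obtain ⟨C, hC⟩ := (isCompact_closedBall (0 : ℂ) r).exists_bound_of_continuousOn hdc.continuousOn
    refine ⟨max C 0, fun y => ?_⟩
    by_cases hy : ‖y‖ ≤ r
    · exact (hC y (by simpa using hy)).trans (le_max_left _ _)
    · rw [hd0 y (not_le.1 hy)]
      simp
  have hder : ∀ t : ℝ, HasDerivAt (fun t : ℝ => II z σ ρ (w0 + t * u)) 0 t := by
    intro t0
    set R : ℝ := r + ‖w0‖ + (|t0| + 1) * ‖u‖ with hR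
    have hR' : ∀ t : ℝ, |t - t0| < 1 → ∀ y, R < ‖y‖ → r < ‖y - (w0 + t * u)‖ := by
      intro t ht y hy
      have h1 : ‖y‖ ≤ ‖y - (w0 + t * u)‖ + ‖w0 + t * u‖ := by
        simpa using norm_add_le (y - (w0 + t * u)) (w0 + t * u)
      have h2 : ‖w0 + t * u‖ ≤ ‖w0‖ + |t| * ‖u‖ := by
        refine (norm_add_le _ _).trans ?_
        simp
      have h3 : |t| ≤ |t0| + 1 := by
        have := abs_sub_abs_le_abs_sub t t0
        linarith
      have h4 := mul_le_mul_of_nonneg_right h3 (norm_nonneg u)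
      linarith
    have hK := isCompact_KK z hz σ hσ R
    obtain ⟨M, hM⟩ := hK.exists_bound_of_continuousOn
      (f := fun x => (1 - ‖dr z σ x‖ ^ 2 : ℝ)) (by
        intro x hx
        have h2 := (contDiffAt_dr z σ hx.1).continuousAt
        exact (continuousAt_const.sub (h2.norm.pow 2)).continuousWithinAt)
    have hb : ∀ t : ℝ, |t - t0| < 1 → ∀ x, ‖{x : ℂ | ∀ j, x ≠ z j}.indicator
        (fun x => -(fderiv ℝ ρ (LL z σ x - (w0 + t * u)) u) * (1 - ‖dr z σ x‖ ^ 2)) x‖ ≤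
        (KK z σ R).indicator (fun _ => C * M) x := by
      intro t ht x
      by_cases hp : ∀ j, x ≠ z j
      · rw [indicator_of_mem (s := {x : ℂ | ∀ j, x ≠ z j}) hp]
        by_cases hx : ‖LL z σ x‖ ≤ R
        · rw [indicator_of_mem (show x ∈ KK z σ R from ⟨hp, hx⟩), norm_mul, norm_neg]
          have hC0 : 0 ≤ C := (norm_nonneg _).trans (hC 0)
          exact mul_le_mul (hC _) (hM x ⟨hp, hx⟩) (norm_nonneg _) hC0
        · rw [hd0 _ (hR' t ht _ (not_le.1 hx))]
          have : x ∉ KK z σ R := fun h => hx h.2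
          rw [indicator_of_notMem this]
          simp
      · rw [indicator_of_notMem (s := {x : ℂ | ∀ j, x ≠ z j}) hp]
        have : x ∉ KK z σ R := fun h => hp h.1
        rw [indicator_of_notMem this]
        simp
    have hintg : ∀ t : ℝ, |t - t0| < 1 → Integrable ({x : ℂ | ∀ j, x ≠ z j}.indicator
        (fun x => ρ (LL z σ x - (w0 + t * u)) * (1 - ‖dr z σ x‖ ^ 2))) := by
      intro t ht
      exact cont_aux z hz σ hσ R (fun y => ρ (y - (w0 + t * u)))
        (hρ.continuous.comp (by fun_prop)) (fun y hy => hρ0 _ (hR' t ht y hy))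
    have hintg' : Integrable ({x : ℂ | ∀ j, x ≠ z j}.indicator
        (fun x => -(fderiv ℝ ρ (LL z σ x - (w0 + t0 * u)) u) * (1 - ‖dr z σ x‖ ^ 2))) := by
      exact cont_aux z hz σ hσ R (fun y => -(fderiv ℝ ρ (y - (w0 + t0 * u)) u))
        (hdc.comp (f := fun y => y - (w0 + t0 * u)) (by fun_prop)).neg
        (fun y hy => by simp [hd0 _ (hR' t0 (by simp) y hy)])
    have main := hasDerivAt_integral_of_dominated_loc_of_deriv_le (μ := (volume : Measure ℂ))
      (F := fun (t : ℝ) x => {x : ℂ | ∀ j, x ≠ z j}.indicator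
        (fun x => ρ (LL z σ x - (w0 + t * u)) * (1 - ‖dr z σ x‖ ^ 2)) x)
      (F' := fun (t : ℝ) x => {x : ℂ | ∀ j, x ≠ z j}.indicator
        (fun x => -(fderiv ℝ ρ (LL z σ x - (w0 + t * u)) u) * (1 - ‖dr z σ x‖ ^ 2)) x)
      (x₀ := t0) (s := Metric.ball t0 1) (bound := (KK z σ R).indicator (fun _ => C * M))
      (Metric.ball_mem_nhds t0 one_pos)
      (by
        filter_upwards [Metric.ball_mem_nhds t0 one_pos] with t ht
        exact (hintg t (by simpa [Real.dist_eq] using ht)).aestronglyMeasurable)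
      (hintg t0 (by simp)) hintg'.aestronglyMeasurable
      (by
        refine Eventually.of_forall fun x t ht => ?_
        exact hb t (by simpa [Real.dist_eq] using ht) x)
      (by
        rw [integrable_indicator_iff hK.measurableSet]
        exact integrableOn_const hK.measure_lt_top.ne)
      (by
        refine Eventually.of_forall fun x t ht => ?_
        by_cases hp : ∀ j, x ≠ z j
        · simp only [indicator_of_mem (show x ∈ {x : ℂ | ∀ j, x ≠ z j} from hp)]
          have h1 : HasDerivAt (fun t : ℝ => LL z σ x - (w0 + t * u)) (-u) t := by
            have := (((hasDerivAt_id t).ofReal_comp.mul_const u).const_add w0).const_sub (LL z σ x)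
            simpa using this
          have h2 := ((hρ.differentiable (by norm_num))
            (LL z σ x - (w0 + t * u))).hasFDerivAt.comp_hasDerivAt t h1
          rw [map_neg] at h2
          exact h2.mul_const _
        · simp only [indicator_of_notMem (show x ∉ {x : ℂ | ∀ j, x ≠ z j} from hp)]
          exact hasDerivAt_const _ _)
    have h0 : ∫ x, {x : ℂ | ∀ j, x ≠ z j}.indicator
        (fun x => -(fderiv ℝ ρ (LL z σ x - (w0 + t0 * u)) u) * (1 - ‖dr z σ x‖ ^ 2)) x = 0 := by
      have hZ := lem_Z z hz σ hσ R (fun y => - ρ (y - (w0 + t0 * u)))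
        (hρ.comp (contDiff_id.sub contDiff_const)).neg
        (fun y hy => by simp [hρ0 _ (hR' t0 (by simp) y hy)]) u
      rw [← hZ]
      congr 1
      ext x
      congr 1
      ext x
      congr 1
      rw [fderiv_fun_neg, fderiv_comp_sub]
      simp
    have := main.2
    rw [h0] at this
    exact this
  have hconst := is_const_of_deriv_eq_zero (fun t => (hder t).differentiableAt)
    (fun t => (hder t).deriv) 0 1
  simpa [hu] using hconst


/-- Regular values of the lens map. -/
def Reg {n : ℕ} (z : Fin n → ℂ) (σ : Fin n → ℝ) (w : ℂ) : Prop :=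
  ∀ x ∈ Sol z σ w, ‖dr z σ x‖ ≠ 1

lemma DL_det_ne {a : ℂ} (h : ‖a‖ ≠ 1) : (DL a).det ≠ 0 := by
  rw [DL_det]
  intro h0
  apply h
  have h1 : ‖a‖ ^ 2 = 1 := by linarith
  exact (pow_eq_one_iff_of_nonneg (norm_nonneg _) two_ne_zero).1 h1

lemma local_nbhd {n : ℕ} (z : Fin n → ℂ) (σ : Fin n → ℝ) {x : ℂ} (hx : ∀ j, x ≠ z j)
    (hd : ‖dr z σ x‖ ≠ 1) {V : Set ℂ} (hV : V ∈ 𝓝 x) :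
    ∃ U, IsOpen U ∧ x ∈ U ∧ U ⊆ V ∧ (∀ y ∈ U, ∀ j, y ≠ z j) ∧ InjOn (LL z σ) U ∧
      (∀ y ∈ U, ((1 - ‖dr z σ y‖ ^ 2 : ℝ)) = (if ‖dr z σ x‖ < 1 then 1 else -1) *
        |(DL (dr z σ y)).det|) ∧ LL z σ '' U ∈ 𝓝 (LL z σ x) := by
  set A := (DL (dr z σ x)).toContinuousLinearEquivOfDetNeZero (DL_det_ne hd) with hA
  have hs : HasStrictFDerivAt (LL z σ) (A : ℂ →L[ℝ] ℂ) x := hasStrictFDerivAt_LL z σ hx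
  have hcont : ContinuousAt (fun y => ‖dr z σ y‖) x := (contDiffAt_dr z σ hx).continuousAt.norm
  have hsign : ∀ᶠ y in 𝓝 x, ((1 - ‖dr z σ y‖ ^ 2 : ℝ)) = (if ‖dr z σ x‖ < 1 then 1 else -1) *
        |(DL (dr z σ y)).det| := by
    rcases lt_or_gt_of_ne hd with h | h
    · filter_upwards [hcont.eventually_lt_const h] with y hy
      rw [if_pos h, DL_det, abs_of_nonneg, one_mul]
      nlinarith [norm_nonneg (dr z σ y)]
    · filter_upwards [hcont.eventually_const_lt h] with y hy
      rw [if_neg (not_lt.2 h.le), DL_det, abs_of_nonpos, neg_one_mul, neg_neg]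
      nlinarith [norm_nonneg (dr z σ y)]
  set P := hs.toOpenPartialHomeomorph (LL z σ) with hP
  have hPs : P.source ∈ 𝓝 x := P.open_source.mem_nhds hs.mem_toOpenPartialHomeomorph_source
  have hall : ∀ᶠ y in 𝓝 x, y ∈ V ∧ y ∈ P.source ∧ (∀ j, y ≠ z j) ∧
      ((1 - ‖dr z σ y‖ ^ 2 : ℝ)) = (if ‖dr z σ x‖ < 1 then 1 else -1) *
        |(DL (dr z σ y)).det| := by
    filter_upwards [hV, hPs, eventually_nonpole z hx, hsign] with y h1 h2 h3 h4
    exact ⟨h1, h2, h3, h4⟩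
  obtain ⟨U, hU, hUo, hxU⟩ := eventually_nhds_iff.1 hall
  refine ⟨U, hUo, hxU, fun y hy => (hU y hy).1, fun y hy => (hU y hy).2.2.1, ?_,
    fun y hy => (hU y hy).2.2.2, ?_⟩
  · exact P.injOn.mono fun y hy => (hU y hy).2.1
  · rw [← hs.map_nhds_eq_of_equiv]
    exact image_mem_map (hUo.mem_nhds hxU)

lemma reg_finite {n : ℕ} (z : Fin n → ℂ) (hz : Function.Injective z)
    (σ : Fin n → ℝ) (hσ : ∀ j, 0 < σ j) {w : ℂ} (hw : Reg z σ w) : (Sol z σ w).Finite := by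
  have hK := isCompact_KK z hz σ hσ ‖w‖
  have h : ∀ x ∈ KK z σ ‖w‖, ∃ U ∈ 𝓝 x, ∀ y ∈ U, y ∈ Sol z σ w → y = x := by
    intro x hx
    by_cases hxw : LL z σ x = w
    · obtain ⟨U, hUo, hxU, -, -, hinj, -⟩ := local_nbhd z σ hx.1 (hw x ⟨hx.1, hxw⟩) univ_mem
      refine ⟨U, hUo.mem_nhds hxU, fun y hy hyS => ?_⟩
      exact hinj hy hxU (hyS.2.trans hxw.symm)
    · have hc := (contDiffAt_LL z σ hx.1).continuousAt
      refine ⟨_, hc.eventually_ne hxw, fun y hy hyS => absurd hyS.2 hy⟩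
  choose! U hU hU2 using h
  obtain ⟨t, ht, hcov⟩ := hK.elim_nhds_subcover U hU
  refine t.finite_toSet.subset fun y hy => ?_
  obtain ⟨x, hx, hyx⟩ := mem_iUnion₂.1 (hcov (sol_subset_KK z σ w hy))
  rw [hU2 x (ht x hx) y hyx hy]
  exact hx

lemma II_local {n : ℕ} (z : Fin n → ℂ) (hz : Function.Injective z)
    (σ : Fin n → ℝ) (hσ : ∀ j, 0 < σ j) {w : ℂ} (hw : Reg z σ w) :
    ∃ ε > 0, ∀ ρ : ℂ → ℝ, Continuous ρ → (∀ y, ε ≤ ‖y‖ → ρ y = 0) →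
      II z σ ρ w = (∑ x ∈ (reg_finite z hz σ hσ hw).toFinset,
        (if ‖dr z σ x‖ < 1 then (1 : ℝ) else -1)) * ∫ y, ρ y := by
  set hf := reg_finite z hz σ hσ hw
  set S := hf.toFinset with hS
  have hmS : ∀ x, x ∈ S ↔ x ∈ Sol z σ w := fun x => hf.mem_toFinset
  obtain ⟨V, hV, hVd⟩ := hf.t2_separation
  have h : ∀ x ∈ S, ∃ U, IsOpen U ∧ x ∈ U ∧ U ⊆ V x ∧ (∀ y ∈ U, ∀ j, y ≠ z j) ∧
      InjOn (LL z σ) U ∧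
      (∀ y ∈ U, ((1 - ‖dr z σ y‖ ^ 2 : ℝ)) = (if ‖dr z σ x‖ < 1 then 1 else -1) *
        |(DL (dr z σ y)).det|) ∧ LL z σ '' U ∈ 𝓝 (LL z σ x) := by
    intro x hx
    have hx' := (hmS x).1 hx
    exact local_nbhd z σ hx'.1 (hw x hx') ((hV x).2.mem_nhds (hV x).1)
  choose! U hUo hxU hUV hUn hUi hUs hUm using h
  set L := KK z σ (‖w‖ + 1) \ ⋃ x ∈ S, U x with hL
  have hUU : IsOpen (⋃ x ∈ S, U x) := isOpen_biUnion hUo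
  have hLc : IsCompact L := (isCompact_KK z hz σ hσ _).diff hUU
  have hLi : IsCompact (LL z σ '' L) := by
    apply hLc.image_of_continuousOn
    intro x hx
    exact (contDiffAt_LL z σ hx.1.1).continuousAt.continuousWithinAt
  have hwL : w ∉ LL z σ '' L := by
    rintro ⟨x, hx, hxw⟩
    apply hx.2
    have hxS : x ∈ S := (hmS x).2 ⟨hx.1.1, hxw⟩
    exact mem_biUnion hxS (hxU x hxS)
  have hev : ∀ᶠ y in 𝓝 w, y ∉ LL z σ '' L ∧ y ∈ Metric.ball w 1 ∧ ∀ x ∈ S, y ∈ LL z σ '' U x := by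
    have i1 : ∀ᶠ y in 𝓝 w, y ∉ LL z σ '' L := hLi.isClosed.isOpen_compl.mem_nhds hwL
    have i2 : ∀ᶠ y in 𝓝 w, y ∈ Metric.ball w 1 := Metric.ball_mem_nhds w one_pos
    refine i1.and (i2.and ?_)
    rw [Filter.eventually_all_finset]
    intro x hx
    have := hUm x hx
    rwa [((hmS x).1 hx).2] at this
  obtain ⟨ε, hε, hb⟩ := Metric.eventually_nhds_iff_ball.1 hev
  refine ⟨ε, hε, fun ρ hρ hρ0 => ?_⟩
  have hb' : ∀ y, ρ (y - w) ≠ 0 → y ∈ Metric.ball w ε := by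
    intro y hy
    by_contra hn
    apply hy
    apply hρ0
    rw [Metric.mem_ball, dist_eq_norm, not_lt] at hn
    exact hn
  set g := {x : ℂ | ∀ j, x ≠ z j}.indicator
      (fun x => ρ (LL z σ x - w) * (1 - ‖dr z σ x‖ ^ 2)) with hg
  have hgi : Integrable g := by
    refine cont_aux z hz σ hσ (‖w‖ + ε) (fun y => ρ (y - w)) (hρ.comp (by fun_prop)) fun y hy => ?_
    apply hρ0
    have := norm_sub_norm_le y w
    linarith
  have h1 : ∫ x, g x = ∫ x in ⋃ x ∈ S, U x, g x := by
    symm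
    apply setIntegral_eq_integral_of_forall_compl_eq_zero
    intro y hy
    by_cases hp : ∀ j, y ≠ z j
    · rw [hg, indicator_of_mem (s := {x : ℂ | ∀ j, x ≠ z j}) hp]
      by_contra hne
      have h2 := hb _ (hb' _ (left_ne_zero_of_mul hne))
      apply h2.1
      refine ⟨y, ⟨⟨hp, ?_⟩, hy⟩, rfl⟩
      have h3 := h2.2.1
      rw [Metric.mem_ball, dist_eq_norm] at h3
      have := norm_sub_norm_le (LL z σ y) w
      linarith
    · exact indicator_of_notMem (s := {x : ℂ | ∀ j, x ≠ z j}) hp _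
  have h2 : ∀ x ∈ S, ∫ y in U x, g y = (if ‖dr z σ x‖ < 1 then (1 : ℝ) else -1) * ∫ y, ρ y := by
    intro x hx
    have e1 : ∫ y in U x, g y = ∫ y in U x, (if ‖dr z σ x‖ < 1 then (1 : ℝ) else -1) *
        (|(DL (dr z σ y)).det| • ρ (LL z σ y - w)) := by
      apply setIntegral_congr_fun (hUo x hx).measurableSet
      intro y hy
      simp only
      rw [hg, indicator_of_mem (s := {x : ℂ | ∀ j, x ≠ z j}) (hUn x hx y hy), hUs x hx y hy,
        smul_eq_mul]
      ring
    rw [e1, integral_const_mul]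
    congr 1
    rw [← integral_image_eq_integral_abs_det_fderiv_smul volume (hUo x hx).measurableSet
      (fun y hy => (hasStrictFDerivAt_LL z σ (hUn x hx y hy)).hasFDerivAt.hasFDerivWithinAt)
      (hUi x hx) (fun y => ρ (y - w))]
    rw [setIntegral_eq_integral_of_forall_compl_eq_zero, integral_sub_right_eq_self]
    intro y hy
    by_contra hne
    exact hy ((hb y (hb' y hne)).2.2 x hx)
  unfold II
  rw [h1, integral_biUnion_finset S (fun x hx => (hUo x hx).measurableSet), Finset.sum_mul]
  · exact Finset.sum_congr rfl h2
  · intro x hx y hy hxy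
    exact (hVd ((hmS x).1 hx) ((hmS y).1 hy) hxy).mono (hUV x hx) (hUV y hy)
  · exact fun x hx => hgi.integrableOn

lemma degree_const {n : ℕ} (z : Fin n → ℂ) (hz : Function.Injective z)
    (σ : Fin n → ℝ) (hσ : ∀ j, 0 < σ j) {w w1 : ℂ} (hw : Reg z σ w) (hw1 : Reg z σ w1) :
    (∑ x ∈ (reg_finite z hz σ hσ hw).toFinset,
        (if ‖dr z σ x‖ < 1 then (1 : ℝ) else -1)) =
    (∑ x ∈ (reg_finite z hz σ hσ hw1).toFinset,
        (if ‖dr z σ x‖ < 1 then (1 : ℝ) else -1)) := by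
  obtain ⟨ε, hε, h⟩ := II_local z hz σ hσ hw
  obtain ⟨ε1, hε1, h1⟩ := II_local z hz σ hσ hw1
  set r := min ε ε1 with hr
  have hr0 : 0 < r := lt_min hε hε1
  let b : ContDiffBump (0 : ℂ) := ⟨r / 2, r, by linarith, by linarith⟩
  have hb0 : ∀ y, r ≤ ‖y‖ → b y = 0 := fun y hy => b.zero_of_le_dist (by simpa using hy)
  have e := II_const z hz σ hσ b b.contDiff r (fun y hy => hb0 y hy.le) w w1
  rw [h b b.continuous (fun y hy => hb0 y ((min_le_left _ _).trans hy)),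
    h1 b b.continuous (fun y hy => hb0 y ((min_le_right _ _).trans hy))] at e
  exact mul_right_cancel₀ (b.integral_pos (μ := volume)).ne' e


lemma pole_nbhd {n : ℕ} (z : Fin n → ℂ) (hz : Function.Injective z)
    (σ : Fin n → ℝ) (hσ : ∀ j, 0 < σ j) (j : Fin n) :
    ∃ U, IsOpen U ∧ z j ∈ U ∧ (∀ x ∈ U, x ≠ z j → 1 < ‖dr z σ x‖) ∧
      (∀ a ∈ U, ∀ b ∈ U, a ≠ z j → b ≠ z j → LL z σ a = LL z σ b → a = b) := by
  set h : ℂ → ℂ := fun x => ∑ i ∈ Finset.univ.erase j, (σ i : ℂ) / (x - z i) with hh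
  set k : ℂ → ℂ := fun x => ∑ i ∈ Finset.univ.erase j, (σ i : ℂ) / (x - z i) ^ 2 with hk
  have hne : ∀ i ∈ Finset.univ.erase j, z j - z i ≠ 0 := fun i hi =>
    sub_ne_zero.2 fun h => (Finset.ne_of_mem_erase hi) (hz h).symm
  have hrr : ∀ x, rr z σ x = (σ j : ℂ) / (x - z j) + h x := fun x => by
    unfold rr
    rw [← Finset.add_sum_erase _ _ (Finset.mem_univ j)]
  have hdr : ∀ x, dr z σ x = -((σ j : ℂ) / (x - z j) ^ 2 + k x) := fun x => by
    unfold dr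
    rw [← Finset.add_sum_erase _ _ (Finset.mem_univ j)]
  have hhc : ContDiffAt ℂ 1 h (z j) := by
    apply ContDiffAt.sum
    intro i hi
    exact contDiffAt_const.div (contDiffAt_id.sub contDiffAt_const) (hne i hi)
  have hkc : ContinuousAt k (z j) := by
    refine tendsto_finsetSum _ fun i hi => ?_
    exact ContinuousAt.div continuousAt_const (by fun_prop) (pow_ne_zero 2 (hne i hi))
  obtain ⟨C, t, ht, hlip⟩ := hhc.exists_lipschitzOnWith
  set M : ℝ := C + ‖k (z j)‖ + 3 with hM
  have hM0 : 0 < M := by positivity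
  have hkb : ∀ᶠ x in 𝓝 (z j), ‖k x‖ < ‖k (z j)‖ + 1 :=
    hkc.norm.eventually_lt_const (by linarith)
  have hsm : ∀ᶠ x in 𝓝 (z j), ‖x - z j‖ ^ 2 < σ j / M := by
    have hc : ContinuousAt (fun x : ℂ => ‖x - z j‖ ^ 2) (z j) := by fun_prop
    refine hc.eventually_lt_const ?_
    simpa using div_pos (hσ j) hM0
  have ht' : ∀ᶠ x in 𝓝 (z j), x ∈ t := ht
  obtain ⟨U, hU, hUo, hzU⟩ := eventually_nhds_iff.1 (ht'.and (hkb.and hsm))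
  have hinv : ∀ x ∈ U, M * ‖x - z j‖ ^ 2 < σ j := by
    intro x hx
    have := (hU x hx).2.2
    rw [lt_div_iff₀ hM0] at this
    linarith
  refine ⟨U, hUo, hzU, ?_, ?_⟩
  · intro x hx hxz
    have hx0 : 0 < ‖x - z j‖ := norm_pos_iff.2 (sub_ne_zero.2 hxz)
    rw [hdr, norm_neg]
    have h1 : M < ‖(σ j : ℂ) / (x - z j) ^ 2‖ := by
      rw [norm_div, norm_pow, Complex.norm_real, Real.norm_of_nonneg (hσ j).le,
        lt_div_iff₀ (by positivity)]
      exact hinv x hx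
    have h2 := norm_sub_le_norm_add ((σ j : ℂ) / (x - z j) ^ 2) (k x)
    have h3 := (hU x hx).2.1
    have h4 : (0 : ℝ) ≤ C := C.2
    linarith
  · intro a ha b hb haz hbz hab
    by_contra hne'
    have ha0 : 0 < ‖a - z j‖ := norm_pos_iff.2 (sub_ne_zero.2 haz)
    have hb0 : 0 < ‖b - z j‖ := norm_pos_iff.2 (sub_ne_zero.2 hbz)
    have hab0 : 0 < ‖a - b‖ := norm_pos_iff.2 (sub_ne_zero.2 hne')
    have e1 : ‖a - b‖ = ‖rr z σ a - rr z σ b‖ := by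
      have : a - b = conj (rr z σ a - rr z σ b) := by
        unfold LL at hab
        rw [map_sub]
        linear_combination hab
      rw [this, RCLike.norm_conj]
    have e2 : (σ j : ℂ) / (a - z j) - (σ j : ℂ) / (b - z j) =
        -((σ j : ℂ) * (a - b) / ((a - z j) * (b - z j))) := by
      have := sub_ne_zero.2 haz
      have := sub_ne_zero.2 hbz
      field_simp
      ring
    have e3 : M * ‖a - b‖ < ‖(σ j : ℂ) / (a - z j) - (σ j : ℂ) / (b - z j)‖ := by
      rw [e2, norm_neg, norm_div, norm_mul, norm_mul, Complex.norm_real,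
        Real.norm_of_nonneg (hσ j).le, lt_div_iff₀ (by positivity)]
      have h1 := hinv a ha
      have h2 := hinv b hb
      have h3 : M * (‖a - z j‖ * ‖b - z j‖) < σ j := by
        nlinarith [mul_nonneg hM0.le (sq_nonneg (‖a - z j‖ - ‖b - z j‖))]
      nlinarith
    have e4 : ‖h a - h b‖ ≤ C * ‖a - b‖ := by
      have := hlip.dist_le_mul a (hU a ha).1 b (hU b hb).1
      simpa [dist_eq_norm] using this
    have e5 : rr z σ a - rr z σ b = ((σ j : ℂ) / (a - z j) - (σ j : ℂ) / (b - z j)) +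
        (h a - h b) := by rw [hrr, hrr]; ring
    have e6 := norm_sub_le_norm_add ((σ j : ℂ) / (a - z j) - (σ j : ℂ) / (b - z j)) (h a - h b)
    rw [← e5, ← e1] at e6
    have e7 := norm_nonneg (k (z j))
    nlinarith

lemma exists_far_sol {n : ℕ} (z : Fin n → ℂ) (σ : Fin n → ℝ) (w R : ℝ)
    (h1 : ∀ x : ℂ, R < ‖x‖ → (∀ j, x ≠ z j) ∧ ‖rr z σ x‖ ≤ 1 ∧ ‖dr z σ x‖ ≤ 1 / 2)
    (hw : R + 1 < w) : ∃ x, x ∈ Sol z σ w ∧ R < ‖x‖ := by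
  have hs : ∀ x ∈ Metric.closedBall (w : ℂ) 1, R < ‖x‖ := by
    intro x hx
    rw [Metric.mem_closedBall, dist_eq_norm] at hx
    have := norm_sub_norm_le (w : ℂ) x
    rw [norm_sub_rev, Complex.norm_real] at this
    have := le_abs_self w
    rw [Real.norm_eq_abs] at *
    linarith
  have hlip : LipschitzOnWith (1 / 2) (rr z σ) (Metric.closedBall (w : ℂ) 1) := by
    apply (convex_closedBall (w : ℂ) 1).lipschitzOnWith_of_nnnorm_hasDerivWithin_le
      (f' := dr z σ)
    · intro x hx
      exact (hasStrictDerivAt_rr z σ (h1 x (hs x hx)).1).hasDerivAt.hasDerivWithinAt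
    · intro x hx
      rw [← NNReal.coe_le_coe]
      simpa using (h1 x (hs x hx)).2.2
  set T : ℂ → ℂ := fun x => w + conj (rr z σ x) with hT
  have hmaps : MapsTo T (Metric.closedBall (w : ℂ) 1) (Metric.closedBall (w : ℂ) 1) := by
    intro x hx
    rw [Metric.mem_closedBall, dist_eq_norm, hT]
    simpa using (h1 x (hs x hx)).2.1
  have hTl : LipschitzOnWith (1 / 2) T (Metric.closedBall (w : ℂ) 1) := by
    apply LipschitzOnWith.of_dist_le_mul
    intro x hx y hy
    have := hlip.dist_le_mul x hx y hy
    rw [dist_eq_norm] at this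
    rw [dist_eq_norm, hT]
    simp only [add_sub_add_left_eq_sub]
    rw [← map_sub, RCLike.norm_conj]
    exact this
  obtain ⟨y, hy, hfix, -⟩ := ContractingWith.exists_fixedPoint' (K := 1 / 2)
    (Metric.isClosed_closedBall (x := (w : ℂ)) (ε := 1)).isComplete hmaps
    ⟨by rw [← NNReal.coe_lt_coe]; norm_num, (hTl.mapsToRestrict hmaps)⟩ (x := (w : ℂ)) (by simp) (edist_ne_top _ _)
  refine ⟨y, ⟨(h1 y (hs y hy)).1, ?_⟩, hs y hy⟩
  have : w + conj (rr z σ y) = y := hfix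
  unfold LL
  linear_combination -this

lemma degree_bound {n : ℕ} (z : Fin n → ℂ) (hz : Function.Injective z)
    (σ : Fin n → ℝ) (hσ : ∀ j, 0 < σ j) {w : ℂ} (hw : Reg z σ w) :
    (1 - n : ℝ) ≤ (∑ x ∈ (reg_finite z hz σ hσ hw).toFinset,
        (if ‖dr z σ x‖ < 1 then (1 : ℝ) else -1)) := by
  classical
  choose U hUo hzU hUd hUi using pole_nbhd z hz σ hσ
  obtain ⟨R, hR⟩ : ∃ R : ℝ, ∀ x : ℂ, R < ‖x‖ →
      (∀ j, x ≠ z j) ∧ ‖rr z σ x‖ ≤ 1 ∧ ‖dr z σ x‖ ≤ 1 / 2 := by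
    have e1 := (tendsto_rr_inf z σ).norm.eventually_le_const (u := 1) (by simp)
    have e2 := (tendsto_dr_inf z σ).norm.eventually_le_const (u := 1 / 2) (by simp)
    have e3 : ∀ᶠ x in cocompact ℂ, ∀ j, x ≠ z j := by
      rw [eventually_all]
      intro j
      exact isCompact_singleton.compl_mem_cocompact
    have e4 := e3.and (e1.and e2)
    rw [← Metric.cobounded_eq_cocompact] at e4
    obtain ⟨R, -, hR⟩ := (hasBasis_cobounded_norm (E := ℂ)).eventually_iff.1 e4
    exact ⟨R, fun x hx => hR (show R ≤ ‖x‖ from hx.le)⟩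
  set L := Metric.closedBall (0 : ℂ) R \ ⋃ j, U j with hL
  have hLc : IsCompact L := (isCompact_closedBall _ _).diff (isOpen_iUnion hUo)
  have hLn : ∀ x ∈ L, ∀ j, x ≠ z j := by
    rintro x hx j rfl
    exact hx.2 (mem_iUnion.2 ⟨j, hzU j⟩)
  obtain ⟨M, hM⟩ := hLc.exists_bound_of_continuousOn (f := LL z σ)
    (fun x hx => (contDiffAt_LL z σ (hLn x hx)).continuousAt.continuousWithinAt)
  set w1 : ℝ := max M (R + 1) + 1 with hw1
  have hdich : ∀ x ∈ Sol z σ w1, (R < ‖x‖ ∧ ‖dr z σ x‖ < 1) ∨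
      ((∃ j, x ∈ U j) ∧ 1 < ‖dr z σ x‖) := by
    intro x hx
    by_cases h1 : R < ‖x‖
    · left
      exact ⟨h1, (hR x h1).2.2.trans_lt (by norm_num)⟩
    · right
      have h2 : x ∉ L := by
        intro h
        have := hM x h
        rw [hx.2, Complex.norm_real] at this
        have h3 := (Real.le_norm_self w1).trans this
        have h4 := le_max_left M (R + 1)
        linarith
      have h3 : x ∈ ⋃ j, U j := by
        by_contra h
        exact h2 ⟨by simpa using not_lt.1 h1, h⟩
      obtain ⟨j, hj⟩ := mem_iUnion.1 h3
      exact ⟨⟨j, hj⟩, hUd j x hj (hx.1 j)⟩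
  have hreg1 : Reg z σ (w1 : ℂ) := by
    intro x hx
    rcases hdich x hx with h | h
    · exact h.2.ne
    · exact h.2.ne'
  rw [degree_const z hz σ hσ hw hreg1]
  set S := (reg_finite z hz σ hσ hreg1).toFinset with hS
  have hmS : ∀ x, x ∈ S ↔ x ∈ Sol z σ w1 := fun x => Set.Finite.mem_toFinset _
  rw [Finset.sum_ite, Finset.sum_const, Finset.sum_const]
  have hp : 1 ≤ (S.filter (fun x => ‖dr z σ x‖ < 1)).card := by
    obtain ⟨x, hx, hxR⟩ := exists_far_sol z σ w1 R hR (by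
      have := le_max_right M (R + 1)
      linarith)
    rw [Nat.one_le_iff_ne_zero, ← Nat.pos_iff_ne_zero, Finset.card_pos]
    exact ⟨x, Finset.mem_filter.2 ⟨(hmS x).2 hx, (hR x hxR).2.2.trans_lt (by norm_num)⟩⟩
  have hm : (S.filter (fun x => ¬ ‖dr z σ x‖ < 1)).card ≤ n := by
    have h1 : ∀ x ∈ S.filter (fun x => ¬ ‖dr z σ x‖ < 1), ∃ j, x ∈ U j := by
      intro x hx
      obtain ⟨hx1, hx2⟩ := Finset.mem_filter.1 hx
      rcases hdich x ((hmS x).1 hx1) with h | h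
      · exact absurd h.2 hx2
      · exact h.1
    rcases Nat.eq_zero_or_pos n with h0 | h0
    · subst h0
      rw [Nat.le_zero, Finset.card_eq_zero, Finset.eq_empty_iff_forall_notMem]
      intro x hx
      exact (h1 x hx).choose.elim0
    have hne : Nonempty (Fin n) := ⟨⟨0, h0⟩⟩
    choose! J hJ using h1
    have := Finset.card_le_card_of_injOn (s := S.filter (fun x => ¬ ‖dr z σ x‖ < 1))
      (t := (Finset.univ : Finset (Fin n))) J (fun _ _ => Finset.mem_univ _) (by
        intro x hx y hy hxy
        have hx1 := (hmS x).1 (Finset.mem_filter.1 hx).1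
        have hy1 := (hmS y).1 (Finset.mem_filter.1 hy).1
        have hxU := hJ x hx
        have hyU := hJ y hy
        rw [← hxy] at hyU
        exact hUi (J x) x hxU y hyU (hx1.1 _) (hy1.1 _) (hx1.2.trans hy1.2.symm))
    simpa using this
  have hp' : (1 : ℝ) ≤ ((S.filter (fun x => ‖dr z σ x‖ < 1)).card : ℝ) := by exact_mod_cast hp
  have hm' : ((S.filter (fun x => ¬ ‖dr z σ x‖ < 1)).card : ℝ) ≤ n := by exact_mod_cast hm
  simp only [nsmul_eq_mul]
  linarith


lemma reg_bound {n : ℕ} (hn : 2 ≤ n) (z : Fin n → ℂ) (hz : Function.Injective z)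
    (σ : Fin n → ℝ) (hσ : ∀ j, 0 < σ j) {w : ℂ} (hw : Reg z σ w)
    (T : Finset ℂ) (hT : ∀ x ∈ T, x ∈ Sol z σ w) : T.card ≤ 5 * n - 5 := by
  classical
  set S := (reg_finite z hz σ hσ hw).toFinset with hS
  have hmS : ∀ x, x ∈ S ↔ x ∈ Sol z σ w := fun x => Set.Finite.mem_toFinset _
  have hTS : T.card ≤ S.card := Finset.card_le_card fun x hx => (hmS x).2 (hT x hx)
  have h1 := degree_bound z hz σ hσ hw
  rw [← hS, Finset.sum_ite, Finset.sum_const, Finset.sum_const] at h1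
  have h2 := attracting_card hn z hz σ hσ w (S.filter (fun x => ‖dr z σ x‖ < 1)) (by
    intro x hx
    obtain ⟨hx1, hx2⟩ := Finset.mem_filter.1 hx
    exact ⟨(hmS x).1 hx1, hx2⟩)
  have h3 := Finset.card_filter_add_card_filter_not (s := S) (fun x => ‖dr z σ x‖ < 1)
  simp only [nsmul_eq_mul] at h1
  have h4 : ((S.filter (fun x => ¬ ‖dr z σ x‖ < 1)).card : ℝ) + 1 ≤
      (S.filter (fun x => ‖dr z σ x‖ < 1)).card + n := by linarith
  have h5 : ((S.filter (fun x => ¬ ‖dr z σ x‖ < 1)).card) + 1 ≤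
      (S.filter (fun x => ‖dr z σ x‖ < 1)).card + n := by exact_mod_cast h4
  omega


lemma polar_null (N : Set ℂ) (hN : volume N = 0) :
    ∀ᵐ θ ∂(volume.restrict (Ioo (-Real.pi) Real.pi)), ∀ᵐ (r : ℝ) ∂(volume.restrict (Ioi (0 : ℝ))),
      (r : ℂ) * (Real.cos θ + Real.sin θ * I) ∉ N := by
  set M := toMeasurable volume N with hM
  have hMm : MeasurableSet M := measurableSet_toMeasurable _ _
  have hM0 : volume M = 0 := by rw [hM, measure_toMeasurable, hN]
  have hNM : N ⊆ M := subset_toMeasurable _ _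
  set f : ℝ × ℝ → ℂ := fun p => (p.1 : ℂ) * (Real.cos p.2 + Real.sin p.2 * I) with hf
  have hfm : Measurable f := by
    have : Continuous f := by fun_prop
    exact this.measurable
  have h1 := Complex.lintegral_comp_polarCoord_symm (M.indicator 1)
  rw [lintegral_indicator_one hMm, hM0] at h1
  have h2 : ∀ᵐ p ∂(volume.restrict polarCoord.target), f p ∉ M := by
    rw [lintegral_eq_zero_iff] at h1
    · filter_upwards [h1, ae_restrict_mem polarCoord.open_target.measurableSet] with p hp hpt hpM
      have hp0 : 0 < p.1 := by
        rw [polarCoord_target] at hpt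
        exact hpt.1
      rw [Complex.polarCoord_symm_apply] at hp
      have : M.indicator (1 : ℂ → ENNReal) ((p.1 : ℂ) * (Real.cos p.2 + Real.sin p.2 * I)) = 1 := by
        rw [indicator_of_mem (show _ ∈ M from hpM)]
        rfl
      rw [this] at hp
      simp at hp
      linarith
    · refine Measurable.smul (f := fun p : ℝ × ℝ => ENNReal.ofReal p.1) ?_ ?_
      · exact ENNReal.measurable_ofReal.comp measurable_fst
      · have : (fun p : ℝ × ℝ => M.indicator (1 : ℂ → ENNReal) (Complex.polarCoord.symm p)) =
            fun p => M.indicator (1 : ℂ → ENNReal) (f p) := by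
          ext p
          rw [Complex.polarCoord_symm_apply]
        rw [this]
        exact (measurable_one.indicator hMm).comp hfm
  rw [polarCoord_target, Measure.volume_eq_prod, ← Measure.prod_restrict] at h2
  have h3 := Measure.ae_ae_of_ae_prod h2
  rw [Measure.ae_ae_comm] at h3
  · filter_upwards [h3] with θ hθ
    filter_upwards [hθ] with r hr hrN
    exact hr (hNM hrN)
  · exact hfm hMm.compl

lemma crit_null {n : ℕ} (z : Fin n → ℂ) (σ : Fin n → ℝ) :
    volume (LL z σ '' {x | (∀ j, x ≠ z j) ∧ ‖dr z σ x‖ = 1}) = 0 := by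
  apply addHaar_image_eq_zero_of_det_fderivWithin_eq_zero volume (f' := fun x => DL (dr z σ x))
  · intro x hx
    exact (hasStrictFDerivAt_LL z σ hx.1).hasFDerivAt.hasFDerivWithinAt
  · intro x hx
    rw [DL_det, hx.2]
    norm_num

lemma bad_dir_null (d : ℂ) : ∀ᵐ θ : ℝ,
    conj ((Real.cos θ : ℂ) + Real.sin θ * I) + (Real.cos θ + Real.sin θ * I) * d ≠ 0 := by
  have hc : ({θ : ℝ | Complex.exp ((2 * I) * θ) = -d⁻¹}).Countable := by
    have h1 : (Complex.exp ⁻¹' {-d⁻¹}).Countable := (countable_singleton _).preimage_cexp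
    have h2 : Function.Injective (fun θ : ℝ => (2 * I) * (θ : ℂ)) := by
      intro a b hab
      have h3 : (2 * I : ℂ) ≠ 0 := mul_ne_zero two_ne_zero I_ne_zero
      have := mul_left_cancel₀ h3 hab
      exact_mod_cast this
    exact h1.preimage h2
  rw [ae_iff]
  refine measure_mono_null ?_ (hc.measure_zero volume)
  intro θ hθ
  have hθ' : conj ((Real.cos θ : ℂ) + Real.sin θ * I) + (Real.cos θ + Real.sin θ * I) * d = 0 := by
    by_contra h
    exact hθ h
  have e : (Real.cos θ : ℂ) + Real.sin θ * I = Complex.exp (θ * I) := by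
    rw [Complex.exp_mul_I]
    push_cast
    rfl
  rw [e, ← Complex.exp_conj] at hθ'
  simp only [map_mul, Complex.conj_ofReal, Complex.conj_I] at hθ'
  change Complex.exp ((2 * I) * θ) = -d⁻¹
  have h4 : Complex.exp ((2 * I) * θ) * d = -1 := by
    have e1 : Complex.exp ((2 * I) * θ) = Complex.exp (θ * I) * Complex.exp (θ * I) := by
      rw [← Complex.exp_add]; congr 1; ring
    have e2 : Complex.exp (θ * I) * Complex.exp (θ * -I) = 1 := by
      rw [← Complex.exp_add, ← Complex.exp_zero]; congr 1; ring
    rw [e1]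
    linear_combination Complex.exp (θ * I) * hθ' - e2
  have hd : d ≠ 0 := by
    rintro rfl
    simp at h4
  field_simp
  exact h4

lemma two_pts {n : ℕ} (z : Fin n → ℂ) (σ : Fin n → ℝ) {w ζ : ℂ} (hfin : (Sol z σ w).Finite)
    (hζ : ζ ∈ Sol z σ w) {u : ℂ} (hu : ‖u‖ = 1) (hb : conj u + u * dr z σ ζ ≠ 0)
    {V : Set ℂ} (hV : V ∈ 𝓝 ζ) :
    ∃ m > 0, ∀ t : ℝ, 0 < t → t < m → ∃ x1 x2, x1 ∈ V ∧ x2 ∈ V ∧ x1 ≠ x2 ∧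
      (x1 ∈ Sol z σ (w + t * u) ∨ x1 ∈ Sol z σ (w - t * u)) ∧
      (x2 ∈ Sol z σ (w + t * u) ∨ x2 ∈ Sol z σ (w - t * u)) := by
  set b := conj u + u * dr z σ ζ with hbdef
  set Ψ : ℂ → ℂ := fun x => ((b * (x - ζ)).re : ℂ) + ((conj u * (LL z σ x - w)).im : ℂ) * I with hΨ
  have hΨd : HasStrictFDerivAt Ψ ((ContinuousLinearEquiv.smulLeft (Units.mk0 b hb) :
      ℂ ≃L[ℝ] ℂ) : ℂ →L[ℝ] ℂ) ζ := by
    have h1 : HasStrictFDerivAt (fun x : ℂ => b * (x - ζ)) (ContinuousLinearMap.mul ℝ ℂ b) ζ :=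
      (ContinuousLinearMap.mul ℝ ℂ b).hasStrictFDerivAt.comp ζ
        ((hasStrictFDerivAt_id ζ).sub_const ζ)
    have h2 := Complex.ofRealCLM.hasStrictFDerivAt.comp ζ (Complex.reCLM.hasStrictFDerivAt.comp ζ h1)
    have h3 : HasStrictFDerivAt (fun x : ℂ => conj u * (LL z σ x - w))
        ((ContinuousLinearMap.mul ℝ ℂ (conj u)).comp (DL (dr z σ ζ))) ζ :=
      (ContinuousLinearMap.mul ℝ ℂ (conj u)).hasStrictFDerivAt.comp ζ
        ((hasStrictFDerivAt_LL z σ hζ.1).sub_const w)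
    have h4 := Complex.ofRealCLM.hasStrictFDerivAt.comp ζ (Complex.imCLM.hasStrictFDerivAt.comp ζ h3)
    have h5 : HasStrictFDerivAt Ψ _ ζ := h2.add (h4.mul_const I)
    refine h5.congr_fderiv ?_
    ext e
    have e1 : (conj u * (e - conj (dr z σ ζ * e))).im = (b * e).im := by
      rw [hbdef]
      simp
      ring
    have e2 : ((ContinuousLinearEquiv.smulLeft (Units.mk0 b hb) : ℂ ≃L[ℝ] ℂ) : ℂ →L[ℝ] ℂ) e
        = b * e := rfl
    rw [e2]
    conv_rhs => rw [← Complex.re_add_im (b * e), ← e1]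
    simp [DL_apply, mul_comm]
  set P := hΨd.toOpenPartialHomeomorph Ψ with hP
  have hPΨ : ∀ x, P x = Ψ x := fun x => rfl
  have hζP : ζ ∈ P.source := hΨd.mem_toOpenPartialHomeomorph_source
  have hΨζ : Ψ ζ = 0 := by simp [hΨ, hζ.2]
  have h0t : (0 : ℂ) ∈ P.target := by
    rw [← hΨζ]
    exact P.map_source hζP
  have hQ0 : P.symm 0 = ζ := by
    rw [← hΨζ]
    exact P.left_inv hζP
  have hsep : ∀ᶠ x in 𝓝 ζ, x ∈ V ∧ (∀ j, x ≠ z j) ∧ (x ∈ Sol z σ w → x = ζ) := by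
    have h1 : ∀ᶠ x in 𝓝 ζ, x ∉ (Sol z σ w \ {ζ}) :=
      (hfin.subset sdiff_subset).isClosed.isOpen_compl.mem_nhds (by simp)
    filter_upwards [hV, eventually_nonpole z hζ.1, h1] with x hx1 hx2 hx3
    refine ⟨hx1, hx2, fun hx => ?_⟩
    by_contra hne
    exact hx3 ⟨hx, hne⟩
  have hQc : ContinuousAt P.symm 0 := P.continuousAt_symm h0t
  have hall : ∀ᶠ y in 𝓝 (0 : ℂ), y ∈ P.target ∧ (P.symm y ∈ V ∧ (∀ j, P.symm y ≠ z j) ∧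
      (P.symm y ∈ Sol z σ w → P.symm y = ζ)) := by
    have h1 : ∀ᶠ y in 𝓝 (0 : ℂ), y ∈ P.target := P.open_target.mem_nhds h0t
    rw [← hQ0] at hsep
    exact h1.and (by simpa only [hQ0] using hQc.eventually hsep)
  obtain ⟨η0, hη0, hball⟩ := Metric.eventually_nhds_iff_ball.1 hall
  set γ : ℝ → ℂ := fun s => P.symm (s : ℂ) with hγ
  set η := η0 / 2 with hη
  have hηpos : 0 < η := by positivity
  have hmem : ∀ s : ℝ, s ∈ Icc (-η) η → (s : ℂ) ∈ Metric.ball (0 : ℂ) η0 := by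
    intro s hs
    rw [Metric.mem_ball, dist_zero_right, Complex.norm_real, Real.norm_eq_abs]
    have := abs_le.2 hs
    linarith
  have hΨγ : ∀ s : ℝ, s ∈ Icc (-η) η → Ψ (γ s) = s := fun s hs =>
    P.right_inv (hball _ (hmem s hs)).1
  have hγinj : ∀ s ∈ Icc (-η) η, ∀ s' ∈ Icc (-η) η, γ s = γ s' → s = s' := by
    intro s hs s' hs' h
    have h1 := hΨγ s hs
    rw [h, hΨγ s' hs'] at h1
    exact_mod_cast h1.symm
  have hγc : ContinuousOn γ (Icc (-η) η) := by
    intro s hs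
    have h1 : ContinuousAt P.symm (s : ℂ) := P.continuousAt_symm (hball _ (hmem s hs)).1
    exact (ContinuousAt.comp (f := fun s : ℝ => (s : ℂ)) h1
      Complex.continuous_ofReal.continuousAt).continuousWithinAt
  set τ : ℝ → ℝ := fun s => (conj u * (LL z σ (γ s) - w)).re with hτ
  have hLLγ : ∀ s ∈ Icc (-η) η, LL z σ (γ s) = w + τ s * u := by
    intro s hs
    have h1 := congrArg Complex.im (hΨγ s hs)
    have h2 : (conj u * (LL z σ (γ s) - w)).im = 0 := by
      simpa [hΨ] using h1
    have h3 : conj u * (LL z σ (γ s) - w) = τ s := by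
      apply Complex.ext
      · simp [hτ]
      · rw [h2, Complex.ofReal_im]
    have h4 : u * conj u = 1 := by
      rw [Complex.mul_conj', hu]
      simp
    linear_combination u * h3 - (LL z σ (γ s) - w) * h4
  have hτc : ContinuousOn τ (Icc (-η) η) := by
    intro s hs
    have h1 : ContinuousAt (LL z σ) (γ s) :=
      (contDiffAt_LL z σ (hball _ (hmem s hs)).2.2.1).continuousAt
    have h2 : ContinuousWithinAt (fun s => LL z σ (γ s)) (Icc (-η) η) s :=
      ContinuousAt.comp_continuousWithinAt (f := γ) h1 (hγc s hs)
    exact Complex.continuous_re.continuousAt.comp_continuousWithinAt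
      (continuousWithinAt_const.mul (h2.sub continuousWithinAt_const))
  have hzero : (0 : ℝ) ∈ Icc (-η) η := ⟨by linarith, hηpos.le⟩
  have hγ0 : γ 0 = ζ := by simp [hγ, hQ0]
  have hτ0 : τ 0 = 0 := by simp [hτ, hγ0, hζ.2]
  have hτne : ∀ s ∈ Icc (-η) η, s ≠ 0 → τ s ≠ 0 := by
    intro s hs hs0 h
    have h1 : γ s ∈ Sol z σ w := ⟨(hball _ (hmem s hs)).2.2.1, by rw [hLLγ s hs, h]; simp⟩
    have h2 := (hball _ (hmem s hs)).2.2.2 h1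
    exact hs0 (hγinj s hs 0 hzero (h2.trans hγ0.symm))
  have hSol : ∀ s ∈ Icc (-η) η, ∀ t : ℝ, |τ s| = t →
      (γ s ∈ Sol z σ (w + t * u) ∨ γ s ∈ Sol z σ (w - t * u)) := by
    intro s hs t ht
    have hnp := (hball _ (hmem s hs)).2.2.1
    rcases abs_choice (τ s) with h | h
    · left
      exact ⟨hnp, by rw [hLLγ s hs, ← ht, h]⟩
    · right
      exact ⟨hnp, by rw [hLLγ s hs, ← ht, h]; push_cast; ring⟩
  have hme : -η ∈ Icc (-η) η := ⟨le_refl _, by linarith⟩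
  have hpe : η ∈ Icc (-η) η := ⟨by linarith, le_refl _⟩
  have hp := abs_pos.2 (hτne η hpe hηpos.ne')
  have hm := abs_pos.2 (hτne (-η) hme (neg_ne_zero.2 hηpos.ne'))
  refine ⟨min |τ η| |τ (-η)|, lt_min hp hm, fun t ht htm => ?_⟩
  have hac : ContinuousOn (fun s => |τ s|) (Icc (-η) η) := hτc.abs
  obtain ⟨s1, hs1, hs1t⟩ : t ∈ (fun s => |τ s|) '' Icc 0 η := by
    apply intermediate_value_Icc hηpos.le (hac.mono (Icc_subset_Icc (by linarith) le_rfl))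
    simp only [hτ0, abs_zero]
    exact ⟨ht.le, (htm.trans_le (min_le_left _ _)).le⟩
  obtain ⟨s2, hs2, hs2t⟩ : t ∈ (fun s => |τ s|) '' Icc (-η) 0 := by
    apply intermediate_value_Icc' (by linarith) (hac.mono (Icc_subset_Icc le_rfl hηpos.le))
    simp only [hτ0, abs_zero]
    exact ⟨ht.le, (htm.trans_le (min_le_right _ _)).le⟩
  have hs1' : s1 ∈ Icc (-η) η := ⟨by linarith [hs1.1], hs1.2⟩
  have hs2' : s2 ∈ Icc (-η) η := ⟨hs2.1, by linarith [hs2.2]⟩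
  refine ⟨γ s1, γ s2, (hball _ (hmem s1 hs1')).2.1, (hball _ (hmem s2 hs2')).2.1, ?_,
    hSol s1 hs1' t hs1t, hSol s2 hs2' t hs2t⟩
  intro h
  have h1 := hγinj s1 hs1' s2 hs2' h
  have h2 : s1 = 0 := le_antisymm (by rw [h1]; exact hs2.2) hs1.1
  rw [h2] at hs1t
  simp only [hτ0, abs_zero] at hs1t
  linarith


lemma count_two {n : ℕ} (z : Fin n → ℂ) (σ : Fin n → ℝ) {w : ℂ} (hfin : (Sol z σ w).Finite)
    {u : ℂ} (hu : ‖u‖ = 1) (hb : ∀ ζ ∈ Sol z σ w, conj u + u * dr z σ ζ ≠ 0) :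
    ∃ m > 0, ∀ t : ℝ, 0 < t → t < m → ∃ T : Finset ℂ,
      (∀ x ∈ T, x ∈ Sol z σ (w + t * u) ∨ x ∈ Sol z σ (w - t * u)) ∧
      2 * (Sol z σ w).ncard ≤ T.card := by
  classical
  obtain ⟨V, hV, hVd⟩ := hfin.t2_separation
  have h := fun ζ (hζ : ζ ∈ Sol z σ w) =>
    two_pts z σ hfin hζ hu (hb ζ hζ) ((hV ζ).2.mem_nhds (hV ζ).1)
  choose! m hm0 hm using h
  obtain ⟨M, hM0, hM⟩ : ∃ M > 0, ∀ ζ ∈ Sol z σ w, M ≤ m ζ := by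
    rcases (Sol z σ w).eq_empty_or_nonempty with he | hne
    · exact ⟨1, one_pos, by simp [he]⟩
    · obtain ⟨ζ, hζ, hmin⟩ := Set.exists_min_image (Sol z σ w) m hfin hne
      exact ⟨m ζ, hm0 ζ hζ, hmin⟩
  refine ⟨M, hM0, fun t ht htM => ?_⟩
  have h2 := fun ζ (hζ : ζ ∈ Sol z σ w) => hm ζ hζ t ht (htM.trans_le (hM ζ hζ))
  choose! x1 x2 hx1 hx2 hne hs1 hs2 using h2
  set S := hfin.toFinset with hS
  have hmS : ∀ x, x ∈ S ↔ x ∈ Sol z σ w := fun x => hfin.mem_toFinset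
  have hinj1 : ∀ y1 y2 : ℂ → ℂ, (∀ ζ ∈ Sol z σ w, y1 ζ ∈ V ζ) → (∀ ζ ∈ Sol z σ w, y2 ζ ∈ V ζ) →
      ∀ ζ ∈ Sol z σ w, ∀ ξ ∈ Sol z σ w, y1 ζ = y2 ξ → ζ = ξ := by
    intro y1 y2 h1 h2 ζ hζ ξ hξ h
    by_contra hne
    have := hVd hζ hξ hne
    exact Set.disjoint_left.1 this (h1 ζ hζ) (h ▸ h2 ξ hξ)
  refine ⟨S.image x1 ∪ S.image x2, ?_, ?_⟩
  · intro x hx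
    rcases Finset.mem_union.1 hx with hx | hx
    · obtain ⟨ζ, hζ, rfl⟩ := Finset.mem_image.1 hx
      exact hs1 ζ ((hmS ζ).1 hζ)
    · obtain ⟨ζ, hζ, rfl⟩ := Finset.mem_image.1 hx
      exact hs2 ζ ((hmS ζ).1 hζ)
  · rw [Finset.card_union_of_disjoint, Finset.card_image_of_injOn, Finset.card_image_of_injOn,
      Set.ncard_eq_toFinset_card _ hfin, two_mul]
    · intro ζ hζ ξ hξ h
      exact hinj1 x2 x2 hx2 hx2 ζ ((hmS ζ).1 hζ) ξ ((hmS ξ).1 hξ) h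
    · intro ζ hζ ξ hξ h
      exact hinj1 x1 x1 hx1 hx1 ζ ((hmS ζ).1 hζ) ξ ((hmS ξ).1 hξ) h
    · rw [Finset.disjoint_left]
      intro x h1 h2
      obtain ⟨ζ, hζ, rfl⟩ := Finset.mem_image.1 h1
      obtain ⟨ξ, hξ, h⟩ := Finset.mem_image.1 h2
      have hζ' := (hmS ζ).1 hζ
      have := hinj1 x1 x2 hx1 hx2 ζ hζ' ξ ((hmS ξ).1 hξ) h.symm
      subst this
      exact hne ζ hζ' h.symm

lemma sol_bound {n : ℕ} (hn : 2 ≤ n) (z : Fin n → ℂ) (hz : Function.Injective z)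
    (σ : Fin n → ℝ) (hσ : ∀ j, 0 < σ j) (w : ℂ) (hfin : (Sol z σ w).Finite) :
    (Sol z σ w).ncard ≤ 5 * n - 5 := by
  classical
  set K := LL z σ '' {x | (∀ j, x ≠ z j) ∧ ‖dr z σ x‖ = 1} with hK
  have hK0 : volume K = 0 := crit_null z σ
  set N : Set ℂ := (fun y => w + y) ⁻¹' K ∪ (fun y => w - y) ⁻¹' K with hN
  have hN0 : volume N = 0 := by
    rw [hN, measure_union_null_iff]
    constructor
    · rw [measure_preimage_add]
      exact hK0
    · exact (Measure.measurePreserving_sub_left volume w).quasiMeasurePreserving.preimage_null hK0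
  have hreg : ∀ y, y ∉ K → Reg z σ y := by
    intro y hy x hx h
    exact hy ⟨x, ⟨hx.1, h⟩, hx.2⟩
  have h1 := polar_null N hN0
  have h2 : ∀ᵐ θ ∂(volume.restrict (Ioo (-Real.pi) Real.pi)), ∀ ζ ∈ hfin.toFinset,
      conj ((Real.cos θ : ℂ) + Real.sin θ * I) + (Real.cos θ + Real.sin θ * I) * dr z σ ζ ≠ 0 := by
    apply ae_restrict_of_ae
    rw [Filter.eventually_all_finset]
    intro ζ _
    exact bad_dir_null _
  have hne : (ae (volume.restrict (Ioo (-Real.pi) Real.pi))).NeBot := by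
    rw [ae_neBot, Ne, Measure.restrict_eq_zero, Real.volume_Ioo]
    have := Real.pi_pos
    simp
    linarith
  obtain ⟨θ, hθ1, hθ2⟩ := (h1.and h2).exists
  set u : ℂ := (Real.cos θ : ℂ) + Real.sin θ * I with hu
  have hun : ‖u‖ = 1 := by
    have : u = Complex.exp (θ * I) := by
      rw [Complex.exp_mul_I, hu]
      push_cast
      rfl
    rw [this, Complex.norm_exp_ofReal_mul_I]
  obtain ⟨m, hm0, hm⟩ := count_two z σ hfin hun
    (fun ζ hζ => hθ2 ζ (hfin.mem_toFinset.2 hζ))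
  obtain ⟨t, ht0, htm, htN⟩ : ∃ t : ℝ, 0 < t ∧ t < m ∧ (t : ℂ) * u ∉ N := by
    have h3 : ∀ᵐ (r : ℝ) ∂(volume.restrict (Ioo 0 m)), (r : ℂ) * u ∉ N :=
      ae_restrict_of_ae_restrict_of_subset Ioo_subset_Ioi_self hθ1
    have h4 := h3.and (ae_restrict_mem measurableSet_Ioo)
    have hne : (ae (volume.restrict (Ioo 0 m))).NeBot := by
      rw [ae_neBot, Ne, Measure.restrict_eq_zero, Real.volume_Ioo]
      simpa using hm0
    obtain ⟨t, h5, h6⟩ := h4.exists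
    exact ⟨t, h6.1, h6.2, h5⟩
  obtain ⟨T, hT, hcard⟩ := hm t ht0 htm
  have hr1 : Reg z σ (w + t * u) := hreg _ fun h => htN (Or.inl h)
  have hr2 : Reg z σ (w - t * u) := hreg _ fun h => htN (Or.inr h)
  have c1 := reg_bound hn z hz σ hσ hr1 (T.filter (fun x => x ∈ Sol z σ (w + t * u)))
    (fun x hx => (Finset.mem_filter.1 hx).2)
  have c2 := reg_bound hn z hz σ hσ hr2 (T.filter (fun x => ¬ x ∈ Sol z σ (w + t * u)))
    (fun x hx => (hT x (Finset.mem_filter.1 hx).1).resolve_left (Finset.mem_filter.1 hx).2)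
  have c3 := Finset.card_filter_add_card_filter_not (s := T) (fun x => x ∈ Sol z σ (w + t * u))
  omega

end PML

/-- The number of images produced by an `n`-point-mass planar lens without shear
is at most `5n - 5` (Khavinson–Neumann, conjectured by Rhie). -/
theorem point_mass_lens_image_bound (n : ℕ) (hn : 2 ≤ n)
    (z : Fin n → ℂ) (hz : Function.Injective z)
    (σ : Fin n → ℝ) (hσ : ∀ j, 0 < σ j) (w : ℂ)
    (S : Set ℂ)
    (hS : S = {p : ℂ | (∀ j, p ≠ z j) ∧
      w = p - ∑ j, (σ j : ℂ) / (starRingEnd ℂ p - starRingEnd ℂ (z j))})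
    (hfin : S.Finite) :
    S.ncard ≤ 5 * n - 5 := by
  have h : S = PML.Sol z σ w := by
    rw [hS]
    ext p
    have e : p - ∑ j, (σ j : ℂ) / (starRingEnd ℂ p - starRingEnd ℂ (z j)) = PML.LL z σ p := by
      unfold PML.LL PML.rr
      simp [map_sum, map_div₀, map_sub]
    constructor
    · rintro ⟨h1, h2⟩
      exact ⟨h1, by rw [← e, ← h2]⟩
    · rintro ⟨h1, h2⟩
      exact ⟨h1, by rw [e, h2]⟩
  rw [h] at hfin ⊢
  exact PML.sol_bound hn z hz σ hσ w hfin
end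

section
/- Let n ≥ 2, let z₁, …, zₙ be distinct points of ℂ and σ₁, …, σₙ positive real numbers, and let w ∈ ℂ. Define F : ℂ \ {z₁, …, zₙ} → ℂ by F(z) = z − Σⱼ σⱼ/(conj(z) − conj(zⱼ)) − w, and let S be its zero set. Assume S is finite and that at every z₀ ∈ S the real Fréchet derivative of F (viewing ℂ as ℝ²) is invertible. Then the cardinality of S is even when n is odd and odd when n is even. -/
open Complex
namespace Lens
open Polynomial Asymptotics Filter Topology

/-- the rational function of the lens -/
noncomputable def r {n : ℕ} (z : Fin n → ℂ) (σ : Fin n → ℝ) (p : ℂ) : ℂ :=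
  ∑ j, (σ j : ℂ) / (p - z j)

/-- the antiholomorphic map whose fixed points are the images -/
noncomputable def tau {n : ℕ} (z : Fin n → ℂ) (σ : Fin n → ℝ) (w : ℂ) (p : ℂ) : ℂ :=
  w + starRingEnd ℂ (r z σ p)

noncomputable def Q {n : ℕ} (z : Fin n → ℂ) : ℂ[X] := ∏ j, (X - C (z j))

noncomputable def E {n : ℕ} (z : Fin n → ℂ) (j : Fin n) : ℂ[X] :=
  ∏ k ∈ Finset.univ.erase j, (X - C (z k))

noncomputable def P {n : ℕ} (z : Fin n → ℂ) (σ : Fin n → ℝ) : ℂ[X] :=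
  ∑ j, C (σ j : ℂ) * E z j

noncomputable def A {n : ℕ} (z : Fin n → ℂ) (σ : Fin n → ℝ) (w : ℂ) (j : Fin n) : ℂ[X] :=
  C (starRingEnd ℂ w - starRingEnd ℂ (z j)) * Q z + P z σ

noncomputable def N {n : ℕ} (z : Fin n → ℂ) (σ : Fin n → ℝ) (w : ℂ) : ℂ[X] :=
  (X - C w) * ∏ j, A z σ w j -
    Q z * ∑ j, C (σ j : ℂ) * ∏ k ∈ Finset.univ.erase j, A z σ w k

variable {n : ℕ} (z : Fin n → ℂ) (σ : Fin n → ℝ) (w : ℂ)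

lemma conj_sub_ne {a b : ℂ} (h : a ≠ b) : starRingEnd ℂ (a - b) ≠ 0 :=
  (_root_.map_ne_zero _).mpr (sub_ne_zero.mpr h)

lemma theta_one {f : ℂ → ℂ} {l : Filter ℂ} {c : ℂ} (hc : c ≠ 0) (h : Tendsto f l (𝓝 c)) :
    f =Θ[l] fun _ => (1 : ℂ) :=
  ((isEquivalent_const_iff_tendsto hc).mpr h).isTheta.trans (isTheta_const_const hc one_ne_zero)

lemma Q_eval_ne {p : ℂ} (hp : ∀ j, p ≠ z j) : (Q z).eval p ≠ 0 := by
  simp only [Q, eval_prod, eval_sub, eval_X, eval_C]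
  exact Finset.prod_ne_zero_iff.mpr fun j _ => sub_ne_zero.mpr (hp j)

lemma Q_eq (j : Fin n) : Q z = (X - C (z j)) * E z j := by
  rw [Q, E, Finset.mul_prod_erase _ (fun k => X - C (z k)) (Finset.mem_univ j)]

lemma P_eval {p : ℂ} (hp : ∀ j, p ≠ z j) : (P z σ).eval p = (Q z).eval p * r z σ p := by
  rw [P, r, eval_finsetSum, Finset.mul_sum]
  refine Finset.sum_congr rfl fun j _ => ?_
  rw [Q_eq z j]
  have := sub_ne_zero.mpr (hp j)
  simp only [eval_mul, eval_sub, eval_X, eval_C]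
  field_simp

lemma conj_tau (p : ℂ) : starRingEnd ℂ (tau z σ w p) = starRingEnd ℂ w + r z σ p := by
  simp [tau]

lemma A_eval {p : ℂ} (hp : ∀ j, p ≠ z j) (j : Fin n) :
    (A z σ w j).eval p = (Q z).eval p * starRingEnd ℂ (tau z σ w p - z j) := by
  rw [A, eval_add, eval_mul, P_eval z σ hp, eval_C, map_sub, conj_tau]; ring

lemma tau_tau (p : ℂ) : tau z σ w (tau z σ w p) =
    w + ∑ j, (σ j : ℂ) / starRingEnd ℂ (tau z σ w p - z j) := by
  conv_lhs => rw [tau]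
  simp [r]

lemma N_eval {p : ℂ} (hp : ∀ j, p ≠ z j) (hp' : ∀ j, tau z σ w p ≠ z j) :
    (N z σ w).eval p = (∏ j, (A z σ w j).eval p) * (p - tau z σ w (tau z σ w p)) := by
  have hA : ∀ j, (A z σ w j).eval p ≠ 0 := fun j => by
    rw [A_eval z σ w hp]
    exact mul_ne_zero (Q_eval_ne z hp) (conj_sub_ne (hp' j))
  rw [N, tau_tau]
  simp only [eval_sub, eval_mul, eval_X, eval_C, eval_prod, eval_finsetSum]
  rw [← sub_sub, mul_sub, Finset.mul_sum, Finset.mul_sum, mul_comm]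
  congr 1
  refine Finset.sum_congr rfl fun j _ => ?_
  rw [← Finset.mul_prod_erase _ _ (Finset.mem_univ j), A_eval z σ w hp j]
  have : starRingEnd ℂ (tau z σ w p - z j) ≠ 0 := conj_sub_ne (hp' j)
  field_simp

lemma root_good (hz : Function.Injective z) (hσ : ∀ j, 0 < σ j)
    {p : ℂ} (hp : ∀ j, p ≠ z j) (h : (N z σ w).eval p = 0) :
    (∀ j, tau z σ w p ≠ z j) ∧ tau z σ w (tau z σ w p) = p := by
  have h1 : ∀ j, tau z σ w p ≠ z j := by
    intro j hj
    have hAj : (A z σ w j).eval p = 0 := by rw [A_eval z σ w hp, hj]; simp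
    have hAk : ∀ k, k ≠ j → (A z σ w k).eval p ≠ 0 := fun k hk => by
      rw [A_eval z σ w hp, hj]
      exact mul_ne_zero (Q_eval_ne z hp)
        (conj_sub_ne fun h => hk (hz h).symm)
    rw [N] at h
    simp only [eval_sub, eval_mul, eval_X, eval_C, eval_prod, eval_finsetSum] at h
    rw [Finset.prod_eq_zero (Finset.mem_univ j) hAj, mul_zero, zero_sub, neg_eq_zero,
      Finset.sum_eq_single j] at h
    · refine mul_ne_zero (Q_eval_ne z hp) (mul_ne_zero ?_ ?_) h
      · exact_mod_cast (hσ j).ne'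
      · exact Finset.prod_ne_zero_iff.mpr fun k hk => hAk k (Finset.ne_of_mem_erase hk)
    · intro k _ hk
      rw [Finset.prod_eq_zero (i := j) _ hAj, mul_zero]
      exact Finset.mem_erase.mpr ⟨hk.symm, Finset.mem_univ _⟩
    · simp
  refine ⟨h1, ?_⟩
  rw [N_eval z σ w hp h1] at h
  rcases mul_eq_zero.mp h with h | h
  · exfalso
    obtain ⟨j, -, hj⟩ := Finset.prod_eq_zero_iff.mp h
    rw [A_eval z σ w hp] at hj
    exact mul_ne_zero (Q_eval_ne z hp) (conj_sub_ne (h1 j)) hj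
  · exact (sub_eq_zero.mp h).symm

lemma root_iff {p : ℂ} (hp : ∀ j, p ≠ z j) (hp' : ∀ j, tau z σ w p ≠ z j)
    (h : tau z σ w (tau z σ w p) = p) : (N z σ w).eval p = 0 := by
  rw [N_eval z σ w hp hp', h]; simp

/-! asymptotics -/

lemma poly_theta (f : ℂ[X]) (hf : f ≠ 0) (a : ℂ) :
    (fun x => f.eval x) =Θ[𝓝 a] fun x => (x - a) ^ f.rootMultiplicity a := by
  obtain ⟨g, hg, hd⟩ := exists_eq_pow_rootMultiplicity_mul_and_not_dvd f hf a
  have hga : g.eval a ≠ 0 := fun h => hd (dvd_iff_isRoot.mpr h)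
  have h1 : (fun x => g.eval x) =Θ[𝓝 a] fun _ => (1 : ℂ) :=
    theta_one hga (g.continuous.tendsto a)
  have h2 := (isTheta_refl (fun x : ℂ => (x - a) ^ f.rootMultiplicity a) (𝓝 a)).mul h1
  refine IsTheta.trans ?_ (h2.trans (by simpa using isTheta_refl _ _))
  conv_lhs => rw [hg]
  simpa using isTheta_refl _ _

lemma tau_contDiffAt {p : ℂ} (hp : ∀ j, p ≠ z j) : ContDiffAt ℝ 1 (tau z σ w) p := by
  unfold tau r
  refine contDiffAt_const.add ?_
  refine (Complex.conjCLE.contDiff.contDiffAt).comp p ?_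
  refine ContDiffAt.sum fun j _ => ?_
  have h : ContDiffAt ℂ 1 (fun x => (σ j : ℂ) / (x - z j)) p :=
    contDiffAt_const.div (contDiffAt_id.sub contDiffAt_const) (sub_ne_zero.mpr (hp j))
  exact h.restrict_scalars ℝ

lemma good_nhds {p : ℂ} (hp : ∀ j, p ≠ z j) : ∀ᶠ q in 𝓝 p, ∀ j, q ≠ z j :=
  eventually_all.mpr fun j => eventually_ne_nhds (hp j)

lemma N_theta {p : ℂ} (hp : ∀ j, p ≠ z j) (hp' : ∀ j, tau z σ w p ≠ z j) :
    (fun q => (N z σ w).eval q) =Θ[𝓝 p] fun q => tau z σ w (tau z σ w q) - q := by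
  have hc : ContinuousAt (tau z σ w) p := (tau_contDiffAt z σ w hp).continuousAt
  have he : (fun q => (N z σ w).eval q) =ᶠ[𝓝 p] fun q =>
      (∏ j, (A z σ w j).eval q) * (q - tau z σ w (tau z σ w q)) := by
    filter_upwards [good_nhds z hp, hc.eventually (good_nhds z hp')] with q h1 h2
    exact N_eval z σ w h1 h2
  have hA : (∏ j, (A z σ w j).eval p) ≠ 0 := Finset.prod_ne_zero_iff.mpr fun j _ => by
    rw [A_eval z σ w hp]
    exact mul_ne_zero (Q_eval_ne z hp) (conj_sub_ne (hp' j))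
  have hcA : Tendsto (fun q => ∏ j, (A z σ w j).eval q) (𝓝 p) (𝓝 (∏ j, (A z σ w j).eval p)) :=
    tendsto_finsetProd _ fun j _ => (A z σ w j).continuous.tendsto p
  have h1 : (fun q => ∏ j, (A z σ w j).eval q) =Θ[𝓝 p] fun _ => (1 : ℂ) :=
    theta_one hA hcA
  refine (he.isTheta).trans ((h1.mul (isTheta_refl _ _)).trans ?_)
  simp only [one_mul]
  have : (fun q => tau z σ w (tau z σ w q) - q) = fun q => -(q - tau z σ w (tau z σ w q)) := by
    ext q; ring
  rw [this]
  exact ⟨(isBigO_refl _ _).neg_right, (isBigO_refl _ _).neg_left⟩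

lemma tau_lip {p : ℂ} (hp : ∀ j, p ≠ z j) :
    (fun q : ℂ × ℂ => tau z σ w q.1 - tau z σ w q.2) =O[𝓝 (p, p)] fun q => q.1 - q.2 :=
  ((tau_contDiffAt z σ w hp).hasStrictFDerivAt (by simp)).isBigO_sub

lemma mult_le (hN : N z σ w ≠ 0) {p : ℂ} (hp : ∀ j, p ≠ z j)
    (hp' : ∀ j, tau z σ w p ≠ z j) (h : tau z σ w (tau z σ w p) = p) :
    (N z σ w).rootMultiplicity p ≤ (N z σ w).rootMultiplicity (tau z σ w p) := by
  set m := (N z σ w).rootMultiplicity p with hm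
  set m' := (N z σ w).rootMultiplicity (tau z σ w p) with hm'
  have hpos : 0 < m' := (rootMultiplicity_pos hN).mpr
    (root_iff z σ w hp' (by rwa [h]) (by rw [h]))
  have hc : ContinuousAt (tau z σ w) p := (tau_contDiffAt z σ w hp).continuousAt
  have hc' : ContinuousAt (tau z σ w) (tau z σ w p) := (tau_contDiffAt z σ w hp').continuousAt
  have hcc : Tendsto (fun q => tau z σ w (tau z σ w q)) (𝓝 p) (𝓝 p) := by
    have := hc'.tendsto.comp hc.tendsto
    rwa [h] at this
  by_contra! hlt
  have h2 : 1 < m := by omega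
  -- H = O (q - p)^m
  have hH : (fun q => tau z σ w (tau z σ w q) - q) =Θ[𝓝 p] fun q => (q - p) ^ m :=
    (N_theta z σ w hp hp').symm.trans (poly_theta _ hN p)
  have hH' : (fun q => tau z σ w (tau z σ w q) - q) =Θ[𝓝 (tau z σ w p)]
      fun q => (q - tau z σ w p) ^ m' :=
    (N_theta z σ w hp' (by rwa [h])).symm.trans (poly_theta _ hN _)
  have ho : ∀ k l : ℕ, k < l → (fun q : ℂ => (q - p) ^ l) =o[𝓝 p] fun q => (q - p) ^ k := by
    intro k l hkl
    have := (isLittleO_pow_pow (𝕜 := ℂ) hkl)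
    have ht : Tendsto (fun q : ℂ => q - p) (𝓝 p) (𝓝 0) := by
      have : Tendsto (fun q : ℂ => q - p) (𝓝 p) (𝓝 (p - p)) := tendsto_id.sub_const p
      simpa using this
    exact this.comp_tendsto ht
  -- q - p = O (τ q - τ p)
  have h3 : (fun q => q - p) =O[𝓝 p] fun q => tau z σ w q - tau z σ w p := by
    have a1 : (fun q => tau z σ w (tau z σ w q) - q) =o[𝓝 p] fun q => q - p := by
      have := hH.1.trans_isLittleO (ho 1 m h2)
      simpa using this
    have a2 : (fun q => tau z σ w (tau z σ w q) - p) =O[𝓝 p]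
        fun q => tau z σ w q - tau z σ w p := by
      have := (tau_lip z σ w hp').comp_tendsto
        (hc.tendsto.prodMk_nhds (tendsto_const_nhds (x := tau z σ w p)))
      simp only [Function.comp_def, h] at this
      exact this
    have a3 : (fun q => q - p) =O[𝓝 p] fun q => tau z σ w (tau z σ w q) - p := by
      have := a1.right_isBigO_add
      refine this.congr_right fun q => by ring
    exact a3.trans a2
  have h4 : (fun q => (q - p) ^ m') =O[𝓝 p] fun q => (q - p) ^ m := by
    have b1 : (fun q => (q - p) ^ m') =O[𝓝 p] fun q => (tau z σ w q - tau z σ w p) ^ m' := h3.pow m'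
    have b2 : (fun q => (tau z σ w q - tau z σ w p) ^ m') =O[𝓝 p]
        fun q => tau z σ w (tau z σ w (tau z σ w q)) - tau z σ w q :=
      by simpa only [Function.comp_def] using hH'.2.comp_tendsto hc.tendsto
    have b3 : (fun q => tau z σ w (tau z σ w (tau z σ w q)) - tau z σ w q) =O[𝓝 p]
        fun q => tau z σ w (tau z σ w q) - q := by
      have ht : Tendsto (fun q : ℂ => q) (𝓝 p) (𝓝 p) := tendsto_id
      have := (tau_lip z σ w hp).comp_tendsto (hcc.prodMk_nhds ht)
      simp only [Function.comp_def] at this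
      exact this
    exact ((b1.trans b2).trans b3).trans hH.1
  have h5 := h4.trans_isLittleO (ho m' m hlt)
  have h6 := isLittleO_irrefl' (f' := fun q : ℂ => (q - p) ^ m') (l := 𝓝[≠] p)
    (by
      apply Eventually.frequently
      filter_upwards [self_mem_nhdsWithin] with q hq
      exact norm_ne_zero_iff.mpr (pow_ne_zero _ (sub_ne_zero.mpr hq)))
  exact h6 (h5.mono nhdsWithin_le_nhds)


lemma r_hasDerivAt {p : ℂ} (hp : ∀ j, p ≠ z j) : ∃ c, HasDerivAt (r z σ) c p := by
  have : DifferentiableAt ℂ (r z σ) p := by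
    unfold r
    refine DifferentiableAt.fun_sum fun j _ => ?_
    exact (differentiableAt_const _).div (differentiableAt_id.sub (differentiableAt_const _))
      (sub_ne_zero.mpr (hp j))
  exact ⟨_, this.hasDerivAt⟩

lemma tau_hasFDerivAt {p : ℂ} (hp : ∀ j, p ≠ z j) :
    ∃ (T : ℂ →L[ℝ] ℂ) (c : ℂ), HasFDerivAt (tau z σ w) T p ∧
      ∀ h, T h = starRingEnd ℂ (c * h) := by
  obtain ⟨c, hc⟩ := r_hasDerivAt z σ hp
  have h1 : HasFDerivAt (r z σ) ((ContinuousLinearMap.toSpanSingleton ℂ c).restrictScalars ℝ) p :=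
    hc.hasFDerivAt.restrictScalars ℝ
  have h2 := (Complex.conjCLE.hasFDerivAt (x := r z σ p)).comp p h1
  refine ⟨_, c, h2.const_add w, fun h => ?_⟩
  simp [mul_comm]

lemma mult_one (hN : N z σ w ≠ 0) {p : ℂ} (hp : ∀ j, p ≠ z j) (ht : tau z σ w p = p)
    {F : ℂ → ℂ} (hF : F =ᶠ[𝓝 p] fun q => q - tau z σ w q)
    (hb : Function.Bijective (fderiv ℝ F p)) :
    (N z σ w).rootMultiplicity p = 1 := by
  have hp' : ∀ j, tau z σ w p ≠ z j := by rwa [ht]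
  have hpos : 0 < (N z σ w).rootMultiplicity p := (rootMultiplicity_pos hN).mpr
    (root_iff z σ w hp hp' (by rw [ht, ht]))
  by_contra hne
  have h2 : 1 < (N z σ w).rootMultiplicity p := by omega
  obtain ⟨T, c, hT, hTc⟩ := tau_hasFDerivAt z σ w hp
  have hFd : fderiv ℝ F p = ContinuousLinearMap.id ℝ ℂ - T := by
    rw [hF.fderiv_eq]
    exact ((hasFDerivAt_id p).sub hT).fderiv
  have hH : (fun q => tau z σ w (tau z σ w q) - q) =o[𝓝 p] fun q => q - p := by
    have := ((N_theta z σ w hp hp').symm.trans (poly_theta _ hN p)).1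
    refine this.trans_isLittleO ?_
    have h3 := (isLittleO_pow_pow (𝕜 := ℂ) h2)
    have ht : Tendsto (fun q : ℂ => q - p) (𝓝 p) (𝓝 0) := by
      have : Tendsto (fun q : ℂ => q - p) (𝓝 p) (𝓝 (p - p)) := tendsto_id.sub_const p
      simpa using this
    have h4 := h3.comp_tendsto ht
    simpa [Function.comp_def] using h4
  have hH0 : HasFDerivAt (fun q => tau z σ w (tau z σ w q) - q) (0 : ℂ →L[ℝ] ℂ) p := by
    refine HasFDerivAt.of_isLittleO ?_
    simpa [ht] using hH
  have hT' : HasFDerivAt (tau z σ w) T (tau z σ w p) := by rwa [ht]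
  have hH1 : HasFDerivAt (fun q => tau z σ w (tau z σ w q) - q)
      (T.comp T - ContinuousLinearMap.id ℝ ℂ) p := (hT'.comp p hT).sub (hasFDerivAt_id p)
  have hTT : ∀ h, T (T h) = h := fun h => by
    have := congrArg (fun L : ℂ →L[ℝ] ℂ => L h) (hH1.unique hH0)
    simpa [sub_eq_zero] using this
  have hneg : ∀ h, h + T h = 0 := fun h => by
    apply hb.1
    rw [hFd]
    simp [hTT, add_comm]
  have e1 := hneg 1
  have e2 := hneg I
  rw [hTc] at e1 e2
  have hc : c = -1 := by
    have : starRingEnd ℂ c = -1 := by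
      rw [mul_one] at e1
      linear_combination e1
    have := congrArg (starRingEnd ℂ) this
    simpa using this
  rw [hc] at e2
  have := congrArg Complex.im e2
  norm_num at this

/-! degrees -/

lemma Q_monic : (Q z).Monic := monic_prod_of_monic _ _ fun j _ => monic_X_sub_C _

lemma Q_natDegree : (Q z).natDegree = n := by
  rw [Q, natDegree_prod_of_monic _ _ fun j _ => monic_X_sub_C _]
  simp

lemma E_monic (j : Fin n) : (E z j).Monic := monic_prod_of_monic _ _ fun j _ => monic_X_sub_C _

lemma E_natDegree (j : Fin n) : (E z j).natDegree = n - 1 := by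
  rw [E, natDegree_prod_of_monic _ _ fun j _ => monic_X_sub_C _]
  simp

lemma P_natDegree_le : (P z σ).natDegree ≤ n - 1 := by
  refine natDegree_sum_le_of_forall_le _ _ fun j _ => ?_
  exact (natDegree_C_mul_le _ _).trans (E_natDegree z j).le

lemma P_coeff : (P z σ).coeff (n - 1) = ((∑ j, σ j : ℝ) : ℂ) := by
  rw [P, finsetSum_coeff]
  push_cast
  refine Finset.sum_congr rfl fun j _ => ?_
  have : (E z j).coeff (n - 1) = 1 := by
    have := (E_monic z j).coeff_natDegree
    rwa [E_natDegree] at this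
  rw [coeff_C_mul, this, mul_one]

lemma A_natDegree_le (j : Fin n) : (A z σ w j).natDegree ≤ n := by
  refine natDegree_add_le_of_degree_le ?_ ((P_natDegree_le z σ).trans (Nat.sub_le _ _))
  exact (natDegree_C_mul_le _ _).trans (Q_natDegree z).le

lemma A_natDegree (hn : 2 ≤ n) (j : Fin n) (hj : w ≠ z j) : (A z σ w j).natDegree = n := by
  refine natDegree_eq_of_le_of_coeff_ne_zero (A_natDegree_le z σ w j) ?_
  have h1 : (P z σ).coeff n = 0 :=
    coeff_eq_zero_of_natDegree_lt (lt_of_le_of_lt (P_natDegree_le z σ) (by omega))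
  have h2 : (Q z).coeff n = 1 := by
    have := (Q_monic z).coeff_natDegree
    rwa [Q_natDegree] at this
  rw [A, coeff_add, coeff_C_mul, h1, h2, mul_one, add_zero, ← map_sub]
  exact conj_sub_ne hj

lemma ne_zero_of_natDegree (hn : 2 ≤ n) {f : ℂ[X]} (h : f.natDegree = n) : f ≠ 0 := by
  rintro rfl
  simp at h; omega

lemma N_natDegree_generic (hn : 2 ≤ n) (hw : ∀ j, w ≠ z j) :
    (N z σ w).natDegree = n * n + 1 := by
  have hA := fun j => A_natDegree z σ w hn j (hw j)
  have hA0 := fun j => ne_zero_of_natDegree hn (hA j)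
  have h1 : ((X - C w) * ∏ j, A z σ w j).natDegree = n * n + 1 := by
    rw [natDegree_mul (X_sub_C_ne_zero w) (Finset.prod_ne_zero_iff.mpr fun j _ => hA0 j),
      natDegree_X_sub_C, natDegree_prod _ _ fun j _ => hA0 j]
    simp [hA, add_comm]
  have h2 : (Q z * ∑ j, C (σ j : ℂ) * ∏ k ∈ Finset.univ.erase j, A z σ w k).natDegree ≤ n * n := by
    refine (natDegree_mul_le_of_le (Q_natDegree z).le
      (natDegree_sum_le_of_forall_le _ _ (n := (n - 1) * n) fun j _ => ?_)).trans ?_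
    · refine (natDegree_C_mul_le _ _).trans ((natDegree_prod_le _ _).trans ?_)
      simp [hA]
    · obtain ⟨k, rfl⟩ : ∃ k, n = k + 1 := ⟨n - 1, by omega⟩
      simp only [Nat.add_sub_cancel]; nlinarith
  rw [N, natDegree_sub_eq_left_of_natDegree_lt (by omega), h1]

lemma sum_gt (hn : 2 ≤ n) (hσ : ∀ j, 0 < σ j) (m : Fin n) : σ m < ∑ j, σ j := by
  have : Nontrivial (Fin n) := Fin.nontrivial_iff_two_le.mpr hn
  obtain ⟨k, hk⟩ := exists_ne m
  exact Finset.single_lt_sum hk (Finset.mem_univ _) (Finset.mem_univ _) (hσ k)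
    fun j _ _ => (hσ j).le

lemma N_natDegree_special (hn : 2 ≤ n) (hz : Function.Injective z) (hσ : ∀ j, 0 < σ j)
    (m : Fin n) (hw : w = z m) :
    (N z σ w).natDegree = n * n := by
  have hA := fun j (hj : j ≠ m) =>
    A_natDegree z σ w hn j (by rw [hw]; exact fun h => hj (hz h).symm)
  have hA0 := fun j (hj : j ≠ m) => ne_zero_of_natDegree hn (hA j hj)
  have hAm : A z σ w m = P z σ := by rw [A, hw]; simp
  set B := ∏ k ∈ Finset.univ.erase m, A z σ w k with hB
  have hB0 : B ≠ 0 := Finset.prod_ne_zero_iff.mpr fun j hj => hA0 j (Finset.ne_of_mem_erase hj)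
  have hBd : B.natDegree = (n - 1) * n := by
    rw [hB, natDegree_prod _ _ fun j hj => hA0 j (Finset.ne_of_mem_erase hj),
      Finset.sum_congr rfl fun j hj => hA j (Finset.ne_of_mem_erase hj)]
    simp
  have hD : ((X - C w) * P z σ - C (σ m : ℂ) * Q z).natDegree = n := by
    have hd1 : ((X - C w) * P z σ).natDegree ≤ n :=
      (natDegree_mul_le_of_le (natDegree_X_sub_C w).le (P_natDegree_le z σ)).trans (by omega)
    refine natDegree_eq_of_le_of_coeff_ne_zero ?_ ?_
    · exact natDegree_sub_le_of_le hd1 ((natDegree_C_mul_le _ _).trans (Q_natDegree z).le)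
        |>.trans (by simp)
    · have h2 : (Q z).coeff n = 1 := by
        have := (Q_monic z).coeff_natDegree
        rwa [Q_natDegree] at this
      have h3 : ((X - C w) * P z σ).coeff n = ((∑ j, σ j : ℝ) : ℂ) := by
        have := coeff_mul_add_eq_of_natDegree_le (natDegree_X_sub_C w).le (P_natDegree_le z σ)
        rw [show 1 + (n - 1) = n by omega, P_coeff] at this
        rw [this]; simp
      rw [coeff_sub, h3, coeff_C_mul, h2, mul_one, ← ofReal_sub]
      exact_mod_cast (sub_pos.mpr (sum_gt σ hn hσ m)).ne'
  have hD0 := ne_zero_of_natDegree hn hD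
  have hNeq : N z σ w = B * ((X - C w) * P z σ - C (σ m : ℂ) * Q z) -
      Q z * ∑ j ∈ Finset.univ.erase m, C (σ j : ℂ) * ∏ k ∈ Finset.univ.erase j, A z σ w k := by
    rw [N, ← Finset.mul_prod_erase _ _ (Finset.mem_univ m),
      ← Finset.add_sum_erase Finset.univ _ (Finset.mem_univ m), hAm, ← hB]
    ring
  have h2 : (Q z * ∑ j ∈ Finset.univ.erase m,
      C (σ j : ℂ) * ∏ k ∈ Finset.univ.erase j, A z σ w k).natDegree ≤ n * n - 1 := by
    refine (natDegree_mul_le_of_le (Q_natDegree z).le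
      (natDegree_sum_le_of_forall_le _ _ (n := (n - 1) + (n - 2) * n) fun j hj => ?_)).trans ?_
    · refine (natDegree_C_mul_le _ _).trans ?_
      have hm : m ∈ Finset.univ.erase j :=
        Finset.mem_erase.mpr ⟨(Finset.ne_of_mem_erase hj).symm, Finset.mem_univ _⟩
      rw [← Finset.mul_prod_erase _ _ hm, hAm]
      refine natDegree_mul_le_of_le (P_natDegree_le z σ) ((natDegree_prod_le _ _).trans ?_)
      refine (Finset.sum_le_card_nsmul _ _ n fun k _ => A_natDegree_le z σ w k).trans ?_
      rw [Finset.card_erase_of_mem hm, Finset.card_erase_of_mem (Finset.mem_univ j)]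
      simp [Nat.sub_sub]
    · obtain ⟨k, rfl⟩ : ∃ k, n = k + 2 := ⟨n - 2, by omega⟩
      simp only [Nat.add_sub_cancel]
      have : (k + 2) * (k + 2) = k + 2 + (k + 1 + k * (k + 2)) + 1 := by ring
      rw [this]; simp
  have h1 : (B * ((X - C w) * P z σ - C (σ m : ℂ) * Q z)).natDegree = n * n := by
    rw [natDegree_mul hB0 hD0, hBd, hD]
    obtain ⟨k, rfl⟩ : ∃ k, n = k + 1 := ⟨n - 1, by omega⟩
    simp only [Nat.add_sub_cancel]; ring
  have : 0 < n * n := by positivity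
  rw [hNeq, natDegree_sub_eq_left_of_natDegree_lt (by omega), h1]

lemma Q_eval_z (j : Fin n) : (Q z).eval (z j) = 0 := by rw [Q_eq z j]; simp

lemma E_eval_ne (hz : Function.Injective z) (j : Fin n) : (E z j).eval (z j) ≠ 0 := by
  rw [E, eval_prod]
  refine Finset.prod_ne_zero_iff.mpr fun k hk => ?_
  simpa [sub_eq_zero] using fun h => Finset.ne_of_mem_erase hk (hz h).symm

lemma P_eval_z (j : Fin n) : (P z σ).eval (z j) = σ j * (E z j).eval (z j) := by
  rw [P, eval_finsetSum, Finset.sum_eq_single j]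
  · simp
  · intro k _ hk
    rw [eval_mul, E, eval_prod, Finset.prod_eq_zero (i := j), mul_zero]
    · exact Finset.mem_erase.mpr ⟨hk.symm, Finset.mem_univ _⟩
    · simp
  · simp

lemma A_eval_z (j k : Fin n) : (A z σ w k).eval (z j) = (P z σ).eval (z j) := by
  simp [A, Q_eval_z]

lemma N_eval_z (j : Fin n) : (N z σ w).eval (z j) = (z j - w) * (P z σ).eval (z j) ^ n := by
  simp [N, Q_eval_z, eval_prod, A_eval_z]

lemma N_special_deriv (hn : 2 ≤ n) (hz : Function.Injective z) (hσ : ∀ j, 0 < σ j) (m : Fin n)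
    (hw : w = z m) : (derivative (N z σ w)).eval w ≠ 0 := by
  have hQ' : (derivative (Q z)).eval (z m) = (E z m).eval (z m) := by
    rw [Q_eq z m]; simp [derivative_mul]
  have : (derivative (N z σ w)).eval w = (P z σ).eval (z m) ^ (n - 1) *
      ((E z m).eval (z m) * ((σ m : ℂ) - ((∑ j, σ j : ℝ) : ℂ))) := by
    rw [N, hw]
    simp only [derivative_sub, derivative_mul, eval_sub, eval_add, eval_mul, eval_prod,
      eval_finsetSum, derivative_X, derivative_C, eval_one, eval_zero, eval_X, eval_C, sub_self,
      zero_mul, Q_eval_z, hQ', A_eval_z]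
    simp only [Finset.prod_const, Finset.card_univ, Fintype.card_fin, Finset.card_erase_of_mem,
      Finset.mem_univ, ← Finset.sum_mul]
    obtain ⟨k, rfl⟩ : ∃ k, n = k + 1 := ⟨n - 1, by omega⟩
    rw [P_eval_z]
    push_cast
    ring
  rw [this]
  refine mul_ne_zero (pow_ne_zero _ ?_) (mul_ne_zero (E_eval_ne z hz m) ?_)
  · rw [P_eval_z]
    exact mul_ne_zero (by exact_mod_cast (hσ m).ne') (E_eval_ne z hz m)
  · rw [← ofReal_sub]
    exact_mod_cast (sub_neg.mpr (sum_gt σ hn hσ m)).ne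

lemma N_ne_zero (hn : 2 ≤ n) (hz : Function.Injective z) (hσ : ∀ j, 0 < σ j) :
    N z σ w ≠ 0 := by
  intro h0
  by_cases hw : ∀ j, w ≠ z j
  · have := N_natDegree_generic z σ w hn hw
    rw [h0] at this; simp at this
  · push Not at hw
    obtain ⟨m, hm⟩ := hw
    have := N_natDegree_special z σ w hn hz hσ m hm
    rw [h0] at this; simp at this; omega

open Classical in
lemma sum_mult (hn : 2 ≤ n) (hz : Function.Injective z) (hσ : ∀ j, 0 < σ j) :
    ∑ a ∈ (N z σ w).roots.toFinset.filter (fun a => ∀ j, a ≠ z j),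
      (((N z σ w).rootMultiplicity a : ℕ) : ZMod 2) = n + 1 := by
  have hN := N_ne_zero z σ w hn hz hσ
  have htot : ∑ a ∈ (N z σ w).roots.toFinset, (N z σ w).rootMultiplicity a
      = (N z σ w).natDegree := by
    rw [← IsAlgClosed.card_roots_eq_natDegree, ← Multiset.toFinset_sum_count_eq]
    simp only [count_roots]
  have hsq : ((n * n : ℕ) : ZMod 2) = n := by
    push_cast
    generalize (n : ZMod 2) = x
    revert x; decide
  have hbad : ∀ j, (N z σ w).eval (z j) = 0 → z j = w := by
    intro j h
    rw [N_eval_z, P_eval_z] at h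
    rcases mul_eq_zero.mp h with h | h
    · exact sub_eq_zero.mp h
    · exact absurd h (pow_ne_zero _ (mul_ne_zero (by exact_mod_cast (hσ j).ne') (E_eval_ne z hz j)))
  have hsplit := Finset.sum_filter_add_sum_filter_not (N z σ w).roots.toFinset
    (fun a => ∀ j, a ≠ z j) (fun a => (((N z σ w).rootMultiplicity a : ℕ) : ZMod 2))
  rw [← Nat.cast_sum, ← Nat.cast_sum, ← Nat.cast_sum, htot] at hsplit
  rw [← Nat.cast_sum]
  by_cases hw : ∀ j, w ≠ z j
  · have he : (N z σ w).roots.toFinset.filter (fun a => ¬ ∀ j, a ≠ z j) = ∅ := by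
      refine Finset.filter_eq_empty_iff.mpr fun a ha => ?_
      rw [Multiset.mem_toFinset, mem_roots hN] at ha
      rw [not_not]
      rintro j rfl
      exact hw j (hbad j ha).symm
    rw [he, N_natDegree_generic z σ w hn hw] at hsplit
    rw [Nat.cast_succ, hsq] at hsplit
    simpa using hsplit
  · push Not at hw
    obtain ⟨m, hm⟩ := hw
    have hroot : (N z σ w).IsRoot w := by
      have := N_eval_z z σ w m
      rw [← hm, sub_self, zero_mul] at this
      exact this
    have he : (N z σ w).roots.toFinset.filter (fun a => ¬ ∀ j, a ≠ z j) = {w} := by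
      ext a
      rw [Finset.mem_filter, Multiset.mem_toFinset, mem_roots hN, Finset.mem_singleton]
      constructor
      · rintro ⟨h1, h2⟩
        push Not at h2
        obtain ⟨j, rfl⟩ := h2
        exact hbad j h1
      · rintro rfl
        exact ⟨hroot, fun h => h m hm⟩
    have hmult : (N z σ w).rootMultiplicity w = 1 := by
      have h1 := (rootMultiplicity_pos hN).mpr hroot
      have h2 : ¬ 1 < (N z σ w).rootMultiplicity w := fun h =>
        N_special_deriv z σ w hn hz hσ m hm ((one_lt_rootMultiplicity_iff_isRoot hN).mp h).2
      omega
    rw [he, N_natDegree_special z σ w hn hz hσ m hm, Finset.sum_singleton, hmult, hsq] at hsplit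
    have h11 : (1 : ZMod 2) + 1 = 0 := by decide
    push_cast at hsplit ⊢
    linear_combination hsplit - h11

end Lens

/-- For an `n`-point-mass planar lens without shear, if all images are nondegenerate
(the real Fréchet derivative of the lens map is invertible there), then the number of
images is even when `n` is odd and odd when `n` is even. -/
theorem point_mass_lens_image_parity (n : ℕ) (hn : 2 ≤ n)
    (z : Fin n → ℂ) (hz : Function.Injective z)
    (σ : Fin n → ℝ) (hσ : ∀ j, 0 < σ j) (w : ℂ)
    (F : ℂ → ℂ)
    (hF : ∀ p : ℂ, (∀ j, p ≠ z j) →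
      F p = p - (∑ j, (σ j : ℂ) / (starRingEnd ℂ p - starRingEnd ℂ (z j))) - w)
    (S : Set ℂ)
    (hS : S = {p : ℂ | (∀ j, p ≠ z j) ∧ F p = 0})
    (hfin : S.Finite)
    (hnd : ∀ p ∈ S, Function.Bijective (fderiv ℝ F p)) :
    (Odd n → Even S.ncard) ∧ (Even n → Odd S.ncard) := by
  classical
  have hN := Lens.N_ne_zero z σ w hn hz hσ
  have hFt : ∀ p, (∀ j, p ≠ z j) → F p = p - Lens.tau z σ w p := by
    intro p hp
    rw [hF p hp, Lens.tau, Lens.r]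
    simp only [map_sum, map_div₀, map_sub, Complex.conj_ofReal]
    ring
  set G := (Lens.N z σ w).roots.toFinset.filter (fun a => ∀ j, a ≠ z j) with hG
  have hGm : ∀ a, a ∈ G ↔ (Lens.N z σ w).eval a = 0 ∧ ∀ j, a ≠ z j := by
    intro a
    rw [hG, Finset.mem_filter, Multiset.mem_toFinset, Polynomial.mem_roots hN]
    rfl
  have hGt : ∀ a ∈ G, Lens.tau z σ w a ∈ G ∧ Lens.tau z σ w (Lens.tau z σ w a) = a := by
    intro a ha
    obtain ⟨h1, h2⟩ := (hGm a).mp ha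
    obtain ⟨h3, h4⟩ := Lens.root_good z σ w hz hσ h2 h1
    exact ⟨(hGm _).mpr ⟨Lens.root_iff z σ w h3 (by rwa [h4]) (by rw [h4]), h3⟩, h4⟩
  have hle : ∀ a ∈ G, (Lens.N z σ w).rootMultiplicity a ≤
      (Lens.N z σ w).rootMultiplicity (Lens.tau z σ w a) := fun a ha =>
    Lens.mult_le z σ w hN ((hGm a).mp ha).2 ((hGm _).mp (hGt a ha).1).2 (hGt a ha).2
  have heq : ∀ a ∈ G, (Lens.N z σ w).rootMultiplicity (Lens.tau z σ w a) =
      (Lens.N z σ w).rootMultiplicity a := by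
    intro a ha
    refine le_antisymm ?_ (hle a ha)
    have := hle _ (hGt a ha).1
    rwa [(hGt a ha).2] at this
  have hSG : S = ↑(G.filter fun a => Lens.tau z σ w a = a) := by
    ext a
    rw [hS, Finset.mem_coe, Finset.mem_filter, hGm]
    constructor
    · rintro ⟨h1, h2⟩
      rw [hFt a h1, sub_eq_zero] at h2
      exact ⟨⟨Lens.root_iff z σ w h1 (by rwa [← h2]) (by rw [← h2, ← h2]), h1⟩, h2.symm⟩
    · rintro ⟨⟨h1, h2⟩, h3⟩
      exact ⟨h2, by rw [hFt a h2, h3, sub_self]⟩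
  have hone : ∀ a ∈ G.filter (fun a => Lens.tau z σ w a = a),
      (((Lens.N z σ w).rootMultiplicity a : ℕ) : ZMod 2) = 1 := by
    intro a ha
    have haS : a ∈ S := by rw [hSG]; exact ha
    rw [Finset.mem_filter] at ha
    have hg := ((hGm a).mp ha.1).2
    rw [Lens.mult_one z σ w hN hg ha.2 ((Lens.good_nhds z hg).mono fun q hq => hFt q hq)
      (hnd a haS), Nat.cast_one]
  have hzero : ∑ a ∈ G.filter (fun a => ¬ Lens.tau z σ w a = a),
      (((Lens.N z σ w).rootMultiplicity a : ℕ) : ZMod 2) = 0 := by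
    refine Finset.sum_involution (fun a _ => Lens.tau z σ w a) ?_ ?_ ?_ ?_
    · intro a ha
      rw [heq a (Finset.mem_filter.mp ha).1]
      exact CharTwo.add_self_eq_zero _
    · intro a ha _
      exact (Finset.mem_filter.mp ha).2
    · intro a ha
      obtain ⟨h1, h2⟩ := Finset.mem_filter.mp ha
      refine Finset.mem_filter.mpr ⟨(hGt a h1).1, ?_⟩
      rw [(hGt a h1).2]
      exact fun h => h2 h.symm
    · intro a ha
      exact (hGt a (Finset.mem_filter.mp ha).1).2
  have hsum := Lens.sum_mult z σ w hn hz hσ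
  rw [← hG, ← Finset.sum_filter_add_sum_filter_not G (fun a => Lens.tau z σ w a = a), hzero,
    add_zero, Finset.sum_congr rfl hone, Finset.sum_const, nsmul_one] at hsum
  have hcard : ((S.ncard : ℕ) : ZMod 2) = ((n + 1 : ℕ) : ZMod 2) := by
    rw [hSG, Set.ncard_coe_finset, hsum]; push_cast; rfl
  rw [ZMod.natCast_eq_natCast_iff'] at hcard
  rw [Nat.odd_iff, Nat.even_iff, Nat.odd_iff, Nat.even_iff]
  omega
end

section
/- Let a > b > 0, let Ω = { x + iy : x²/a² + y²/b² ≤ 1 } ⊂ ℂ, let γ ∈ ℝ and w ∈ ℂ. Consider the set S = { z ∈ ℂ : z ∉ Ω and conj(z) − (1/π)∫_Ω 1/(z − ζ) dA(ζ) − γ z = conj(w) }. If S is finite, then S has at most 4 elements. -/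
open Complex MeasureTheory

lemma lens_card_le_of_proj (S : Set (ℝ × ℝ)) (f : ℝ × ℝ → ℝ) (hinj : Set.InjOn f S)
    (p : Polynomial ℝ) (hp : p ≠ 0) (n : ℕ) (hn : p.natDegree ≤ n)
    (hS : ∀ s ∈ S, p.eval (f s) = 0) : S.ncard ≤ n := by
  classical
  have h1 : (f '' S).ncard = S.ncard := hinj.ncard_image
  have h2 : f '' S ⊆ (p.roots.toFinset : Set ℝ) := by
    rintro _ ⟨s, hs, rfl⟩
    simp [hp, hS s hs]
  have h3 := Set.ncard_le_ncard h2 (Finset.finite_toSet _)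
  rw [Set.ncard_coe_finset] at h3
  have h4 := Multiset.toFinset_card_le p.roots
  have h5 := p.card_roots'
  omega

lemma lens_no_curve (S : Set (ℝ × ℝ)) (hfin : S.Finite) (φ : ℝ → ℝ × ℝ) (t₀ : ℝ)
    (hφ : ContinuousAt φ t₀) (hinj : Function.Injective φ)
    (Q : ℝ × ℝ → Prop) (hQ : ∀ᶠ t in nhds t₀, Q (φ t))
    (hiso : ∀ᶠ p in nhds (φ t₀), Q p → p ∈ S) : False := by
  have h := hφ.eventually hiso
  have h2 : {t | φ t ∈ S} ∈ nhds t₀ := by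
    filter_upwards [h, hQ] with t h1 h2 using h1 h2
  exact (infinite_of_mem_nhds t₀ h2) (hfin.preimage hinj.injOn)

lemma lens_conic_count (α β δ ε f2 f1 f0 g2 g1 g0 : ℝ)
    (hdeg : α = 0 → β = 0 → δ = 0 → ε = 0 →
      f1 = 0 ∧ g1 = 0 ∧ g0 = 0 ∧ f2 ≠ 0 ∧ g2 ≠ 0 ∧ f0 ≠ 0)
    (S : Set (ℝ × ℝ)) (hfin : S.Finite) (Q : ℝ × ℝ → Prop)
    (hQdef : ∀ x y, Q (x, y) ↔ (f2 * x ^ 2 + f1 * x + f0 = g2 * y ^ 2 + g1 * y + g0 ∧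
      α * x * y + β * x + δ * y + ε = 0))
    (hS : ∀ p ∈ S, Q p)
    (hiso : ∀ p ∈ S, ∀ᶠ q in nhds p, Q q → q ∈ S) : S.ncard ≤ 4 := by
  -- vertical lines
  have hvert : ∀ x₀ : ℝ, (∀ y, α * x₀ * y + β * x₀ + δ * y + ε = 0) →
      (S ∩ {p | p.1 = x₀}).ncard ≤ 2 := by
    intro x₀ hx
    rcases Set.eq_empty_or_nonempty (S ∩ {p | p.1 = x₀}) with he | ⟨⟨x1, y1⟩, hp, hx1⟩
    · rw [he]; simp
    simp only [Set.mem_ofPred_eq] at hx1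
    subst hx1
    let P : Polynomial ℝ := Polynomial.C g2 * Polynomial.X ^ 2 + Polynomial.C g1 * Polynomial.X +
      Polynomial.C (g0 - (f2 * x1 ^ 2 + f1 * x1 + f0))
    have hev : ∀ y, P.eval y = g2 * y ^ 2 + g1 * y + (g0 - (f2 * x1 ^ 2 + f1 * x1 + f0)) := by
      intro y; simp [P]
    have hP : P ≠ 0 := by
      intro h0
      refine lens_no_curve S hfin (fun t => (x1, t)) y1 (by fun_prop) ?_ Q ?_ (hiso _ hp)
      · intro s t hst; simpa using hst
      · refine Filter.Eventually.of_forall fun t => (hQdef _ _).2 ⟨?_, hx t⟩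
        have := hev t
        rw [h0] at this
        simp at this
        linarith
    refine lens_card_le_of_proj _ Prod.snd ?_ P hP 2 Polynomial.natDegree_quadratic_le ?_
    · rintro ⟨x, y⟩ ⟨_, h1⟩ ⟨x', y'⟩ ⟨_, h2⟩ h
      simp only [Set.mem_ofPred_eq] at h1 h2 h
      simp [h1, h2, h]
    · rintro ⟨x, y⟩ ⟨h, h1⟩
      simp only [Set.mem_ofPred_eq] at h1
      subst h1
      have := ((hQdef _ _).1 (hS _ h)).1
      rw [hev]
      simp only
      linarith
  have hhor : ∀ y₀ : ℝ, (∀ x, α * x * y₀ + β * x + δ * y₀ + ε = 0) →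
      (S ∩ {p | p.2 = y₀}).ncard ≤ 2 := by
    intro y₀ hy
    rcases Set.eq_empty_or_nonempty (S ∩ {p | p.2 = y₀}) with he | ⟨⟨x1, y1⟩, hp, hx1⟩
    · rw [he]; simp
    simp only [Set.mem_ofPred_eq] at hx1
    subst hx1
    let P : Polynomial ℝ := Polynomial.C f2 * Polynomial.X ^ 2 + Polynomial.C f1 * Polynomial.X +
      Polynomial.C (f0 - (g2 * y1 ^ 2 + g1 * y1 + g0))
    have hev : ∀ y, P.eval y = f2 * y ^ 2 + f1 * y + (f0 - (g2 * y1 ^ 2 + g1 * y1 + g0)) := by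
      intro y; simp [P]
    have hP : P ≠ 0 := by
      intro h0
      refine lens_no_curve S hfin (fun t => (t, y1)) x1 (by fun_prop) ?_ Q ?_ (hiso _ hp)
      · intro s t hst; simpa using hst
      · refine Filter.Eventually.of_forall fun t => (hQdef _ _).2 ⟨?_, hy t⟩
        have := hev t
        rw [h0] at this
        simp at this
        linarith
    refine lens_card_le_of_proj _ Prod.fst ?_ P hP 2 Polynomial.natDegree_quadratic_le ?_
    · rintro ⟨x, y⟩ ⟨_, h1⟩ ⟨x', y'⟩ ⟨_, h2⟩ h
      simp only [Set.mem_ofPred_eq] at h1 h2 h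
      simp [h1, h2, h]
    · rintro ⟨x, y⟩ ⟨h, h1⟩
      simp only [Set.mem_ofPred_eq] at h1
      subst h1
      have := ((hQdef _ _).1 (hS _ h)).1
      rw [hev]
      simp only
      linarith
  by_cases hA : ∃ p ∈ S, α * p.1 + δ = 0
  · obtain ⟨⟨x0, y0⟩, hp, h0⟩ := hA
    simp only at h0
    have hq := (hQdef _ _).1 (hS _ hp)
    have h1 : β * x0 + ε = 0 := by linear_combination hq.2 - y0 * h0
    have hv := hvert x0 (fun y => by linear_combination h1 + y * h0)
    by_cases hα : α = 0
    · subst hα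
      have hδ : δ = 0 := by linarith
      subst hδ
      by_cases hβ : β = 0
      · subst hβ
        have hε : ε = 0 := by linarith
        obtain ⟨rfl, rfl, rfl, hf2, hg2, hf0⟩ := hdeg rfl rfl rfl hε
        exfalso
        have hq1 := hq.1
        by_cases hy : y0 = 0
        · subst hy
          have hx : x0 ≠ 0 := by
            rintro rfl
            apply hf0; linarith
          have hx2 : (g2 * 0 ^ 2 - f0) / (f2 * x0 ^ 2) = 1 := by
            rw [div_eq_one_iff_eq (by positivity)]; linarith
          have hc : Continuous (fun t : ℝ => (g2 * t ^ 2 - f0) / (f2 * x0 ^ 2)) := by fun_prop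
          refine lens_no_curve S hfin
            (fun t => (x0 * √((g2 * t ^ 2 - f0) / (f2 * x0 ^ 2)), t)) 0
            (by fun_prop) ?_ Q ?_ ?_
          · intro s t hst; simp at hst; exact hst.2
          · have : ∀ᶠ t in nhds (0:ℝ), 0 < (g2 * t ^ 2 - f0) / (f2 * x0 ^ 2) :=
              hc.continuousAt.eventually (lt_mem_nhds (by simp only; rw [hx2]; norm_num))
            filter_upwards [this] with t ht
            refine (hQdef _ _).2 ⟨?_, by rw [hε]; ring⟩
            rw [mul_pow, Real.sq_sqrt ht.le]
            field_simp
            ring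
          · rw [hx2]
            simpa using hiso _ hp
        · have hx2 : (f2 * x0 ^ 2 + f0) / (g2 * y0 ^ 2) = 1 := by
            rw [div_eq_one_iff_eq (by positivity)]; linarith
          have hc : Continuous (fun t : ℝ => (f2 * t ^ 2 + f0) / (g2 * y0 ^ 2)) := by fun_prop
          refine lens_no_curve S hfin
            (fun t => (t, y0 * √((f2 * t ^ 2 + f0) / (g2 * y0 ^ 2)))) x0
            (by fun_prop) ?_ Q ?_ ?_
          · intro s t hst; simp at hst; exact hst.1
          · have : ∀ᶠ t in nhds x0, 0 < (f2 * t ^ 2 + f0) / (g2 * y0 ^ 2) :=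
              hc.continuousAt.eventually (lt_mem_nhds (by simp only; rw [hx2]; norm_num))
            filter_upwards [this] with t ht
            refine (hQdef _ _).2 ⟨?_, by rw [hε]; ring⟩
            rw [mul_pow, Real.sq_sqrt ht.le]
            field_simp
            ring
          · rw [hx2]
            simpa using hiso _ hp
      · have : S ∩ {p | p.1 = x0} = S := by
          apply Set.inter_eq_left.2
          rintro ⟨x, y⟩ h
          have := ((hQdef _ _).1 (hS _ h)).2
          have h2 : β * (x - x0) = 0 := by linear_combination this - h1
          simp only [Set.mem_ofPred_eq]
          rcases mul_eq_zero.1 h2 with h | h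
          · exact absurd h hβ
          · linarith
        rw [this] at hv
        omega
    · have hh := hhor (-β / α) (fun x => by
        have : ε = -β * x0 := by linarith
        have h3 : δ = -α * x0 := by linarith
        rw [this, h3]
        field_simp
        ring)
      have hsub : S ⊆ (S ∩ {p | p.1 = x0}) ∪ (S ∩ {p | p.2 = -β / α}) := by
        rintro ⟨x, y⟩ h
        have h2 := ((hQdef _ _).1 (hS _ h)).2
        have h3 : (x - x0) * (α * y + β) = 0 := by linear_combination h2 - h1 - y * h0
        rcases mul_eq_zero.1 h3 with h3 | h3
        · left; exact ⟨h, by simp only [Set.mem_ofPred_eq]; linarith⟩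
        · right; refine ⟨h, ?_⟩
          simp only [Set.mem_ofPred_eq]
          rw [eq_div_iff hα]; linarith
      have h4 := Set.ncard_le_ncard hsub
        ((hfin.subset Set.inter_subset_left).union (hfin.subset Set.inter_subset_left))
      have h5 := Set.ncard_union_le (S ∩ {p | p.1 = x0}) (S ∩ {p | p.2 = -β / α})
      omega
  · push Not at hA
    rcases Set.eq_empty_or_nonempty S with he | ⟨⟨x1, y1⟩, hp⟩
    · rw [he]; simp
    have hy : ∀ x y, α * x + δ ≠ 0 → α * x * y + β * x + δ * y + ε = 0 →
        y = -(β * x + ε) / (α * x + δ) := by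
      intro x y h h2
      rw [eq_div_iff h]; linarith
    let D : Polynomial ℝ := Polynomial.C α * Polynomial.X + Polynomial.C δ
    let N : Polynomial ℝ := Polynomial.C β * Polynomial.X + Polynomial.C ε
    let F : Polynomial ℝ := Polynomial.C f2 * Polynomial.X ^ 2 + Polynomial.C f1 * Polynomial.X +
      Polynomial.C f0
    let P : Polynomial ℝ := D ^ 2 * F - Polynomial.C g2 * N ^ 2 + Polynomial.C g1 * (N * D)
      - Polynomial.C g0 * D ^ 2
    have hdegP : P.natDegree ≤ 4 := by
      simp only [P, D, N, F]
      compute_degree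
    have hev : ∀ x, P.eval x = (α * x + δ) ^ 2 * (f2 * x ^ 2 + f1 * x + f0)
        - g2 * (β * x + ε) ^ 2 + g1 * ((β * x + ε) * (α * x + δ)) - g0 * (α * x + δ) ^ 2 := by
      intro y; simp [P, D, N, F]
    have hx1 := hA _ hp
    simp only at hx1
    have hP : P ≠ 0 := by
      intro h0
      have hy1 := hy x1 y1 hx1 ((hQdef _ _).1 (hS _ hp)).2
      refine lens_no_curve S hfin (fun t => (t, -(β * t + ε) / (α * t + δ))) x1 ?_ ?_ Q ?_ ?_
      · exact ContinuousAt.prodMk continuousAt_id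
          (ContinuousAt.div (by fun_prop) (by fun_prop) hx1)
      · intro s t hst; simp at hst; exact hst.1
      · have hc : Continuous (fun t : ℝ => α * t + δ) := by fun_prop
        filter_upwards [hc.continuousAt.eventually_ne hx1] with t ht
        have := hev t
        rw [h0] at this
        simp only [Polynomial.eval_zero] at this
        refine (hQdef _ _).2 ⟨?_, ?_⟩
        · generalize α * t + δ = d at this ht
          field_simp
          linear_combination -this
        · field_simp
          ring
      · rw [← hy1]
        exact hiso _ hp
    refine lens_card_le_of_proj _ Prod.fst ?_ P hP 4 hdegP ?_
    · rintro ⟨x, y⟩ h1 ⟨x', y'⟩ h2 h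
      simp only at h
      subst h
      have e1 := hy x y (hA _ h1) ((hQdef _ _).1 (hS _ h1)).2
      have e2 := hy x y' (hA _ h2) ((hQdef _ _).1 (hS _ h2)).2
      rw [e1, e2]
    · rintro ⟨x, y⟩ h1
      have h2 := (hQdef _ _).1 (hS _ h1)
      rw [hev]
      simp only
      have h3 : β * x + ε = - y * (α * x + δ) := by linarith [h2.2]
      rw [h3]
      linear_combination (α * x + δ) ^ 2 * h2.1

lemma lens_hasDerivAt_param (F F' : ℝ → ℝ → ℂ) (s : Set ℝ) (hs : IsOpen s) (A B : ℝ)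
    (hF : ∀ r ∈ s, Continuous (F r))
    (hF' : ContinuousOn (Function.uncurry F') (s ×ˢ Set.univ))
    (hd : ∀ r ∈ s, ∀ t, HasDerivAt (fun r => F r t) (F' r t) r) (r₀ : ℝ) (hr : r₀ ∈ s) :
    HasDerivAt (fun r => ∫ t in A..B, F r t) (∫ t in A..B, F' r₀ t) r₀ := by
  obtain ⟨K, hK, hrK, hKs⟩ := exists_compact_subset hs hr
  obtain ⟨C, hC⟩ := (hK.prod (isCompact_uIcc (a := A) (b := B))).exists_bound_of_continuousOn
    (hF'.mono (Set.prod_mono hKs (Set.subset_univ _)))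
  refine (intervalIntegral.hasDerivAt_integral_of_dominated_loc_of_deriv_le
    (bound := fun _ => C) (s := K) (mem_interior_iff_mem_nhds.1 hrK) ?_ ?_ ?_ ?_ ?_ ?_).2
  · filter_upwards [hs.mem_nhds hr] with r h using (hF r h).aestronglyMeasurable
  · exact (hF r₀ hr).intervalIntegrable _ _
  · have : Continuous (F' r₀) := by
      rw [← continuousOn_univ]
      exact hF'.comp (f := fun t => (r₀, t)) (by fun_prop) (fun t _ => ⟨hr, Set.mem_univ _⟩)
    exact this.aestronglyMeasurable
  · exact Filter.Eventually.of_forall fun t ht x hx =>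
      hC (x, t) ⟨hx, Set.uIoc_subset_uIcc ht⟩
  · exact intervalIntegrable_const
  · exact Filter.Eventually.of_forall fun t ht x hx => hd x (hKs hx) t

/-- Boundary parametrisation of the ellipse. -/
noncomputable def lensE (a b : ℝ) (t : ℝ) : ℂ := a * Complex.cos t + b * Complex.sin t * I

noncomputable def lensE' (a b : ℝ) (t : ℝ) : ℂ := -a * Complex.sin t + b * Complex.cos t * I

lemma lensE_cont (a b : ℝ) : Continuous (lensE a b) := by
  unfold lensE; fun_prop

lemma lensE_deriv (a b t : ℝ) : HasDerivAt (lensE a b) (lensE' a b t) t := by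
  have h1 := (Complex.hasDerivAt_cos (t : ℂ)).comp_ofReal
  have h2 := (Complex.hasDerivAt_sin (t : ℂ)).comp_ofReal
  have := (h1.const_mul (a : ℂ)).add ((h2.const_mul (b : ℂ)).mul_const I)
  refine this.congr_deriv ?_
  unfold lensE'; ring

lemma lensE'_deriv (a b t : ℝ) : HasDerivAt (lensE' a b) (-lensE a b t) t := by
  have h1 := (Complex.hasDerivAt_cos (t : ℂ)).comp_ofReal
  have h2 := (Complex.hasDerivAt_sin (t : ℂ)).comp_ofReal
  have := (h2.const_mul (-a : ℂ)).add ((h1.const_mul (b : ℂ)).mul_const I)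
  refine this.congr_deriv ?_
  unfold lensE; ring

lemma lensE_sq (a b t : ℝ) : lensE' a b t ^ 2 = (a : ℂ) ^ 2 - b ^ 2 - lensE a b t ^ 2 := by
  unfold lensE' lensE
  have h := Complex.sin_sq_add_cos_sq (t : ℂ)
  have hI := Complex.I_sq
  ring_nf
  rw [hI]
  linear_combination ((a : ℂ) ^ 2 - b ^ 2) * h

lemma lensE_ne (a b : ℝ) (ha : 0 < a) (hb : 0 < b) (z : ℂ) (r t : ℝ)
    (hr : r ^ 2 < z.re ^ 2 / a ^ 2 + z.im ^ 2 / b ^ 2) : z - r * lensE a b t ≠ 0 := by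
  intro h
  have h1 : z = r * lensE a b t := by linear_combination h
  have h2 : z = ((r * (a * Real.cos t) : ℝ) : ℂ) + ((r * (b * Real.sin t) : ℝ) : ℂ) * I := by
    rw [h1]; unfold lensE; push_cast; ring
  have hre : z.re = r * (a * Real.cos t) := by
    rw [h2, ← Complex.mk_eq_add_mul_I]
  have him : z.im = r * (b * Real.sin t) := by
    rw [h2, ← Complex.mk_eq_add_mul_I]
  rw [hre, him] at hr
  have : (r * (a * Real.cos t)) ^ 2 / a ^ 2 + (r * (b * Real.sin t)) ^ 2 / b ^ 2 = r ^ 2 := by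
    field_simp
    linear_combination r ^ 2 * Real.sin_sq_add_cos_sq t
  linarith

noncomputable def lensI (a b : ℝ) (z : ℂ) (r : ℝ) : ℂ :=
  ∫ t in (-Real.pi)..Real.pi, (z - r * lensE a b t)⁻¹

lemma lensI_deriv (a b : ℝ) (ha : 0 < a) (hb : 0 < b) (z : ℂ) (r : ℝ)
    (hr : r ^ 2 < z.re ^ 2 / a ^ 2 + z.im ^ 2 / b ^ 2) :
    ∃ D, HasDerivAt (lensI a b z) D r ∧
      (z ^ 2 - ((a : ℂ) ^ 2 - b ^ 2) * r ^ 2) * D = ((a : ℂ) ^ 2 - b ^ 2) * r * lensI a b z r := by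
  have hE := lensE_cont a b
  have hE' : Continuous (lensE' a b) := by unfold lensE'; fun_prop
  refine ⟨∫ t in (-Real.pi)..Real.pi, lensE a b t / (z - r * lensE a b t) ^ 2, ?_, ?_⟩
  · unfold lensI
    refine lens_hasDerivAt_param (fun r t => (z - r * lensE a b t)⁻¹)
      (fun r t => lensE a b t / (z - r * lensE a b t) ^ 2)
      {r | r ^ 2 < z.re ^ 2 / a ^ 2 + z.im ^ 2 / b ^ 2} ?_ _ _ ?_ ?_ ?_ r (by simpa using hr)
    · exact isOpen_lt (by fun_prop) continuous_const
    · intro r hr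
      rw [Set.mem_ofPred_eq] at hr
      exact Continuous.inv₀ (by fun_prop) (fun t => lensE_ne a b ha hb z r t hr)
    · refine ContinuousOn.div (by fun_prop) (by fun_prop) ?_
      rintro ⟨r, t⟩ ⟨hr, _⟩
      rw [Set.mem_ofPred_eq] at hr
      exact pow_ne_zero 2 (lensE_ne a b ha hb z r t hr)
    · intro r hr t
      rw [Set.mem_ofPred_eq] at hr
      have h1 : HasDerivAt (fun r : ℝ => z - r * lensE a b t) (-lensE a b t) r := by
        have := ((Complex.ofRealCLM.hasDerivAt (x := r)).mul_const (lensE a b t)).const_sub z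
        simpa using this
      refine (h1.inv (lensE_ne a b ha hb z r t hr)).congr_deriv ?_
      simp
  · have hne := fun t => lensE_ne a b ha hb z r t hr
    have hc1 : Continuous fun t => lensE a b t / (z - r * lensE a b t) ^ 2 :=
      Continuous.div (by fun_prop) (by fun_prop) (fun t => pow_ne_zero 2 (hne t))
    have hc2 : Continuous fun t => (z - r * lensE a b t)⁻¹ :=
      Continuous.inv₀ (by fun_prop) hne
    have hd : ∀ t, HasDerivAt (fun t => -z * (lensE' a b t / (z - r * lensE a b t)))
        ((z ^ 2 - ((a : ℂ) ^ 2 - b ^ 2) * r ^ 2) * (lensE a b t / (z - r * lensE a b t) ^ 2) -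
          ((a : ℂ) ^ 2 - b ^ 2) * r * (z - r * lensE a b t)⁻¹) t := by
      intro t
      have h1 := (((lensE'_deriv a b t).div (((lensE_deriv a b t).const_mul (r : ℂ)).const_sub z)
        (hne t)).const_mul (-z))
      refine h1.congr_deriv ?_
      have h2 := lensE_sq a b t
      have h3 := hne t
      have h4 : (z - r * lensE a b t)⁻¹ = (z - r * lensE a b t) / (z - r * lensE a b t) ^ 2 := by
        field_simp
      linear_combination ((((a : ℂ) ^ 2 - b ^ 2) * r)) * h4 +
        (-z * r / (z - r * lensE a b t) ^ 2) * h2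
    have hint : ∫ t in (-Real.pi)..Real.pi,
        ((z ^ 2 - ((a : ℂ) ^ 2 - b ^ 2) * r ^ 2) * (lensE a b t / (z - r * lensE a b t) ^ 2) -
          ((a : ℂ) ^ 2 - b ^ 2) * r * (z - r * lensE a b t)⁻¹) = 0 := by
      rw [intervalIntegral.integral_eq_sub_of_hasDerivAt (fun t _ => hd t)
        ((by fun_prop : Continuous _).intervalIntegrable _ _)]
      simp [lensE, lensE']
    rw [intervalIntegral.integral_sub
      ((by fun_prop : Continuous _).intervalIntegrable _ _)
      ((by fun_prop : Continuous _).intervalIntegrable _ _),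
      intervalIntegral.integral_const_mul, intervalIntegral.integral_const_mul] at hint
    unfold lensI
    linear_combination hint

lemma lens_radial (a b : ℝ) (hb : 0 < b) (hab : b < a) (z : ℂ)
    (hz : 1 < z.re ^ 2 / a ^ 2 + z.im ^ 2 / b ^ 2) :
    ∃ s : ℂ, s ^ 2 = z ^ 2 - ((a : ℂ) ^ 2 - b ^ 2) ∧
      ∫ r in (0 : ℝ)..1, (r : ℂ) * lensI a b z r = 2 * Real.pi / ((a : ℂ) ^ 2 - b ^ 2) * (z - s) := by
  have ha : 0 < a := hb.trans hab
  have hc : (a : ℂ) ^ 2 - b ^ 2 ≠ 0 := by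
    have : a ^ 2 - b ^ 2 ≠ 0 := by nlinarith
    exact_mod_cast this
  set c : ℂ := (a : ℂ) ^ 2 - b ^ 2 with hcdef
  have hz0 : z ≠ 0 := by
    rintro rfl
    norm_num at hz
  have hπ : (Real.pi : ℂ) ≠ 0 := by exact_mod_cast Real.pi_ne_zero
  have hrr : ∀ r ∈ Set.uIcc (0 : ℝ) 1, r ^ 2 < z.re ^ 2 / a ^ 2 + z.im ^ 2 / b ^ 2 := by
    intro r hr
    rw [Set.uIcc_of_le zero_le_one] at hr
    nlinarith [hr.1, hr.2]
  have hquad : ∀ r : ℝ, HasDerivAt (fun r : ℝ => z ^ 2 - c * (r : ℂ) ^ 2) (-(c * (2 * r))) r := by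
    intro r
    have := (((Complex.ofRealCLM.hasDerivAt (x := r)).pow 2).const_mul c).const_sub (z ^ 2)
    simpa using this
  have hI0 : lensI a b z 0 = 2 * Real.pi / z := by
    unfold lensI
    simp
    rw [← two_mul]; field_simp
  have hIc : ContinuousOn (lensI a b z) (Set.uIcc 0 1) := fun r hr => by
    obtain ⟨D, h, -⟩ := lensI_deriv a b ha hb z r (hrr r hr)
    exact h.continuousAt.continuousWithinAt
  have hG : ∀ r ∈ Set.uIcc (0 : ℝ) 1, HasDerivAt (fun r : ℝ => (z ^ 2 - c * (r : ℂ) ^ 2) * lensI a b z r)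
      (-c * (r * lensI a b z r)) r := by
    intro r hr
    obtain ⟨D, h, h2⟩ := lensI_deriv a b ha hb z r (hrr r hr)
    refine ((hquad r).mul h).congr_deriv ?_
    linear_combination h2
  have hH : ∀ r ∈ Set.uIcc (0 : ℝ) 1, HasDerivAt (fun r : ℝ => (z ^ 2 - c * (r : ℂ) ^ 2) * lensI a b z r
      * lensI a b z r) 0 r := by
    intro r hr
    obtain ⟨D, h, h2⟩ := lensI_deriv a b ha hb z r (hrr r hr)
    refine ((hG r hr).mul h).congr_deriv ?_
    linear_combination lensI a b z r * h2
  have e1 := intervalIntegral.integral_eq_sub_of_hasDerivAt hG (by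
    apply ContinuousOn.intervalIntegrable
    exact continuousOn_const.mul ((by fun_prop : Continuous fun r : ℝ => (r : ℂ)).continuousOn.mul hIc))
  have e2 := intervalIntegral.integral_eq_sub_of_hasDerivAt hH (by simp)
  rw [intervalIntegral.integral_const_mul] at e1
  simp only [hI0, intervalIntegral.integral_zero, ofReal_zero, ofReal_one] at e1 e2
  refine ⟨(z ^ 2 - c) * lensI a b z 1 / (2 * Real.pi), ?_, ?_⟩
  · have e3 : (z ^ 2 - c) * lensI a b z 1 * lensI a b z 1 = 4 * Real.pi ^ 2 := by
      have : (z ^ 2 - c * 0 ^ 2) * (2 * Real.pi / z) * (2 * Real.pi / z) = 4 * (Real.pi : ℂ) ^ 2 := by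
        field_simp; ring
      rw [this] at e2
      linear_combination -e2
    field_simp
    linear_combination (z ^ 2 - c) * e3
  · have : (z ^ 2 - c * 0 ^ 2) * (2 * Real.pi / z) = 2 * Real.pi * z := by
      field_simp; ring
    rw [this] at e1
    field_simp
    linear_combination -e1

noncomputable def lensL (a b : ℝ) : ℂ →L[ℝ] ℂ :=
  a • Complex.reCLM.smulRight (1 : ℂ) + b • Complex.imCLM.smulRight I

lemma lensL_apply (a b : ℝ) (x : ℂ) : lensL a b x = (⟨a * x.re, b * x.im⟩ : ℂ) := by
  apply Complex.ext <;> simp [lensL]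

lemma lensL_det (a b : ℝ) : (lensL a b).det = a * b := by
  rw [ContinuousLinearMap.det, ← LinearMap.det_toMatrix Complex.basisOneI, Matrix.det_fin_two]
  simp [LinearMap.toMatrix_apply, lensL_apply]

lemma lens_integral_param (a b : ℝ) (ha : 0 < a) (hb : 0 < b) (g : ℂ → ℂ) :
    ∫ ζ in {p : ℂ | p.re ^ 2 / a ^ 2 + p.im ^ 2 / b ^ 2 ≤ 1}, g ζ =
      ∫ p in Set.Ioc (0 : ℝ) 1 ×ˢ Set.Ioo (-Real.pi) Real.pi,
        ((a * b * p.1 : ℝ) : ℂ) * g (p.1 * lensE a b p.2) := by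
  have hD : MeasurableSet {p : ℂ | p.re ^ 2 + p.im ^ 2 ≤ 1} :=
    (isClosed_le (by fun_prop) continuous_const).measurableSet
  have himg : {p : ℂ | p.re ^ 2 / a ^ 2 + p.im ^ 2 / b ^ 2 ≤ 1} =
      lensL a b '' {p : ℂ | p.re ^ 2 + p.im ^ 2 ≤ 1} := by
    ext p
    simp only [Set.mem_ofPred_eq, Set.mem_image]
    constructor
    · intro h
      refine ⟨⟨p.re / a, p.im / b⟩, by simpa [div_pow] using h, ?_⟩
      rw [lensL_apply]
      apply Complex.ext <;> simp <;> field_simp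
    · rintro ⟨x, hx, rfl⟩
      rw [lensL_apply]
      simp only
      have : (a * x.re) ^ 2 / a ^ 2 + (b * x.im) ^ 2 / b ^ 2 = x.re ^ 2 + x.im ^ 2 := by
        field_simp
      rw [this]; exact hx
  have hinj : Function.Injective (lensL a b) := by
    intro x y h
    rw [lensL_apply, lensL_apply, Complex.mk.injEq] at h
    exact Complex.ext (mul_left_cancel₀ ha.ne' h.1) (mul_left_cancel₀ hb.ne' h.2)
  rw [himg, integral_image_eq_integral_abs_det_fderiv_smul volume hD
    (fun x _ => (lensL a b).hasFDerivAt.hasFDerivWithinAt) hinj.injOn,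
    ← integral_indicator hD, ← Complex.integral_comp_polarCoord_symm]
  have hset : Set.Ioc (0 : ℝ) 1 ×ˢ Set.Ioo (-Real.pi) Real.pi =
      polarCoord.target ∩ (Set.Iic (1 : ℝ) ×ˢ Set.univ) := by
    ext ⟨r, t⟩
    simp [polarCoord_target]
    tauto
  have hM : MeasurableSet (Set.Iic (1 : ℝ) ×ˢ (Set.univ : Set ℝ)) :=
    measurableSet_Iic.prod MeasurableSet.univ
  rw [hset, ← setIntegral_indicator hM]
  refine setIntegral_congr_fun polarCoord.open_target.measurableSet ?_
  rintro ⟨r, t⟩ ht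
  rw [polarCoord_target] at ht
  have hr : 0 < r := ht.1
  have hsym : Complex.polarCoord.symm (r, t) = (⟨r * Real.cos t, r * Real.sin t⟩ : ℂ) := by
    rw [Complex.polarCoord_symm_apply, Complex.mk_eq_add_mul_I]
    push_cast
    ring
  have hiff : (⟨r * Real.cos t, r * Real.sin t⟩ : ℂ) ∈ {p : ℂ | p.re ^ 2 + p.im ^ 2 ≤ 1} ↔ r ≤ 1 := by
    simp only [Set.mem_ofPred_eq]
    have : (r * Real.cos t) ^ 2 + (r * Real.sin t) ^ 2 = r ^ 2 := by
      linear_combination r ^ 2 * Real.sin_sq_add_cos_sq t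
    rw [this]
    constructor <;> intro h <;> nlinarith
  have hLE : lensL a b ⟨r * Real.cos t, r * Real.sin t⟩ = r * lensE a b t := by
    rw [lensL_apply, Complex.mk_eq_add_mul_I]
    unfold lensE
    push_cast
    ring
  simp only [hsym]
  by_cases h1 : r ≤ 1
  · rw [Set.indicator_of_mem (hiff.2 h1), Set.indicator_of_mem (by simp [h1]), hLE, lensL_det,
      abs_of_pos (mul_pos ha hb)]
    simp only [Complex.real_smul]
    push_cast
    ring
  · rw [Set.indicator_of_notMem (fun h => h1 (hiff.1 h)), Set.indicator_of_notMem (by simpa using h1)]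
    simp

lemma lens_cauchy (a b : ℝ) (hb : 0 < b) (hab : b < a) (z : ℂ)
    (hz : 1 < z.re ^ 2 / a ^ 2 + z.im ^ 2 / b ^ 2) :
    ∃ s : ℂ, s ^ 2 = z ^ 2 - ((a : ℂ) ^ 2 - b ^ 2) ∧
      (Real.pi : ℂ)⁻¹ * (∫ ζ in {p : ℂ | p.re ^ 2 / a ^ 2 + p.im ^ 2 / b ^ 2 ≤ 1}, (z - ζ)⁻¹) =
        2 * a * b / ((a : ℂ) ^ 2 - b ^ 2) * (z - s) := by
  have ha : 0 < a := hb.trans hab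
  have hπ : (Real.pi : ℂ) ≠ 0 := by exact_mod_cast Real.pi_ne_zero
  obtain ⟨s, hs, hI⟩ := lens_radial a b hb hab z hz
  refine ⟨s, hs, ?_⟩
  rw [lens_integral_param a b ha hb]
  have hE := lensE_cont a b
  have hint : IntegrableOn (fun p : ℝ × ℝ => ((a * b * p.1 : ℝ) : ℂ) * (z - p.1 * lensE a b p.2)⁻¹)
      (Set.Ioc (0 : ℝ) 1 ×ˢ Set.Ioo (-Real.pi) Real.pi) := by
    have hK : IsCompact (Set.Icc (0 : ℝ) 1 ×ˢ Set.Icc (-Real.pi) Real.pi) :=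
      isCompact_Icc.prod isCompact_Icc
    refine IntegrableOn.mono_set (ContinuousOn.integrableOn_compact hK ?_)
      (Set.prod_mono Set.Ioc_subset_Icc_self Set.Ioo_subset_Icc_self)
    refine ContinuousOn.mul (by fun_prop) (ContinuousOn.inv₀ (by fun_prop) ?_)
    rintro ⟨r, t⟩ ⟨hr, _⟩
    simp only [Set.mem_Icc] at hr
    exact lensE_ne a b ha hb z r t (by nlinarith [hr.1, hr.2])
  rw [Measure.volume_eq_prod] at hint ⊢
  rw [setIntegral_prod _ hint]
  have : ∀ r : ℝ, ∫ t in Set.Ioo (-Real.pi) Real.pi,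
      ((a * b * r : ℝ) : ℂ) * (z - r * lensE a b t)⁻¹ = (a * b : ℂ) * (r * lensI a b z r) := by
    intro r
    rw [integral_const_mul, ← integral_Ioc_eq_integral_Ioo,
      ← intervalIntegral.integral_of_le (by linarith [Real.pi_pos])]
    unfold lensI
    push_cast
    ring
  simp only [this]
  rw [integral_const_mul, ← intervalIntegral.integral_of_le zero_le_one, hI]
  field_simp

lemma lens_continuousAt (Ω : Set ℂ) (hΩ : IsCompact Ω) (z₀ : ℂ) (hz : z₀ ∉ Ω) :
    ContinuousAt (fun z => ∫ ζ in Ω, (z - ζ)⁻¹) z₀ := by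
  obtain ⟨d, hd, hball⟩ := Metric.isOpen_iff.1 hΩ.isClosed.isOpen_compl z₀ hz
  have hfar : ∀ ζ ∈ Ω, d ≤ ‖z₀ - ζ‖ := by
    intro ζ hζ
    by_contra h
    push Not at h
    have : ζ ∈ Metric.ball z₀ d := by rwa [mem_ball_iff_norm, norm_sub_rev]
    exact hball this hζ
  have hmeas := hΩ.measurableSet
  refine continuousAt_of_dominated (bound := fun _ => (d / 2)⁻¹) ?_ ?_ ?_ ?_
  · exact Filter.Eventually.of_forall fun z =>
      (by fun_prop : Measurable fun ζ : ℂ => (z - ζ)⁻¹).aestronglyMeasurable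
  · filter_upwards [Metric.ball_mem_nhds z₀ (half_pos hd)] with z hzb
    refine (ae_restrict_iff' hmeas).2 (Filter.Eventually.of_forall fun ζ hζ => ?_)
    rw [norm_inv]
    apply inv_anti₀ (half_pos hd)
    have h1 := hfar ζ hζ
    rw [mem_ball_iff_norm, norm_sub_rev] at hzb
    have h2 := norm_add_le (z₀ - z) (z - ζ)
    rw [sub_add_sub_cancel] at h2
    linarith
  · exact integrableOn_const hΩ.measure_lt_top.ne
  · refine (ae_restrict_iff' hmeas).2 (Filter.Eventually.of_forall fun ζ hζ => ?_)
    refine ContinuousAt.inv₀ (by fun_prop) ?_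
    intro h
    have h1 := hfar ζ hζ
    rw [h, norm_zero] at h1
    linarith

lemma lens_isCompact (a b : ℝ) (ha : 0 < a) (hb : 0 < b) :
    IsCompact {p : ℂ | p.re ^ 2 / a ^ 2 + p.im ^ 2 / b ^ 2 ≤ 1} := by
  refine Metric.isCompact_of_isClosed_isBounded (isClosed_le (by fun_prop) continuous_const) ?_
  refine (Metric.isBounded_closedBall (x := (0 : ℂ)) (r := a + b)).subset ?_
  intro p hp
  rw [Set.mem_ofPred_eq] at hp
  rw [mem_closedBall_zero_iff]
  have h1 : 0 ≤ p.re ^ 2 / a ^ 2 := by positivity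
  have h2 : 0 ≤ p.im ^ 2 / b ^ 2 := by positivity
  have h3 : p.re ^ 2 ≤ a ^ 2 := (div_le_one (by positivity)).1 (by linarith)
  have h4 : p.im ^ 2 ≤ b ^ 2 := (div_le_one (by positivity)).1 (by linarith)
  have h5 := Complex.norm_le_abs_re_add_abs_im p
  have h6 := abs_le_of_sq_le_sq h3 ha.le
  have h7 := abs_le_of_sq_le_sq h4 hb.le
  linarith

lemma lens_conic_iff (k m c x y : ℝ) (w : ℂ) :
    ((starRingEnd ℂ (⟨x, y⟩ : ℂ) - (m : ℂ) * ⟨x, y⟩ - starRingEnd ℂ w) ^ 2 =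
      (k : ℂ) ^ 2 * ((⟨x, y⟩ : ℂ) ^ 2 - (c : ℂ))) ↔
    (((1 - m) ^ 2 - k ^ 2) * x ^ 2 + (-2 * (1 - m) * w.re) * x + (w.re ^ 2 + k ^ 2 * c) =
      ((1 + m) ^ 2 - k ^ 2) * y ^ 2 + (-2 * (1 + m) * w.im) * y + w.im ^ 2 ∧
    (m ^ 2 - 1 - k ^ 2) * x * y + ((1 - m) * w.im) * x + (w.re * (1 + m)) * y
      + (-w.re * w.im) = 0) := by
  rw [Complex.ext_iff]
  simp only [pow_two, Complex.mul_re, Complex.mul_im, Complex.sub_re, Complex.sub_im,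
    Complex.conj_re, Complex.conj_im, Complex.ofReal_re, Complex.ofReal_im]
  constructor
  · rintro ⟨h1, h2⟩
    constructor
    · linear_combination h1
    · linear_combination h2 / 2
  · rintro ⟨h1, h2⟩
    constructor
    · linear_combination h1
    · linear_combination 2 * h2

/-- A uniform elliptic lens with shear produces at most 4 bright images
(images outside the ellipse). -/
theorem elliptic_lens_at_most_four_bright_images
    (a b : ℝ) (hb : 0 < b) (hab : b < a) (γ : ℝ) (w : ℂ)
    (Ω : Set ℂ) (hΩ : Ω = {p : ℂ | p.re ^ 2 / a ^ 2 + p.im ^ 2 / b ^ 2 ≤ 1})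
    (S : Set ℂ)
    (hS : S = {z : ℂ | z ∉ Ω ∧
      starRingEnd ℂ z - (Real.pi : ℂ)⁻¹ * (∫ ζ in Ω, (z - ζ)⁻¹) - (γ : ℂ) * z
        = starRingEnd ℂ w})
    (hfin : S.Finite) :
    S.ncard ≤ 4 := by
  have ha : 0 < a := hb.trans hab
  have hcomp : IsCompact Ω := by rw [hΩ]; exact lens_isCompact a b ha hb
  have hout : ∀ z, z ∉ Ω → 1 < z.re ^ 2 / a ^ 2 + z.im ^ 2 / b ^ 2 := by
    intro z hz
    rw [hΩ, Set.mem_ofPred_eq] at hz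
    exact not_le.1 hz
  have hcpos : 0 < a ^ 2 - b ^ 2 := by nlinarith
  obtain ⟨c, hc⟩ : ∃ c : ℝ, c = a ^ 2 - b ^ 2 := ⟨_, rfl⟩
  rw [← hc] at hcpos
  have hcC : (a : ℂ) ^ 2 - b ^ 2 = (c : ℂ) := by rw [hc]; push_cast; ring
  obtain ⟨k, hk⟩ : ∃ k : ℝ, k = 2 * a * b / c := ⟨_, rfl⟩
  have hkpos : 0 < k := by rw [hk]; positivity
  have hkC : 2 * (a : ℂ) * b / c = (k : ℂ) := by rw [hk]; push_cast; ring
  let F : ℂ → ℂ := fun z => (Real.pi : ℂ)⁻¹ * (∫ ζ in Ω, (z - ζ)⁻¹)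
  let M : ℂ → ℂ := fun z => starRingEnd ℂ z - ((k + γ : ℝ) : ℂ) * z - starRingEnd ℂ w
  let N : ℂ → ℂ := fun z => k * z - F z
  have hN : ∀ z, z ∉ Ω → N z ^ 2 = (k : ℂ) ^ 2 * (z ^ 2 - (c : ℂ)) := by
    intro z hz
    obtain ⟨s, hs, hF⟩ := lens_cauchy a b hb hab z (hout z hz)
    rw [← hΩ, hcC, hkC] at hF
    rw [hcC] at hs
    have : N z = k * s := by
      simp only [N, F]
      rw [hF]; ring
    rw [this, ← hs]; ring
  have hmem : ∀ z, z ∈ S ↔ z ∉ Ω ∧ M z + N z = 0 := by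
    intro z
    rw [hS, Set.mem_ofPred_eq]
    refine and_congr_right fun _ => ?_
    simp only [M, N, F]
    push_cast
    constructor
    · intro h; linear_combination h
    · intro h; linear_combination h
  have hQ : ∀ z ∈ S, M z ^ 2 = (k : ℂ) ^ 2 * (z ^ 2 - (c : ℂ)) := by
    intro z hz
    obtain ⟨h1, h2⟩ := (hmem z).1 hz
    rw [← hN z h1]
    linear_combination (M z - N z) * h2
  have hiso : ∀ z ∈ S, ∀ᶠ z' in nhds z,
      M z' ^ 2 = (k : ℂ) ^ 2 * (z' ^ 2 - (c : ℂ)) → z' ∈ S := by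
    intro z hz
    obtain ⟨h1, h2⟩ := (hmem z).1 hz
    have hNc : ContinuousAt N z := by
      have := lens_continuousAt Ω hcomp z h1
      exact ContinuousAt.sub (by fun_prop) (continuousAt_const.mul this)
    have hMc : ContinuousAt M z := by
      have : Continuous M := by
        have := Complex.continuous_conj
        fun_prop
      exact this.continuousAt
    have hN0 : N z ≠ 0 := by
      intro h0
      have h3 := hN z h1
      rw [h0] at h3
      have hkne : (k : ℂ) ≠ 0 := by exact_mod_cast hkpos.ne'
      have h4 : z ^ 2 - (c : ℂ) = 0 := by
        have : (k : ℂ) ^ 2 * (z ^ 2 - (c : ℂ)) = 0 := by rw [← h3]; ring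
        exact (mul_eq_zero.1 this).resolve_left (pow_ne_zero 2 hkne)
      have h5 := congrArg Complex.re h4
      have h6 := congrArg Complex.im h4
      simp only [pow_two, Complex.sub_re, Complex.sub_im, Complex.mul_re, Complex.mul_im,
        Complex.ofReal_re, Complex.ofReal_im, Complex.zero_re, Complex.zero_im] at h5 h6
      have h7 : z.re * z.im = 0 := by linarith
      have h8 := hout z h1
      rcases mul_eq_zero.1 h7 with h | h
      · rw [h] at h5; nlinarith
      · rw [h] at h5 h8
        have h9 : z.re ^ 2 / a ^ 2 ≤ 1 := by
          rw [div_le_one (by positivity)]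
          nlinarith
        norm_num at h8
        linarith
    have hne : M z - N z ≠ 0 := by
      intro h
      apply hN0
      linear_combination (h2 - h) / 2
    filter_upwards [(hMc.sub hNc).eventually_ne hne, hcomp.isClosed.isOpen_compl.mem_nhds h1]
      with z' h3 h4 h5
    refine (hmem z').2 ⟨h4, ?_⟩
    rw [← hN z' h4] at h5
    have : (M z' - N z') * (M z' + N z') = 0 := by linear_combination h5
    exact (mul_eq_zero.1 this).resolve_left h3
  -- transfer to the real plane
  let e : ℝ × ℝ → ℂ := fun p => ⟨p.1, p.2⟩
  have he : Continuous e := Complex.equivRealProdCLM.symm.continuous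
  have heinj : Function.Injective e := by
    rintro ⟨x, y⟩ ⟨x', y'⟩ h
    simp only [e, Complex.mk.injEq] at h
    simp [h.1, h.2]
  have himg : S = e '' (e ⁻¹' S) := by
    rw [Set.image_preimage_eq]
    intro z
    exact ⟨(z.re, z.im), rfl⟩
  rw [himg, heinj.injOn.ncard_image]
  refine lens_conic_count ((k + γ) ^ 2 - 1 - k ^ 2) ((1 - (k + γ)) * w.im) (w.re * (1 + (k + γ)))
    (-w.re * w.im) ((1 - (k + γ)) ^ 2 - k ^ 2) (-2 * (1 - (k + γ)) * w.re) (w.re ^ 2 + k ^ 2 * c)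
    ((1 + (k + γ)) ^ 2 - k ^ 2) (-2 * (1 + (k + γ)) * w.im) (w.im ^ 2) ?_ (e ⁻¹' S)
    (hfin.preimage heinj.injOn)
    (fun p => M (e p) ^ 2 = (k : ℂ) ^ 2 * ((e p) ^ 2 - (c : ℂ))) ?_ ?_ ?_
  · generalize k + γ = m
    intro h1 h2 h3 _
    have hm1 : 1 - m ≠ 0 := by
      intro h
      have : m = 1 := by linarith
      subst this
      nlinarith
    have hm2 : 1 + m ≠ 0 := by
      intro h
      have : m = -1 := by linarith
      subst this
      nlinarith
    have hv : w.im = 0 := (mul_eq_zero.1 h2).resolve_left hm1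
    have hu : w.re = 0 := (mul_eq_zero.1 h3).resolve_right hm2
    rw [hu, hv]
    refine ⟨by ring, by ring, by ring, ?_, ?_, by positivity⟩
    · intro h; apply hm1; linear_combination (h + h1) / 2 - h1
    · intro h; apply hm2; linear_combination (h + h1) / 2 - h1
  · intro x y
    exact lens_conic_iff k (k + γ) c x y w
  · intro p hp
    exact hQ _ hp
  · intro p hp
    exact he.continuousAt.eventually (hiso _ hp)
end
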